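/- arXiv:math/9511203 — 5 statements merged into one kernel-verified Lean document; each statement's English description precedes it below -/
import Mathlib

section
/- The set 𝔖 is a discrete subset of ℂ: every point ζ₀ ∈ ℂ possesses an open neighborhood U such that 𝔖 ∩ U ⊆ {ζ₀}. -/
open MeasureTheory Set

/-- The ordinary differential operator `H_ζ` acting on functions on `ℝ`:
`(H_ζ f)(x) = f″(x) + (β₁(x)+β₂(x))·f′(x)
  + (ζ²·a(x)² − iζ·a′(x) + iζ·a(x)·(β₁(x)−β₂(x)) + β₃(x))·f(x)`. -/
noncomputable def Hop (a : ℝ → ℝ) (β₁ β₂ β₃ : ℝ → ℂ) (ζ : ℂ) (f : ℝ → ℂ) (x : ℝ) : ℂ :=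
  deriv (deriv f) x + (β₁ x + β₂ x) * deriv f x +
    (ζ ^ 2 * (Complex.ofReal (a x)) ^ 2 - Complex.I * ζ * Complex.ofReal (deriv a x)
      + Complex.I * ζ * Complex.ofReal (a x) * (β₁ x - β₂ x) + β₃ x) * f x

/-- The set `𝔖` of `ζ ∈ ℂ` for which the Dirichlet problem `H_ζ g = 0` on `I = [-r,r]`,
`g(-r) = g(r) = 0`, has a nontrivial solution. -/
def frakS (r : ℝ) (a : ℝ → ℝ) (β₁ β₂ β₃ : ℝ → ℂ) : Set ℂ :=
  {ζ : ℂ | ∃ g : ℝ → ℂ, ContDiff ℝ 2 g ∧ (∃ x ∈ Icc (-r) r, g x ≠ 0) ∧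
    (∀ x ∈ Icc (-r) r, Hop a β₁ β₂ β₃ ζ g x = 0) ∧ g (-r) = 0 ∧ g r = 0}

/-- Integration from the left end point, as an operator on `C([l, u], ℂ)`. -/
noncomputable def volterra {l u : ℝ} (h : l ≤ u) : C(Icc l u, ℂ) →L[ℂ] C(Icc l u, ℂ) :=
  LinearMap.mkContinuous
    { toFun := fun f => ⟨fun x => ∫ t in l..x, IccExtend h f t,
        (intervalIntegral.continuous_primitive
          (fun _ _ => f.continuous.Icc_extend'.intervalIntegrable _ _) l).comp
          continuous_subtype_val⟩
      map_add' := fun f g => by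
        ext x
        exact intervalIntegral.integral_add (f.continuous.Icc_extend'.intervalIntegrable _ _)
          (g.continuous.Icc_extend'.intervalIntegrable _ _)
      map_smul' := fun c f => by
        ext x
        exact intervalIntegral.integral_smul c (IccExtend h f) }
    (u - l) fun f => by
      have hlu : 0 ≤ u - l := sub_nonneg.2 h
      refine (ContinuousMap.norm_le _ (by positivity)).2 fun x => ?_
      refine (intervalIntegral.norm_integral_le_of_norm_le_const
        (C := ‖f‖) fun t _ => f.norm_coe_le_norm _).trans ?_
      rw [abs_of_nonneg (sub_nonneg.2 x.2.1), mul_comm]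
      gcongr
      exact x.2.2

theorem volterra_apply {l u : ℝ} (h : l ≤ u) (f : C(Icc l u, ℂ)) (x : Icc l u) :
    volterra h f x = ∫ t in l..x, IccExtend h f t := rfl

theorem hasDerivAt_primitive_IccExtend {l u : ℝ} (h : l ≤ u) (f : C(Icc l u, ℂ)) (x : ℝ) :
    HasDerivAt (fun y => ∫ t in l..y, IccExtend h f t) (IccExtend h f x) x :=
  f.continuous.Icc_extend'.integral_hasStrictDerivAt l x |>.hasDerivAt

theorem volterra_eq_sub {l u : ℝ} (h : l ≤ u) {f : C(Icc l u, ℂ)} {F : ℝ → ℂ}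
    (hF : ∀ x : Icc l u, HasDerivAt F (f x) x) (x : Icc l u) :
    volterra h f x = F x - F l := by
  refine intervalIntegral.integral_eq_sub_of_hasDerivAt (fun t ht => ?_)
    (f.continuous.Icc_extend'.intervalIntegrable _ _)
  rw [uIcc_of_le x.2.1] at ht
  have ht' : t ∈ Icc l u := ⟨ht.1, ht.2.trans x.2.2⟩
  rw [IccExtend_of_mem h f ht']
  exact hF ⟨t, ht'⟩

theorem norm_volterra_le {l u : ℝ} (h : l ≤ u) {f : C(Icc l u, ℂ)} {C : ℝ} {n : ℕ}
    (hf : ∀ x : Icc l u, ‖f x‖ ≤ C * (x - l) ^ n) (x : Icc l u) :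
    ‖volterra h f x‖ ≤ C * ((x - l) ^ (n + 1) / (n + 1)) := by
  have key : ∫ t in l..x, C * (t - l) ^ n = C * ((x - l) ^ (n + 1) / (n + 1)) := by
    rw [intervalIntegral.integral_const_mul,
      intervalIntegral.integral_comp_sub_right (fun t => t ^ n) l, integral_pow]
    simp
  rw [← key]
  refine intervalIntegral.norm_integral_le_of_norm_le x.2.1 (.of_forall fun t ht => ?_)
    (Continuous.intervalIntegrable (by fun_prop) _ _)
  have ht' : t ∈ Icc l u := ⟨ht.1.le, ht.2.trans x.2.2⟩
  rw [IccExtend_of_mem h f ht']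
  exact hf ⟨t, ht'⟩

/-- `f ↦ f + p ∫ f + q ∬ f`. -/
noncomputable def volterraOp {l u : ℝ} (h : l ≤ u) (p q : C(Icc l u, ℂ)) :
    C(Icc l u, ℂ) →L[ℂ] C(Icc l u, ℂ) :=
  1 + (ContinuousLinearMap.mul ℂ _ p * volterra h
    + ContinuousLinearMap.mul ℂ _ q * (volterra h * volterra h))

theorem norm_volterra_perturbation_le {l u : ℝ} (h : l ≤ u) (p q f : C(Icc l u, ℂ)) {C : ℝ}
    {n : ℕ} (hC : 0 ≤ C) (hf : ∀ x : Icc l u, ‖f x‖ ≤ C * (x - l) ^ n) (x : Icc l u) :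
    ‖(p * volterra h f + q * volterra h (volterra h f)) x‖ ≤
      (‖p‖ + ‖q‖ * (u - l)) * C / (n + 1) * (x - l) ^ (n + 1) := by
  have h1 := norm_volterra_le h hf
  have h2 := norm_volterra_le h (f := volterra h f) (C := C / (n + 1)) (n := n + 1)
    (fun y => (h1 y).trans_eq (by ring)) x
  have hxl : 0 ≤ (x : ℝ) - l := sub_nonneg.2 x.2.1
  have hxu : (x : ℝ) - l ≤ u - l := sub_le_sub_right x.2.2 _
  have h3 : ‖volterra h (volterra h f) x‖ ≤ (u - l) * (C / (n + 1) * (x - l) ^ (n + 1)) := by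
    refine h2.trans ?_
    calc C / (n + 1) * ((x - l : ℝ) ^ (n + 1 + 1) / ((n + 1 : ℕ) + 1))
        ≤ C / (n + 1) * ((x - l : ℝ) ^ (n + 1 + 1) / 1) := by
          gcongr
          have : (0 : ℝ) ≤ (n + 1 : ℕ) := by positivity
          linarith
      _ = (x - l) * (C / (n + 1) * (x - l) ^ (n + 1)) := by ring
      _ ≤ _ := by gcongr
  calc ‖(p * volterra h f + q * volterra h (volterra h f)) x‖
      ≤ ‖p x‖ * ‖volterra h f x‖ + ‖q x‖ * ‖volterra h (volterra h f) x‖ := by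
        refine (norm_add_le _ _).trans_eq ?_
        simp
    _ ≤ ‖p‖ * (C * ((x - l) ^ (n + 1) / (n + 1)))
        + ‖q‖ * ((u - l) * (C / (n + 1) * (x - l) ^ (n + 1))) := by
        gcongr
        · exact p.norm_coe_le_norm x
        · exact h1 x
        · exact q.norm_coe_le_norm x
    _ = _ := by ring

theorem isUnit_one_add_of_norm_pow_lt_one {A : Type*} [NormedRing A] [CompleteSpace A] {k : A}
    {n : ℕ} (hk : ‖k ^ n‖ < 1) : IsUnit (1 + k) := by
  have h1 : IsUnit (1 - (-k) ^ n) := by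
    refine isUnit_one_sub_of_norm_lt_one ?_
    rcases n.even_or_odd with h | h <;> simpa [h.neg_pow] using hk
  rw [← mul_neg_geom_sum] at h1
  have hc : Commute (1 - -k) (∑ i ∈ Finset.range n, (-k) ^ i) :=
    Commute.sum_right _ _ _ fun i _ =>
      ((Commute.one_left _).sub_left (Commute.refl (-k))).pow_right i
  simpa using (hc.isUnit_mul_iff.1 h1).1

theorem isUnit_volterraOp {l u : ℝ} (h : l ≤ u) (p q : C(Icc l u, ℂ)) :
    IsUnit (volterraOp h p q) := by
  set K : C(Icc l u, ℂ) →L[ℂ] C(Icc l u, ℂ) := ContinuousLinearMap.mul ℂ _ p * volterra h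
    + ContinuousLinearMap.mul ℂ _ q * (volterra h * volterra h)
  set M := ‖p‖ + ‖q‖ * (u - l)
  have hlu : 0 ≤ u - l := sub_nonneg.2 h
  have hM : 0 ≤ M := by positivity
  have hpow : ∀ (n : ℕ) (f : C(Icc l u, ℂ)) (x : Icc l u),
      ‖(K ^ n) f x‖ ≤ M ^ n / n.factorial * ‖f‖ * (x - l) ^ n := by
    intro n f
    induction n with
    | zero => intro x; simpa using f.norm_coe_le_norm x
    | succ n ih =>
      intro x
      rw [pow_succ' K]
      refine (norm_volterra_perturbation_le h p q ((K ^ n) f) (by positivity) ih x).trans_eq ?_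
      rw [Nat.factorial_succ]
      push_cast
      change M * _ / _ * _ = _
      field_simp
      ring
  have hnorm : ∀ n : ℕ, ‖K ^ n‖ ≤ (M * (u - l)) ^ n / n.factorial := fun n => by
    refine ContinuousLinearMap.opNorm_le_bound _ (by positivity) fun f => ?_
    refine (ContinuousMap.norm_le _ (by positivity)).2 fun x => (hpow n f x).trans ?_
    calc M ^ n / n.factorial * ‖f‖ * (x - l : ℝ) ^ n
        ≤ M ^ n / n.factorial * ‖f‖ * (u - l : ℝ) ^ n := by
          gcongr
          · exact sub_nonneg.2 x.2.1
          · exact x.2.2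
      _ = _ := by rw [mul_pow]; ring
  obtain ⟨n, hn⟩ := ((FloorSemiring.tendsto_pow_div_factorial_atTop
    (M * (u - l))).eventually_lt_const one_pos).exists
  exact isUnit_one_add_of_norm_pow_lt_one (k := K) ((hnorm n).trans_lt hn)

/-- The value at `u` of the solution of `g'' + p g' + q g = 0` with `g l = 0`, `g' l = 1`. -/
noncomputable def shoot {l u : ℝ} (h : l ≤ u) (p q : C(Icc l u, ℂ)) : ℂ :=
  (u - l) + volterra h (volterra h (Ring.inverse (volterraOp h p q)
    (-(p + q * ⟨fun x => ((x - l : ℝ) : ℂ), by fun_prop⟩)))) ⟨u, h, le_rfl⟩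

theorem differentiable_inverse_one_add_mul_apply {A : Type*} [NormedCommRing A]
    [NormedAlgebra ℂ A] [CompleteSpace A] (K V : A →L[ℂ] A) {q v : ℂ → A}
    (hq : Differentiable ℂ q) (hv : Differentiable ℂ v)
    (hunit : ∀ ζ, IsUnit (1 + (K + ContinuousLinearMap.mul ℂ A (q ζ) * V))) :
    Differentiable ℂ fun ζ =>
      Ring.inverse (1 + (K + ContinuousLinearMap.mul ℂ A (q ζ) * V)) (v ζ) := by
  have hmul : Differentiable ℂ fun ζ => ContinuousLinearMap.mul ℂ A (q ζ) :=
    (ContinuousLinearMap.mul ℂ A).differentiable.comp hq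
  have hop : Differentiable ℂ fun ζ => 1 + (K + ContinuousLinearMap.mul ℂ A (q ζ) * V) :=
    ((hmul.mul_const V).const_add K).const_add 1
  have hinv : Differentiable ℂ fun ζ =>
      Ring.inverse (1 + (K + ContinuousLinearMap.mul ℂ A (q ζ) * V)) :=
    hop.inverse hunit
  exact hinv.clm_apply hv

theorem differentiable_shoot {l u : ℝ} (h : l ≤ u) (p : C(Icc l u, ℂ)) {q : ℂ → C(Icc l u, ℂ)}
    (hq : Differentiable ℂ q) : Differentiable ℂ fun ζ => shoot h p (q ζ) := by
  have hrhs : Differentiable ℂ fun ζ =>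
      -(p + q ζ * (⟨fun x => ((x - l : ℝ) : ℂ), by fun_prop⟩ : C(Icc l u, ℂ))) := by
    fun_prop
  have hsol := differentiable_inverse_one_add_mul_apply
    (ContinuousLinearMap.mul ℂ C(Icc l u, ℂ) p * volterra h) (volterra h * volterra h) hq hrhs
    fun ζ => isUnit_volterraOp h p (q ζ)
  let L : C(Icc l u, ℂ) →L[ℂ] ℂ :=
    ContinuousMap.evalCLM ℂ (⟨u, h, le_rfl⟩ : Icc l u) ∘L volterra h ∘L volterra h
  exact (L.differentiable.comp hsol).const_add _

theorem shoot_eq_zero_of_solution {l u : ℝ} (h : l ≤ u) {p q : C(Icc l u, ℂ)} {g : ℝ → ℂ}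
    (hg : ContDiff ℝ 2 g) (hne : ∃ x ∈ Icc l u, g x ≠ 0)
    (hode : ∀ x : Icc l u, deriv (deriv g) x + p x * deriv g x + q x * g x = 0)
    (hl : g l = 0) (hu : g u = 0) : shoot h p q = 0 := by
  obtain ⟨hgd, -, hg1⟩ := (contDiff_succ_iff_deriv (n := 1)).1 hg
  obtain ⟨hgd', hgc⟩ := contDiff_one_iff_deriv.1 hg1
  set s : C(Icc l u, ℂ) := ⟨fun x => ((x - l : ℝ) : ℂ), by fun_prop⟩ with hs
  let f : C(Icc l u, ℂ) := ⟨fun x => deriv (deriv g) x, by fun_prop⟩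
  have h1 (x : Icc l u) : volterra h f x = deriv g x - deriv g l :=
    volterra_eq_sub h (fun y => (hgd' y).hasDerivAt) x
  have h2 (x : Icc l u) : volterra h (volterra h f) x = g x - deriv g l * s x := by
    rw [volterra_eq_sub h (F := fun y => g y - deriv g l * ((y - l : ℝ) : ℂ))]
    · simp [hl, hs]
    · intro y
      rw [h1]
      have := (((hasDerivAt_id (y : ℝ)).sub_const l).ofReal_comp).const_mul (deriv g l)
      simpa using (hgd y).hasDerivAt.fun_sub this
  have hfix : volterraOp h p q f = deriv g l • -(p + q * s) := by
    ext x
    have := hode x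
    simp only [volterraOp, add_apply, one_apply_eq_self,
      ContinuousLinearMap.mul_apply', mul_apply_eq_comp, ContinuousMap.add_apply,
      ContinuousMap.mul_apply, ContinuousMap.smul_apply, ContinuousMap.neg_apply, h1, h2,
      smul_eq_mul]
    simp only [f, ContinuousMap.coe_mk]
    linear_combination this
  have hf : f = deriv g l • Ring.inverse (volterraOp h p q) (-(p + q * s)) := by
    rw [← map_smul, ← hfix, ← mul_apply_eq_comp,
      Ring.inverse_mul_cancel _ (isUnit_volterraOp h p q), one_apply_eq_self]
  have hc : deriv g l ≠ 0 := by
    intro hc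
    obtain ⟨x, hx, hgx⟩ := hne
    have := h2 ⟨x, hx⟩
    rw [hf, hc] at this
    simp at this
    exact hgx this.symm
  have h3 := h2 ⟨u, h, le_rfl⟩
  have h4 : deriv g l * shoot h p q = 0 := by
    rw [hf] at h3
    simp only [map_smul, ContinuousMap.smul_apply, smul_eq_mul, hu] at h3
    simp only [shoot, ← hs]
    rw [mul_add, h3, hs]
    simp
  exact (mul_eq_zero.1 h4).resolve_left hc

theorem exists_solution_of_shoot_eq_zero {l u : ℝ} (h : l < u) {p q : C(Icc l u, ℂ)}
    (hshoot : shoot h.le p q = 0) : ∃ g : ℝ → ℂ, ContDiff ℝ 2 g ∧ (∃ x ∈ Icc l u, g x ≠ 0) ∧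
      (∀ x : Icc l u, deriv (deriv g) x + p x * deriv g x + q x * g x = 0) ∧
      g l = 0 ∧ g u = 0 := by
  set s : C(Icc l u, ℂ) := ⟨fun x => ((x - l : ℝ) : ℂ), by fun_prop⟩ with hs
  set f : C(Icc l u, ℂ) := Ring.inverse (volterraOp h.le p q) (-(p + q * s)) with hf
  have hfix : volterraOp h.le p q f = -(p + q * s) := by
    rw [hf, ← mul_apply_eq_comp,
      Ring.mul_inverse_cancel _ (isUnit_volterraOp h.le p q), one_apply_eq_self]
  let g' : ℝ → ℂ := fun x => 1 + ∫ t in l..x, IccExtend h.le f t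
  have hg' (x : ℝ) : HasDerivAt g' (IccExtend h.le f x) x :=
    (hasDerivAt_primitive_IccExtend h.le f x).const_add 1
  have hg'c : Continuous g' := continuous_iff_continuousAt.2 fun x => (hg' x).continuousAt
  let g : ℝ → ℂ := fun x => ∫ t in l..x, g' t
  have hg (x : ℝ) : HasDerivAt g (g' x) x := (hg'c.integral_hasStrictDerivAt l x).hasDerivAt
  have hdg : deriv g = g' := funext fun x => (hg x).deriv
  have hdg' : deriv g' = IccExtend h.le f := funext fun x => (hg' x).deriv
  have hgl : g l = 0 := intervalIntegral.integral_same
  have hg'x (x : Icc l u) : g' x = 1 + volterra h.le f x := rfl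
  have hgx (x : Icc l u) : g x = s x + volterra h.le (volterra h.le f) x := by
    rw [volterra_eq_sub h.le (F := fun y => g y - ((y - l : ℝ) : ℂ))]
    · simp [hgl, hs]
    · intro y
      have := ((hasDerivAt_id (y : ℝ)).sub_const l).ofReal_comp
      simpa [hg'x] using (hg y).fun_sub this
  refine ⟨g, ?_, ?_, fun x => ?_, hgl, ?_⟩
  · refine (contDiff_succ_iff_deriv (n := 1)).2
      ⟨fun x => (hg x).differentiableAt, by simp, ?_⟩
    rw [hdg]
    refine contDiff_one_iff_deriv.2 ⟨fun x => (hg' x).differentiableAt, ?_⟩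
    rw [hdg']
    exact f.continuous.Icc_extend'
  · by_contra! hzero
    have hlmem : l ∈ Icc l u := left_mem_Icc.2 h.le
    have h0 : HasDerivWithinAt g 0 (Icc l u) l :=
      (hasDerivWithinAt_const l (Icc l u) (0 : ℂ)).congr hzero (hzero l hlmem)
    have h1 := (uniqueDiffOn_Icc h l hlmem).eq_deriv _ h0 (hg l).hasDerivWithinAt
    simp [g'] at h1
  · have := congrArg (fun k : C(Icc l u, ℂ) => k x) hfix
    simp only [volterraOp, add_apply, one_apply_eq_self,
      ContinuousLinearMap.mul_apply', mul_apply_eq_comp, ContinuousMap.add_apply,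
      ContinuousMap.mul_apply, ContinuousMap.neg_apply] at this
    rw [hdg, hdg', hg'x, hgx, IccExtend_val]
    linear_combination this
  · rw [← hshoot, shoot, hgx ⟨u, h.le, le_rfl⟩]
    simp [hs, f]

theorem eq_zero_of_norm_sq_le {l u : ℝ} {p q g : ℝ → ℂ} (hg : ContDiff ℝ 2 g)
    (hode : ∀ x ∈ Icc l u, deriv (deriv g) x + p x * deriv g x + q x * g x = 0)
    (hpq : ∀ x ∈ Icc l u, ‖p x‖ ^ 2 ≤ -4 * (q x).re)
    (hl : g l = 0) (hu : g u = 0) : ∀ x ∈ Icc l u, g x = 0 := by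
  obtain ⟨hgd, -, hg1⟩ := (contDiff_succ_iff_deriv (n := 1)).1 hg
  obtain ⟨hgd', -⟩ := contDiff_one_iff_deriv.1 hg1
  have hd1 (x : ℝ) := (hgd x).hasDerivAt.norm_sq
  have hd2 (x : ℝ) := (((hgd x).hasDerivAt.inner ℝ (hgd' x).hasDerivAt).const_mul 2)
  have hconv : ConvexOn ℝ (Icc l u) fun x => ‖g x‖ ^ 2 := by
    refine convexOn_of_hasDerivWithinAt2_nonneg (convex_Icc l u)
      (fun x _ => (hd1 x).continuousAt.continuousWithinAt)
      (fun x _ => (hd1 x).hasDerivWithinAt) (fun x _ => (hd2 x).hasDerivWithinAt) fun x hx => ?_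
    have hx' := interior_subset hx
    have hg2 : deriv (deriv g) x = -(p x * deriv g x) - q x * g x := by
      linear_combination hode x hx'
    have h1 : inner ℝ (g x) (q x * g x) = (q x).re * ‖g x‖ ^ 2 := by
      rw [Complex.sq_norm, Complex.normSq_apply, Complex.inner]
      simp
      ring
    have h2 : inner ℝ (g x) (p x * deriv g x) ≤ ‖g x‖ * (‖p x‖ * ‖deriv g x‖) :=
      (real_inner_le_norm _ _).trans_eq (by rw [norm_mul])
    rw [hg2, inner_sub_right, inner_neg_right, real_inner_self_eq_norm_sq, h1]
    nlinarith [sq_nonneg (‖p x‖ * ‖g x‖ - 2 * ‖deriv g x‖),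
      mul_le_mul_of_nonneg_right (hpq x hx') (sq_nonneg ‖g x‖)]
  intro x hx
  have hlu : l ≤ u := hx.1.trans hx.2
  have := hconv.le_on_segment (left_mem_Icc.2 hlu) (right_mem_Icc.2 hlu)
    (by rwa [segment_eq_Icc hlu])
  simp only [hl, hu] at this
  simpa using this

theorem exists_notMem_frakS (r : ℝ) (a : ℝ → ℝ) (ha : ContDiff ℝ (⊤ : ℕ∞) a)
    (ha0 : ∀ x ∈ Icc (-r) r, a x ≠ 0) (β₁ β₂ β₃ : ℝ → ℂ) (hβ₁ : Continuous β₁)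
    (hβ₂ : Continuous β₂) (hβ₃ : Continuous β₃) : ∃ ζ, ζ ∉ frakS r a β₁ β₂ β₃ := by
  have hac : Continuous a := ha.continuous
  have hda : Continuous (deriv a) := ha.continuous_deriv (by simp)
  obtain ⟨α, hα, hαa⟩ : ∃ α > 0, ∀ x ∈ Icc (-r) r, α ≤ a x ^ 2 :=
    isCompact_Icc.exists_forall_le' (f := fun x => a x ^ 2) (by fun_prop)
      fun x hx => by have := ha0 x hx; positivity
  obtain ⟨B, hB⟩ := isCompact_Icc.exists_bound_of_continuousOn (s := Icc (-r) r)
    (f := fun x => β₁ x + β₂ x) (by fun_prop)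
  obtain ⟨D₁, hD₁⟩ := isCompact_Icc.exists_bound_of_continuousOn (s := Icc (-r) r)
    (f := fun x => Complex.ofReal (deriv a x) - a x * (β₁ x - β₂ x)) (by fun_prop)
  obtain ⟨D₂, hD₂⟩ := isCompact_Icc.exists_bound_of_continuousOn (s := Icc (-r) r)
    (f := β₃) (by fun_prop)
  set η := max 1 ((B ^ 2 + |D₁| + |D₂|) / α)
  have hη1 : 1 ≤ η := le_max_left _ _
  have hη2 : B ^ 2 + |D₁| + |D₂| ≤ η * α := (div_le_iff₀ hα).1 (le_max_right _ _)
  refine ⟨Complex.I * η, ?_⟩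
  rintro ⟨g, hg, ⟨x, hx, hgx⟩, hode, hl, hu⟩
  refine hgx (eq_zero_of_norm_sq_le hg hode (fun x hx => ?_) hl hu x hx)
  have hB' : ‖β₁ x + β₂ x‖ ^ 2 ≤ B ^ 2 := pow_le_pow_left₀ (norm_nonneg _) (hB x hx) 2
  have h1 := ((Complex.re_le_norm _).trans (hD₁ x hx)).trans (le_abs_self D₁)
  have h2 := ((Complex.re_le_norm _).trans (hD₂ x hx)).trans (le_abs_self D₂)
  have hre : ((Complex.I * η) ^ 2 * (a x : ℂ) ^ 2
      - Complex.I * (Complex.I * η) * Complex.ofReal (deriv a x)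
      + Complex.I * (Complex.I * η) * (a x : ℂ) * (β₁ x - β₂ x) + β₃ x).re =
      -(η ^ 2 * a x ^ 2) + η * (Complex.ofReal (deriv a x) - a x * (β₁ x - β₂ x)).re + (β₃ x).re := by
    have : (Complex.I * η) ^ 2 * (a x : ℂ) ^ 2
      - Complex.I * (Complex.I * η) * Complex.ofReal (deriv a x)
      + Complex.I * (Complex.I * η) * (a x : ℂ) * (β₁ x - β₂ x) + β₃ x =
      ((-(η ^ 2 * a x ^ 2) : ℝ) : ℂ) + (η : ℝ) * (Complex.ofReal (deriv a x) - a x * (β₁ x - β₂ x))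
        + β₃ x := by
      push_cast
      linear_combination (η ^ 2 * (a x : ℂ) ^ 2 - η * Complex.ofReal (deriv a x)
        + η * (a x : ℂ) * (β₁ x - β₂ x)) * Complex.I_sq
    rw [this, Complex.add_re, Complex.add_re, Complex.re_ofReal_mul, Complex.ofReal_re]
  rw [hre]
  have h3 : η * (Complex.ofReal (deriv a x) - a x * (β₁ x - β₂ x)).re ≤ η * |D₁| := by gcongr
  have h4 : |D₂| ≤ η * |D₂| := le_mul_of_one_le_left (abs_nonneg _) hη1
  have h5 : B ^ 2 ≤ η * B ^ 2 := le_mul_of_one_le_left (sq_nonneg _) hη1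
  have h6 : η * (B ^ 2 + |D₁| + |D₂|) ≤ η * (η * α) := by gcongr
  have h7 : η ^ 2 * α ≤ η ^ 2 * a x ^ 2 := by gcongr; exact hαa x hx
  nlinarith [sq_nonneg B]

/-- `𝔖` is a discrete subset of `ℂ`. -/
theorem frakS_discrete (r : ℝ) (hr : 0 < r) (a : ℝ → ℝ) (ha : ContDiff ℝ (⊤ : ℕ∞) a)
    (ha0 : ∀ x ∈ Icc (-r) r, a x ≠ 0)
    (β₁ β₂ β₃ : ℝ → ℂ) (hβ₁ : ContDiff ℝ (⊤ : ℕ∞) β₁) (hβ₂ : ContDiff ℝ (⊤ : ℕ∞) β₂)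
    (hβ₃ : ContDiff ℝ (⊤ : ℕ∞) β₃) :
    ∀ ζ₀ : ℂ, ∃ U : Set ℂ, IsOpen U ∧ ζ₀ ∈ U ∧
      frakS r a β₁ β₂ β₃ ∩ U ⊆ {ζ₀} := by
  intro ζ₀
  have hac : Continuous a := ha.continuous
  have hda : Continuous (deriv a) := ha.continuous_deriv (by simp)
  have hb₁ : Continuous β₁ := hβ₁.continuous
  have hb₂ : Continuous β₂ := hβ₂.continuous
  have hb₃ : Continuous β₃ := hβ₃.continuous
  have hlu : -r < r := by linarith
  let p : C(Icc (-r) r, ℂ) := ⟨fun x => β₁ x + β₂ x, by fun_prop⟩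
  let A : C(Icc (-r) r, ℂ) := ⟨fun x => (a x : ℂ) ^ 2, by fun_prop⟩
  let B : C(Icc (-r) r, ℂ) :=
    ⟨fun x => Complex.I * (a x * (β₁ x - β₂ x) - Complex.ofReal (deriv a x)), by fun_prop⟩
  let C : C(Icc (-r) r, ℂ) := ⟨fun x => β₃ x, by fun_prop⟩
  let q : ℂ → C(Icc (-r) r, ℂ) := fun ζ => ζ ^ 2 • A + ζ • B + C
  have hq : Differentiable ℂ q := by fun_prop
  have hHop (ζ : ℂ) (g : ℝ → ℂ) (x : Icc (-r) r) :
      Hop a β₁ β₂ β₃ ζ g x = deriv (deriv g) x + p x * deriv g x + q ζ x * g x := by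
    simp only [Hop, p, q, A, B, C, ContinuousMap.add_apply, ContinuousMap.smul_apply,
      ContinuousMap.coe_mk, smul_eq_mul]
    ring
  have hiff (ζ : ℂ) : ζ ∈ frakS r a β₁ β₂ β₃ ↔ shoot hlu.le p (q ζ) = 0 := by
    constructor
    · rintro ⟨g, hg, hne, hode, hl, hu⟩
      exact shoot_eq_zero_of_solution hlu.le hg hne
        (fun x => (hHop ζ g x).symm.trans (hode x x.2)) hl hu
    · intro h
      obtain ⟨g, hg, hne, hode, hl, hu⟩ := exists_solution_of_shoot_eq_zero hlu h
      exact ⟨g, hg, hne, fun x hx => (hHop ζ g ⟨x, hx⟩).trans (hode ⟨x, hx⟩), hl, hu⟩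
  have hF : AnalyticOnNhd ℂ (fun ζ => shoot hlu.le p (q ζ)) univ :=
    (differentiable_shoot hlu.le p hq).differentiableOn.analyticOnNhd isOpen_univ
  rcases (hF ζ₀ (mem_univ _)).eventually_eq_zero_or_eventually_ne_zero with h | h
  · obtain ⟨ζ, hζ⟩ := exists_notMem_frakS r a ha ha0 β₁ β₂ β₃ hb₁ hb₂ hb₃
    exact absurd ((hiff ζ).2
      (hF.eqOn_zero_of_preconnected_of_eventuallyEq_zero isPreconnected_univ (mem_univ ζ₀) h
        (mem_univ ζ))) hζ
  · obtain ⟨U, hU, hUo, hζU⟩ := eventually_nhds_iff.1 (eventually_nhdsWithin_iff.1 h)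
    refine ⟨U, hUo, hζU, fun ζ ⟨hζ, hζ'⟩ => ?_⟩
    by_contra hne
    exact hU ζ hζ' hne ((hiff ζ).1 hζ)
end

section
/- For every compact subset K of [0, ∞), the set {ζ ∈ 𝔖 : Re ζ ∈ K} is finite. -/
open MeasureTheory Set

/-- The `L²` norm of `f` over the set `J ⊆ ℝ` (w.r.t. Lebesgue measure). -/
noncomputable def L2 (f : ℝ → ℂ) (J : Set ℝ) : ℝ := (∫ x in J, ‖f x‖ ^ 2) ^ ((1 : ℝ)/2)

/-- Integration from the left end point, as a bounded operator on continuous functions. -/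
noncomputable def primitiveCLM {c d : ℝ} (h : c ≤ d) : C(Icc c d, ℂ) →L[ℂ] C(Icc c d, ℂ) :=
  LinearMap.mkContinuous
    { toFun := fun φ =>
        { toFun := fun x => ∫ t in c..x, IccExtend h φ t
          continuous_toFun := (intervalIntegral.continuous_primitive
            (fun _ _ => (φ.continuous.Icc_extend' (h := h)).intervalIntegrable _ _) c).comp
              continuous_subtype_val }
      map_add' := fun φ ψ => by
        ext x
        exact intervalIntegral.integral_add
          ((φ.continuous.Icc_extend' (h := h)).intervalIntegrable _ _)
          ((ψ.continuous.Icc_extend' (h := h)).intervalIntegrable _ _)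
      map_smul' := fun k φ => by
        ext x
        exact intervalIntegral.integral_smul k (IccExtend h φ) }
    (d - c) (fun φ => by
      have hcd : 0 ≤ d - c := sub_nonneg.2 h
      refine (ContinuousMap.norm_le _ (by positivity)).2 fun x => ?_
      refine (intervalIntegral.norm_integral_le_of_norm_le_const
        (C := ‖φ‖) fun t _ => φ.norm_coe_le_norm _).trans ?_
      rw [abs_of_nonneg (sub_nonneg.2 x.2.1), mul_comm]
      gcongr
      exact x.2.2)

theorem primitiveCLM_apply {c d : ℝ} (h : c ≤ d) (φ : C(Icc c d, ℂ)) (x : Icc c d) :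
    primitiveCLM h φ x = ∫ t in c..x, IccExtend h φ t := rfl

theorem norm_primitiveCLM_apply_le {c d : ℝ} (h : c ≤ d) {φ : C(Icc c d, ℂ)} {n : ℕ} {k : ℝ}
    (hφ : ∀ x : Icc c d, ‖φ x‖ ≤ k * (x - c) ^ n) (x : Icc c d) :
    ‖primitiveCLM h φ x‖ ≤ k / (n + 1) * (x - c) ^ (n + 1) := by
  have hint : ∫ t in c..(x : ℝ), k * (t - c) ^ n = k / (n + 1) * (x - c) ^ (n + 1) := by
    rw [intervalIntegral.integral_const_mul,
      intervalIntegral.integral_comp_sub_right (fun t => t ^ n) c, integral_pow]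
    simp
    ring
  rw [primitiveCLM_apply, ← hint]
  refine intervalIntegral.norm_integral_le_of_norm_le x.2.1 ?_
    (Continuous.intervalIntegrable (by fun_prop) _ _)
  refine Filter.Eventually.of_forall fun t ht => ?_
  have ht' : t ∈ Icc c d := ⟨ht.1.le, ht.2.trans x.2.2⟩
  rw [IccExtend_of_mem h _ ht']
  exact hφ ⟨t, ht'⟩

theorem isUnit_one_add_of_norm_pow_le {E : Type*} [NormedAddCommGroup E] [NormedSpace ℂ E]
    [CompleteSpace E] {V : E →L[ℂ] E} {C : ℝ}
    (hV : ∀ n : ℕ, ‖V ^ n‖ ≤ C ^ n / n.factorial) : IsUnit (1 + V) := by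
  have hs : Summable (fun n : ℕ => (-V) ^ n) := by
    refine Summable.of_norm_bounded (Real.summable_pow_div_factorial C) fun n => ?_
    rcases Nat.even_or_odd n with hn | hn
    · rw [hn.neg_pow]
      exact hV n
    · rw [hn.neg_pow, norm_neg]
      exact hV n
  have h1 := hs.one_sub_mul_tsum_pow
  have h2 := hs.tsum_pow_mul_one_sub
  rw [sub_neg_eq_add] at h1 h2
  exact isUnit_iff_exists.2 ⟨_, h1, h2⟩

/-- A Volterra type operator `V`, one which improves pointwise bounds by powers of the distance to
the left end point as integration does, is quasinilpotent; in particular `1 + V` is invertible. -/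
theorem isUnit_one_add_of_volterra {c d : ℝ} (h : c ≤ d)
    (V : C(Icc c d, ℂ) →L[ℂ] C(Icc c d, ℂ)) {B : ℝ} (hB : 0 ≤ B)
    (hV : ∀ (n : ℕ) (k : ℝ) (φ : C(Icc c d, ℂ)), 0 ≤ k → (∀ x, ‖φ x‖ ≤ k * (x - c) ^ n) →
      ∀ x, ‖V φ x‖ ≤ B * k / (n + 1) * (x - c) ^ (n + 1)) :
    IsUnit (1 + V) := by
  have hpow : ∀ (n : ℕ) (φ : C(Icc c d, ℂ)) (x : Icc c d),
      ‖(V ^ n) φ x‖ ≤ B ^ n / n.factorial * ‖φ‖ * (x - c) ^ n := by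
    intro n φ
    induction n with
    | zero => intro x; simpa using φ.norm_coe_le_norm x
    | succ n ih =>
      intro x
      rw [pow_succ']
      refine (hV n _ _ (by positivity) ih x).trans_eq ?_
      rw [Nat.factorial_succ, pow_succ B]
      push_cast
      field_simp
  have hnorm : ∀ n, ‖V ^ n‖ ≤ (B * (d - c)) ^ n / n.factorial := by
    intro n
    have hcd : 0 ≤ d - c := sub_nonneg.2 h
    refine ContinuousLinearMap.opNorm_le_bound _ (by positivity) fun φ => ?_
    refine (ContinuousMap.norm_le _ (by positivity)).2 fun x => ?_
    have hx : ((x : ℝ) - c) ^ n ≤ (d - c) ^ n :=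
      pow_le_pow_left₀ (sub_nonneg.2 x.2.1) (sub_le_sub_right x.2.2 c) n
    calc ‖(V ^ n) φ x‖ ≤ B ^ n / n.factorial * ‖φ‖ * (x - c) ^ n := hpow n φ x
      _ ≤ B ^ n / n.factorial * ‖φ‖ * (d - c) ^ n := by gcongr
      _ = (B * (d - c)) ^ n / n.factorial * ‖φ‖ := by rw [mul_pow]; ring
  exact isUnit_one_add_of_norm_pow_le hnorm

/-- The operator `V` for which `(1 + V) g' = g' c` is the integrated form of
`g'' + p g' + q g = 0`, `g c = 0`. -/
noncomputable def volterraCLM {c d : ℝ} (h : c ≤ d) (p q : C(Icc c d, ℂ)) :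
    C(Icc c d, ℂ) →L[ℂ] C(Icc c d, ℂ) :=
  primitiveCLM h * (ContinuousLinearMap.mul ℂ C(Icc c d, ℂ) p +
    ContinuousLinearMap.mul ℂ C(Icc c d, ℂ) q * primitiveCLM h)

theorem volterraCLM_apply {c d : ℝ} (h : c ≤ d) (p q φ : C(Icc c d, ℂ)) :
    volterraCLM h p q φ = primitiveCLM h (p * φ + q * primitiveCLM h φ) := rfl

theorem isUnit_one_add_volterraCLM {c d : ℝ} (h : c ≤ d) (p q : C(Icc c d, ℂ)) :
    IsUnit (1 + volterraCLM h p q) := by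
  have hcd : 0 ≤ d - c := sub_nonneg.2 h
  refine isUnit_one_add_of_volterra h _ (B := ‖p‖ + ‖q‖ * (d - c)) (by positivity) ?_
  intro n k φ hk hφ
  rw [volterraCLM_apply]
  refine norm_primitiveCLM_apply_le h fun x => ?_
  have hx : 0 ≤ (x : ℝ) - c := sub_nonneg.2 x.2.1
  have hJ : ‖primitiveCLM h φ x‖ ≤ (d - c) * (k * (x - c) ^ n) := by
    refine (norm_primitiveCLM_apply_le h hφ x).trans ?_
    have h1 : k / (n + 1) ≤ k := div_le_self hk (by linarith [n.cast_nonneg (α := ℝ)])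
    calc k / (n + 1) * (x - c) ^ (n + 1) ≤ k * (x - c) ^ (n + 1) := by gcongr
      _ = (x - c) * (k * (x - c) ^ n) := by ring
      _ ≤ (d - c) * (k * (x - c) ^ n) := by gcongr; exact x.2.2
  calc ‖(p * φ + q * primitiveCLM h φ) x‖
      ≤ ‖p x‖ * ‖φ x‖ + ‖q x‖ * ‖primitiveCLM h φ x‖ := by
        rw [← norm_mul, ← norm_mul]
        exact norm_add_le (p x * φ x) (q x * primitiveCLM h φ x)
    _ ≤ ‖p‖ * (k * (x - c) ^ n) + ‖q‖ * ((d - c) * (k * (x - c) ^ n)) := by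
        gcongr
        · exact p.norm_coe_le_norm x
        · exact hφ x
        · exact q.norm_coe_le_norm x
    _ = (‖p‖ + ‖q‖ * (d - c)) * k * (x - c) ^ n := by ring

/-- The derivative on `[c, d]` of the solution of `g'' + p g' + q g = 0`, `g c = 0`, `g' c = 1`. -/
noncomputable def solutionDeriv {c d : ℝ} (h : c ≤ d) (p q : C(Icc c d, ℂ)) : C(Icc c d, ℂ) :=
  Ring.inverse (1 + volterraCLM h p q) 1

theorem solutionDeriv_add {c d : ℝ} (h : c ≤ d) (p q : C(Icc c d, ℂ)) :
    solutionDeriv h p q + volterraCLM h p q (solutionDeriv h p q) = 1 :=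
  congrArg (fun T : C(Icc c d, ℂ) →L[ℂ] C(Icc c d, ℂ) => T 1)
    (Ring.mul_inverse_cancel _ (isUnit_one_add_volterraCLM h p q))

theorem eq_smul_solutionDeriv {c d : ℝ} (h : c ≤ d) (p q : C(Icc c d, ℂ)) {φ : C(Icc c d, ℂ)}
    {k : ℂ} (hφ : φ + volterraCLM h p q φ = k • 1) : φ = k • solutionDeriv h p q := by
  have h1 : Ring.inverse (1 + volterraCLM h p q) ((1 + volterraCLM h p q) φ) = φ :=
    congrArg (fun T : C(Icc c d, ℂ) →L[ℂ] C(Icc c d, ℂ) => T φ)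
      (Ring.inverse_mul_cancel _ (isUnit_one_add_volterraCLM h p q))
  have h2 : (1 + volterraCLM h p q) φ = k • 1 := hφ
  rw [← h1, h2, map_smul, solutionDeriv]

/-- The value at `d` of the solution of `g'' + p g' + q g = 0`, `g c = 0`, `g' c = 1`. -/
noncomputable def dirichletDet {c d : ℝ} (h : c ≤ d) (p q : C(Icc c d, ℂ)) : ℂ :=
  primitiveCLM h (solutionDeriv h p q) ⟨d, right_mem_Icc.2 h⟩

theorem dirichletDet_eq_zero {c d : ℝ} (h : c ≤ d) (p q : C(ℝ, ℂ)) {g : ℝ → ℂ}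
    (hg : ContDiff ℝ 2 g)
    (heq : ∀ x ∈ Icc c d, deriv (deriv g) x + p x * deriv g x + q x * g x = 0)
    (hc : g c = 0) (hd : g d = 0) (hne : ∃ x ∈ Icc c d, g x ≠ 0) :
    dirichletDet h (p.restrict (Icc c d)) (q.restrict (Icc c d)) = 0 := by
  have hg' : ContDiff ℝ 1 (deriv g) := ((contDiff_succ_iff_deriv (n := 1)).1 hg).2.2
  have hg'' : Continuous (deriv (deriv g)) := (contDiff_one_iff_deriv.1 hg').2
  have hg1 : ∀ x, HasDerivAt g (deriv g x) x := fun x =>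
    (hg.differentiable (by norm_num) x).hasDerivAt
  have hg2 : ∀ x, HasDerivAt (deriv g) (deriv (deriv g) x) x := fun x =>
    (hg'.differentiable (by norm_num) x).hasDerivAt
  let φ : C(Icc c d, ℂ) := ContinuousMap.restrict (Icc c d) ⟨deriv g, hg'.continuous⟩
  have hJ : ∀ x : Icc c d, primitiveCLM h φ x = g x := by
    intro x
    have h1 : ∫ t in c..(x : ℝ), IccExtend h φ t = ∫ t in c..(x : ℝ), deriv g t := by
      refine intervalIntegral.integral_congr fun t ht => ?_
      rw [uIcc_of_le x.2.1] at ht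
      exact IccExtend_of_mem h _ ⟨ht.1, ht.2.trans x.2.2⟩
    rw [primitiveCLM_apply, h1, intervalIntegral.integral_eq_sub_of_hasDerivAt (fun t _ => hg1 t)
      (hg'.continuous.intervalIntegrable _ _), hc, sub_zero]
  have hφ : φ + volterraCLM h (p.restrict (Icc c d)) (q.restrict (Icc c d)) φ =
      deriv g c • 1 := by
    ext x
    have h1 : volterraCLM h (p.restrict (Icc c d)) (q.restrict (Icc c d)) φ x =
        ∫ t in c..(x : ℝ), -deriv (deriv g) t := by
      rw [volterraCLM_apply, primitiveCLM_apply]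
      refine intervalIntegral.integral_congr fun t ht => ?_
      rw [uIcc_of_le x.2.1] at ht
      have ht' : t ∈ Icc c d := ⟨ht.1, ht.2.trans x.2.2⟩
      have h2 : p t * deriv g t + q t * g t = -deriv (deriv g) t := by
        linear_combination heq t ht'
      simp only [IccExtend_of_mem h _ ht', ContinuousMap.add_apply, ContinuousMap.mul_apply, hJ]
      exact h2
    rw [ContinuousMap.add_apply, h1, intervalIntegral.integral_neg,
      intervalIntegral.integral_eq_sub_of_hasDerivAt (fun t _ => hg2 t)
        (hg''.intervalIntegrable _ _)]
    simp [φ]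
  have hφ' := eq_smul_solutionDeriv h _ _ hφ
  have hval : ∀ x : Icc c d, g x = deriv g c * primitiveCLM h
      (solutionDeriv h (p.restrict (Icc c d)) (q.restrict (Icc c d))) x := by
    intro x
    rw [← hJ x, hφ', map_smul]
    rfl
  have hc' : deriv g c ≠ 0 := by
    intro h0
    obtain ⟨x, hx, hgx⟩ := hne
    exact hgx (by simpa [h0] using hval ⟨x, hx⟩)
  have := hval ⟨d, right_mem_Icc.2 h⟩
  rw [hd, zero_eq_mul] at this
  exact this.resolve_left hc'

theorem exists_solution_of_dirichletDet_eq_zero {c d : ℝ} (h : c < d) (p q : C(ℝ, ℂ))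
    (hD : dirichletDet h.le (p.restrict (Icc c d)) (q.restrict (Icc c d)) = 0) :
    ∃ g : ℝ → ℂ, ContDiff ℝ 2 g ∧ (∃ x ∈ Icc c d, g x ≠ 0) ∧
      (∀ x ∈ Icc c d, deriv (deriv g) x + p x * deriv g x + q x * g x = 0) ∧
      g c = 0 ∧ g d = 0 := by
  set φ := solutionDeriv h.le (p.restrict (Icc c d)) (q.restrict (Icc c d)) with hφ
  set w := p.restrict (Icc c d) * φ + q.restrict (Icc c d) * primitiveCLM h.le φ with hw
  have hwc : Continuous (IccExtend h.le w) := w.continuous.Icc_extend'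
  let f : ℝ → ℂ := fun x => 1 - ∫ t in c..x, IccExtend h.le w t
  let g : ℝ → ℂ := fun x => ∫ t in c..x, f t
  have hf : ∀ x, HasDerivAt f (-IccExtend h.le w x) x := fun x =>
    ((hwc.integral_hasStrictDerivAt c x).hasDerivAt).const_sub 1
  have hfc : Continuous f := continuous_iff_continuousAt.2 fun x => (hf x).continuousAt
  have hg : ∀ x, HasDerivAt g (f x) x := fun x =>
    (hfc.integral_hasStrictDerivAt c x).hasDerivAt
  have hg' : deriv g = f := funext fun x => (hg x).deriv
  have hf' : deriv f = fun x => -IccExtend h.le w x := funext fun x => (hf x).deriv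
  have hfφ : ∀ x : Icc c d, f x = φ x := by
    intro x
    have h1 := congrArg (fun ψ : C(Icc c d, ℂ) => ψ x)
      (solutionDeriv_add h.le (p.restrict (Icc c d)) (q.restrict (Icc c d)))
    rw [← hφ, volterraCLM_apply, ← hw] at h1
    have h2 : φ x + ∫ t in c..(x : ℝ), IccExtend h.le w t = 1 := h1
    exact (eq_sub_of_add_eq h2).symm
  have hgJ : ∀ x : Icc c d, g x = primitiveCLM h.le φ x := by
    intro x
    rw [primitiveCLM_apply]
    refine intervalIntegral.integral_congr fun t ht => ?_
    rw [uIcc_of_le x.2.1] at ht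
    have ht' : t ∈ Icc c d := ⟨ht.1, ht.2.trans x.2.2⟩
    rw [IccExtend_of_mem h.le _ ht']
    exact hfφ ⟨t, ht'⟩
  have hgc : g c = 0 := intervalIntegral.integral_same
  refine ⟨g, ?_, ?_, fun x hx => ?_, hgc, ?_⟩
  · refine (contDiff_succ_iff_deriv (n := 1)).2
      ⟨fun x => (hg x).differentiableAt, by simp, ?_⟩
    rw [hg', contDiff_one_iff_deriv, hf']
    exact ⟨fun x => (hf x).differentiableAt, hwc.neg⟩
  · by_contra! hzero
    have h1 : HasDerivWithinAt g 0 (Icc c d) c :=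
      (hasDerivWithinAt_const c (Icc c d) (0 : ℂ)).congr hzero hgc
    have h2 := (uniqueDiffOn_Icc h c (left_mem_Icc.2 h.le)).eq_deriv _
      (hg c).hasDerivWithinAt h1
    simp [f] at h2
  · have hx1 := hfφ ⟨x, hx⟩
    have hx2 := hgJ ⟨x, hx⟩
    simp only at hx1 hx2
    rw [hg', (hf x).deriv, hx1, hx2, IccExtend_of_mem h.le _ hx]
    simp [hw]
  · exact (hgJ ⟨d, right_mem_Icc.2 h.le⟩).trans hD

theorem differentiable_inverse_one_add_apply {A : Type*} [NormedCommRing A] [NormedAlgebra ℂ A]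
    [CompleteSpace A] (J : A →L[ℂ] A) (p e : A) {q : ℂ → A} (hq : Differentiable ℂ q)
    (hu : ∀ ζ, IsUnit (1 + J * (ContinuousLinearMap.mul ℂ A p +
      ContinuousLinearMap.mul ℂ A (q ζ) * J))) :
    Differentiable ℂ fun ζ => Ring.inverse (1 + J * (ContinuousLinearMap.mul ℂ A p +
      ContinuousLinearMap.mul ℂ A (q ζ) * J)) e := by
  have hmul : Differentiable ℂ fun ζ => ContinuousLinearMap.mul ℂ A (q ζ) :=
    (ContinuousLinearMap.mul ℂ A).differentiable.comp hq
  have hV : Differentiable ℂ fun ζ => 1 + J * (ContinuousLinearMap.mul ℂ A p +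
      ContinuousLinearMap.mul ℂ A (q ζ) * J) :=
    (((hmul.mul_const J).const_add _).const_mul J).const_add 1
  have hinv : Differentiable ℂ fun ζ => Ring.inverse (1 + J * (ContinuousLinearMap.mul ℂ A p +
      ContinuousLinearMap.mul ℂ A (q ζ) * J)) := fun ζ =>
    DifferentiableAt.comp (g := Ring.inverse) ζ (differentiableAt_inverse (hu ζ)) (hV ζ)
  exact hinv.clm_apply (differentiable_const e)

/-- The Dirichlet determinant is holomorphic in a parameter on which `q` depends
holomorphically. -/
theorem differentiable_dirichletDet {c d : ℝ} (h : c ≤ d) (p : C(Icc c d, ℂ))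
    {q : ℂ → C(Icc c d, ℂ)} (hq : Differentiable ℂ q) :
    Differentiable ℂ fun ζ => dirichletDet h p (q ζ) := by
  have hsol : Differentiable ℂ fun ζ => solutionDeriv h p (q ζ) :=
    differentiable_inverse_one_add_apply (primitiveCLM h) p 1 hq
      fun ζ => isUnit_one_add_volterraCLM h p (q ζ)
  exact ((ContinuousMap.evalCLM ℂ (⟨d, right_mem_Icc.2 h⟩ : Icc c d)).comp
    (primitiveCLM h)).differentiable.comp hsol

/-- A second order equation `g'' + p g' + q g = 0` with a strongly negative `Re q` has no nonzero
solution vanishing at both end points, by the maximum principle for `‖g‖ ^ 2`. -/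
theorem eq_zero_of_re_neg {c d : ℝ} {p q g : ℝ → ℂ} (hg : ContDiff ℝ 2 g)
    (heq : ∀ x ∈ Icc c d, deriv (deriv g) x + p x * deriv g x + q x * g x = 0)
    (hc : g c = 0) (hd : g d = 0) (hneg : ∀ x ∈ Icc c d, ‖p x‖ ^ 2 / 4 + (q x).re < 0) :
    ∀ x ∈ Icc c d, g x = 0 := by
  intro y hy
  by_contra hgy
  have hg1 : ∀ x, HasDerivAt g (deriv g x) x := fun x =>
    (hg.differentiable (by norm_num) x).hasDerivAt
  have hg2 : ∀ x, HasDerivAt (deriv g) (deriv (deriv g) x) x := fun x =>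
    (((contDiff_succ_iff_deriv (n := 1)).1 hg).2.2.differentiable (by norm_num) x).hasDerivAt
  have hu : ∀ x, HasDerivAt (fun x => ‖g x‖ ^ 2) (2 * inner ℝ (g x) (deriv g x)) x :=
    fun x => (hg1 x).norm_sq
  have hu1 : deriv (fun x => ‖g x‖ ^ 2) = fun x => 2 * inner ℝ (g x) (deriv g x) :=
    funext fun x => (hu x).deriv
  obtain ⟨x, hx, hmax⟩ := isCompact_Icc.exists_isMaxOn ⟨y, hy⟩
    (f := fun x => ‖g x‖ ^ 2) (hg.continuous.norm.pow 2).continuousOn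
  have hpos : 0 < ‖g x‖ ^ 2 := lt_of_lt_of_le (by positivity) (hmax hy)
  have hxc : c < x := lt_of_le_of_ne hx.1 (by rintro rfl; simp [hc] at hpos)
  have hxd : x < d := lt_of_le_of_ne hx.2 (by rintro rfl; simp [hd] at hpos)
  have hloc : IsLocalMax (fun x => ‖g x‖ ^ 2) x := hmax.isLocalMax (Icc_mem_nhds hxc hxd)
  have hu2 : deriv (deriv (fun x => ‖g x‖ ^ 2)) x =
      2 * (inner ℝ (g x) (deriv (deriv g) x) + inner ℝ (deriv g x) (deriv g x)) := by
    rw [hu1]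
    exact (((hg1 x).inner ℝ (hg2 x)).const_mul 2).deriv
  have hpos2 : 0 < deriv (deriv (fun x => ‖g x‖ ^ 2)) x := by
    rw [hu2, real_inner_self_eq_norm_sq]
    have h2 : deriv (deriv g) x = -(p x * deriv g x) - q x * g x := by
      linear_combination heq x hx
    have h3 : inner ℝ (g x) (q x * g x) = (q x).re * ‖g x‖ ^ 2 := by
      rw [Complex.inner, ← Complex.normSq_eq_norm_sq, ← Complex.re_mul_ofReal,
        ← Complex.mul_conj]
      congr 1
      ring
    have h4 : inner ℝ (g x) (p x * deriv g x) ≤ ‖g x‖ * (‖p x‖ * ‖deriv g x‖) := by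
      rw [← norm_mul]; exact real_inner_le_norm _ _
    rw [h2, inner_sub_right, inner_neg_right, h3]
    nlinarith [mul_pos_of_neg_of_neg (hneg x hx) (neg_lt_zero.2 hpos),
      sq_nonneg (‖deriv g x‖ - ‖p x‖ * ‖g x‖ / 2)]
  have hmin : IsLocalMin (fun x => ‖g x‖ ^ 2) x :=
    isLocalMin_of_deriv_deriv_pos hpos2 hloc.deriv_eq_zero (hu x).continuousAt
  have hconst : (fun x => ‖g x‖ ^ 2) =ᶠ[nhds x] fun _ => ‖g x‖ ^ 2 := by
    filter_upwards [hmin, hloc] with z h1 h2 using le_antisymm h2 h1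
  have h0 := hconst.deriv.deriv_eq
  simp only [deriv_const'] at h0
  exact hpos2.ne' (by simpa using h0)

theorem differentiable_quadratic {A : Type*} [NormedAddCommGroup A] [NormedSpace ℂ A]
    (q₀ q₁ q₂ : A) : Differentiable ℂ fun ζ : ℂ => ζ ^ 2 • q₂ + ζ • q₁ + q₀ := by
  fun_prop

theorem finite_zeros_of_subset_isCompact {D : ℂ → ℂ} (hD : Differentiable ℂ D) {ζ₀ : ℂ}
    (hζ₀ : D ζ₀ ≠ 0) {s K : Set ℂ} (hK : IsCompact K) (hsK : s ⊆ K) (hs : ∀ ζ ∈ s, D ζ = 0) :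
    s.Finite := by
  by_contra hinf
  obtain ⟨z, -, hz⟩ := Set.Infinite.exists_accPt_of_subset_isCompact hinf hK hsK
  have hfreq : ∃ᶠ ζ in nhdsWithin z {z}ᶜ, D ζ = 0 :=
    (accPt_iff_frequently_nhdsNE.1 hz).mono hs
  exact hζ₀ (AnalyticOnNhd.eqOn_zero_of_preconnected_of_frequently_eq_zero
    (fun w _ => hD.analyticAt w) isPreconnected_univ (mem_univ z) hfreq (mem_univ ζ₀))

/-- The zeroth order coefficient of `H_ζ` has very negative real part when `ζ` is far from the
real axis in a vertical strip. -/
theorem exists_forall_coeff_re_neg {r : ℝ} {a : ℝ → ℝ} {p q₁ q₀ : ℝ → ℂ} (ha : Continuous a)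
    (hp : Continuous p) (hq₁ : Continuous q₁) (hq₀ : Continuous q₀)
    (ha0 : ∀ x ∈ Icc (-r) r, a x ≠ 0) (S : ℝ) (hS : 0 ≤ S) :
    ∃ T : ℝ, 0 ≤ T ∧ ∀ ζ : ℂ, |ζ.re| ≤ S → T ≤ |ζ.im| → ∀ x ∈ Icc (-r) r,
      ‖p x‖ ^ 2 / 4 + (ζ ^ 2 * (a x : ℂ) ^ 2 + ζ * q₁ x + q₀ x).re < 0 := by
  obtain ⟨c, hc, hca⟩ : ∃ c : ℝ, 0 < c ∧ ∀ x ∈ Icc (-r) r, c ≤ a x ^ 2 :=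
    isCompact_Icc.exists_forall_le' (by fun_prop) fun x hx => by
      have := ha0 x hx
      positivity
  have hbound : ∀ f : ℝ → ℝ, Continuous f → ∃ C : ℝ, 0 ≤ C ∧ ∀ x ∈ Icc (-r) r, f x ≤ C := by
    intro f hf
    obtain ⟨C, hC⟩ := isCompact_Icc.bddAbove_image (hf.continuousOn (s := Icc (-r) r))
    exact ⟨max C 0, le_max_right _ _, fun x hx =>
      (hC (mem_image_of_mem f hx)).trans (le_max_left _ _)⟩
  obtain ⟨A, hA0, hA⟩ := hbound (fun x => a x ^ 2) (by fun_prop)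
  obtain ⟨P, hP0, hP⟩ := hbound (fun x => ‖p x‖ ^ 2 / 4) (by fun_prop)
  obtain ⟨E, hE0, hE⟩ := hbound (fun x => ‖q₁ x‖) (by fun_prop)
  obtain ⟨F, hF0, hF⟩ := hbound (fun x => ‖q₀ x‖) (by fun_prop)
  set M := P + S ^ 2 * A + S * E + E + F with hM
  have hM0 : 0 ≤ M := by positivity
  refine ⟨1 + M / c, by positivity, fun ζ hre him x hx => ?_⟩
  have him1 : 1 ≤ |ζ.im| := le_trans (by linarith [div_nonneg hM0 hc.le]) him
  have hcim : c + M ≤ c * |ζ.im| := by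
    calc c + M = c * (1 + M / c) := by field_simp
      _ ≤ c * |ζ.im| := by gcongr
  have hsq : (ζ ^ 2 * (a x : ℂ) ^ 2).re = ζ.re ^ 2 * a x ^ 2 - ζ.im ^ 2 * a x ^ 2 := by
    rw [← Complex.ofReal_pow, Complex.re_mul_ofReal, pow_two, Complex.mul_re]
    ring
  have h1 : (ζ * q₁ x).re ≤ (S + |ζ.im|) * E := by
    refine (Complex.re_le_norm _).trans ?_
    rw [norm_mul]
    gcongr
    · exact (Complex.norm_le_abs_re_add_abs_im ζ).trans (by linarith)
    · exact hE x hx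
  have h0 : (q₀ x).re ≤ F := (Complex.re_le_norm _).trans (hF x hx)
  have h2 : ζ.re ^ 2 * a x ^ 2 ≤ S ^ 2 * A := by
    rw [← sq_abs ζ.re]
    gcongr
    exact hA x hx
  have h3 : c * |ζ.im| * |ζ.im| ≤ ζ.im ^ 2 * a x ^ 2 := by
    rw [← sq_abs ζ.im]
    nlinarith [hca x hx, sq_nonneg |ζ.im|]
  have h4 : (c + M) * |ζ.im| ≤ c * |ζ.im| * |ζ.im| := by gcongr
  have h5 : P + S ^ 2 * A + S * E + F ≤ (P + S ^ 2 * A + S * E + F) * |ζ.im| :=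
    le_mul_of_one_le_right (by positivity) him1
  have h6 : (c + M) * |ζ.im| =
      c * |ζ.im| + (P + S ^ 2 * A + S * E + F) * |ζ.im| + E * |ζ.im| := by rw [hM]; ring
  have h7 : 0 < c * |ζ.im| := by positivity
  rw [Complex.add_re, Complex.add_re, hsq]
  linarith [hP x hx]

/-- For every compact subset `K` of `[0,∞)`, only finitely many elements of `𝔖`
have real part in `K`. -/
theorem frakS_re_in_compact_finite (r : ℝ) (hr : 0 < r) (a : ℝ → ℝ) (ha : ContDiff ℝ (⊤ : ℕ∞) a)
    (ha0 : ∀ x ∈ Icc (-r) r, a x ≠ 0)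
    (β₁ β₂ β₃ : ℝ → ℂ) (hβ₁ : ContDiff ℝ (⊤ : ℕ∞) β₁) (hβ₂ : ContDiff ℝ (⊤ : ℕ∞) β₂)
    (hβ₃ : ContDiff ℝ (⊤ : ℕ∞) β₃)
    (K : Set ℝ) (hK : IsCompact K) (hK0 : K ⊆ Ici 0) :
    {ζ ∈ frakS r a β₁ β₂ β₃ | ζ.re ∈ K}.Finite := by
  have hac : Continuous a := ha.continuous
  have ha'c : Continuous (deriv a) := ha.continuous_deriv (by simp)
  have hβ₁c : Continuous β₁ := hβ₁.continuous
  have hβ₂c : Continuous β₂ := hβ₂.continuous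
  have hβ₃c : Continuous β₃ := hβ₃.continuous
  have hrr : -r < r := by linarith
  let p : C(ℝ, ℂ) := ⟨fun x => β₁ x + β₂ x, by fun_prop⟩
  let q₀ : C(ℝ, ℂ) := ⟨β₃, hβ₃c⟩
  let q₁ : C(ℝ, ℂ) := ⟨fun x => Complex.I * (a x * (β₁ x - β₂ x) - Complex.ofReal (deriv a x)),
    by fun_prop⟩
  let q₂ : C(ℝ, ℂ) := ⟨fun x => (a x : ℂ) ^ 2, by fun_prop⟩
  let q : ℂ → C(ℝ, ℂ) := fun ζ => ζ ^ 2 • q₂ + ζ • q₁ + q₀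
  have hHop : ∀ ζ g x, Hop a β₁ β₂ β₃ ζ g x =
      deriv (deriv g) x + p x * deriv g x + q ζ x * g x := by
    intro ζ g x
    simp only [Hop, p, q, q₀, q₁, q₂, ContinuousMap.add_apply, ContinuousMap.smul_apply,
      ContinuousMap.coe_mk, smul_eq_mul]
    ring
  let D : ℂ → ℂ := fun ζ =>
    dirichletDet hrr.le (p.restrict (Icc (-r) r)) ((q ζ).restrict (Icc (-r) r))
  have hD : Differentiable ℂ D := differentiable_dirichletDet hrr.le _
    (differentiable_quadratic (q₀.restrict (Icc (-r) r)) (q₁.restrict (Icc (-r) r))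
      (q₂.restrict (Icc (-r) r)))
  obtain ⟨S, hS⟩ := hK.bddAbove
  obtain ⟨T, hT0, hT⟩ := exists_forall_coeff_re_neg (r := r) hac p.continuous q₁.continuous
    q₀.continuous ha0 (max S 0) (le_max_right _ _)
  have hnot : ∀ ζ : ℂ, |ζ.re| ≤ max S 0 → T ≤ |ζ.im| → ∀ g : ℝ → ℂ, ContDiff ℝ 2 g →
      (∀ x ∈ Icc (-r) r, deriv (deriv g) x + p x * deriv g x + q ζ x * g x = 0) →
      g (-r) = 0 → g r = 0 → ∀ x ∈ Icc (-r) r, g x = 0 := fun ζ h1 h2 g hg heq hl hr' =>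
    eq_zero_of_re_neg hg heq hl hr' (hT ζ h1 h2)
  have hD0 : D (T * Complex.I) ≠ 0 := by
    intro h0
    obtain ⟨g, hg, ⟨x, hx, hgx⟩, heq, hl, hr'⟩ :=
      exists_solution_of_dirichletDet_eq_zero hrr p _ h0
    exact hgx (hnot _ (by simp) (by simp [le_abs_self]) g hg heq hl hr' x hx)
  refine finite_zeros_of_subset_isCompact hD hD0
    (isCompact_Icc.reProdIm (isCompact_Icc (a := -T) (b := T)) (s := Icc 0 S)) ?_ ?_
  · rintro ζ ⟨⟨g, hg, ⟨x, hx, hgx⟩, heq, hl, hr'⟩, hζK⟩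
    have hre0 : 0 ≤ ζ.re := hK0 hζK
    have hreS : ζ.re ≤ S := hS hζK
    refine ⟨⟨hre0, hreS⟩, abs_le.1 (not_lt.1 fun hlt => ?_)⟩
    exact hgx (hnot ζ (by rw [abs_of_nonneg hre0]; exact hreS.trans (le_max_left _ _)) hlt.le g hg
      (fun y hy => hHop ζ g y ▸ heq y hy) hl hr' x hx)
  · rintro ζ ⟨⟨g, hg, hne, heq, hl, hr'⟩, -⟩
    exact dirichletDet_eq_zero hrr.le p (q ζ) hg (fun y hy => hHop ζ g y ▸ heq y hy) hl hr' hne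
end

section
/- Let s ∈ ℝ be such that no element of 𝔖 has real part equal to s. Then there exists a constant C < ∞ such that for every γ ∈ ℝ, writing ζ = s + iγ, and for all C^∞ functions f, φ, ψ : I → ℂ satisfying (H_ζ f)(x) = φ(x) + ψ′(x) for all x ∈ I, one has ‖f‖_{L²(I)} + ⟨ζ⟩^{−1}·‖f′‖_{L²(I)} ≤ C·⟨ζ⟩^{−1/2}·(|f(−r)| + |f(r)|) + C·⟨ζ⟩^{−2}·‖φ‖_{L²(I)} + C·⟨ζ⟩^{−1}·‖ψ‖_{L²(I)}. -/
open MeasureTheory Set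

/-- Coordinatewise truncation of a complex number to the square `[-R, R] + i[-R, R]`. -/
noncomputable def complexClamp (R : ℝ) (z : ℂ) : ℂ :=
  ⟨max (-R) (min z.re R), max (-R) (min z.im R)⟩

lemma abs_clamp_sub_clamp_le (R x y : ℝ) :
    |max (-R) (min x R) - max (-R) (min y R)| ≤ |x - y| := by
  have h₁ := abs_max_sub_max_le_abs (min x R) (min y R) (-R)
  have h₂ := abs_min_sub_min_le_max x R y R
  rw [max_comm (-R), max_comm (-R)]
  refine h₁.trans (h₂.trans ?_)
  simp

lemma norm_complexClamp_sub_le (R : ℝ) (z w : ℂ) :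
    ‖complexClamp R z - complexClamp R w‖ ≤ ‖z - w‖ := by
  rw [Complex.norm_def, Complex.norm_def]
  apply Real.sqrt_le_sqrt
  rw [Complex.normSq_apply, Complex.normSq_apply, ← sq, ← sq, ← sq, ← sq]
  exact add_le_add (sq_le_sq.2 (abs_clamp_sub_clamp_le R z.re w.re))
    (sq_le_sq.2 (abs_clamp_sub_clamp_le R z.im w.im))

lemma complexClamp_of_norm_le {R : ℝ} {z : ℂ} (hz : ‖z‖ ≤ R) : complexClamp R z = z := by
  have h₁ := abs_le.1 ((Complex.abs_re_le_norm z).trans hz)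
  have h₂ := abs_le.1 ((Complex.abs_im_le_norm z).trans hz)
  apply Complex.ext <;> simp [complexClamp, *]

lemma norm_complexClamp_le_norm {R : ℝ} (hR : 0 ≤ R) (z : ℂ) : ‖complexClamp R z‖ ≤ ‖z‖ := by
  have h := norm_complexClamp_sub_le R z 0
  rwa [complexClamp_of_norm_le (z := 0) (by simpa using hR), sub_zero, sub_zero] at h

lemma norm_complexClamp_le {R : ℝ} (hR : 0 ≤ R) (z : ℂ) : ‖complexClamp R z‖ ≤ 2 * R := by
  have h : ∀ x : ℝ, |max (-R) (min x R)| ≤ R := fun x =>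
    abs_le.2 ⟨le_max_left _ _, max_le (by linarith) (min_le_right _ _)⟩
  have := Complex.norm_le_abs_re_add_abs_im (complexClamp R z)
  have h₁ := h z.re
  have h₂ := h z.im
  simp only [complexClamp] at this ⊢
  linarith

/-- Solvability of the initial value problem for a second order linear equation on `[-r, r]`,
with a solution that is `C²` on the whole line. -/
lemma exists_contDiff_two_linear_ode {r : ℝ} (hr : 0 < r) {b c : ℝ → ℂ}
    (hb : Continuous b) (hc : Continuous c) :
    ∃ g : ℝ → ℂ, ContDiff ℝ 2 g ∧
      (∀ x ∈ Icc (-r) r, deriv (deriv g) x + b x * deriv g x + c x * g x = 0) ∧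
      g (-r) = 0 ∧ deriv g (-r) = 1 := by
  obtain ⟨B, hB⟩ := isCompact_Icc.exists_bound_of_continuousOn (s := Icc (-r) r) hb.continuousOn
  obtain ⟨D, hD⟩ := isCompact_Icc.exists_bound_of_continuousOn (s := Icc (-r) r) hc.continuousOn
  have hmem : -r ∈ Icc (-r) r := ⟨le_rfl, by linarith⟩
  have hB0 : 0 ≤ B := (norm_nonneg _).trans (hB _ hmem)
  have hD0 : 0 ≤ D := (norm_nonneg _).trans (hD _ hmem)
  set K : ℝ := 1 + B + D with hK
  have hK0 : 0 ≤ K := by positivity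
  set R : ℝ := Real.exp (K * (2 * r)) with hRdef
  have hR0 : 0 ≤ R := (Real.exp_pos _).le
  set F : ℝ → ℂ × ℂ → ℂ × ℂ := fun t y =>
    (complexClamp R y.2, -(b t * complexClamp R y.2) - c t * complexClamp R y.1) with hF
  have key : ∀ t ∈ Icc (-r) r, ∀ p q : ℂ, ∀ N : ℝ, ‖p‖ ≤ N → ‖q‖ ≤ N →
      ‖((q, -(b t * q) - c t * p) : ℂ × ℂ)‖ ≤ K * N := by
    intro t ht p q N hp hq
    have hN : 0 ≤ N := (norm_nonneg _).trans hp
    have h₁ : ‖b t * q‖ ≤ B * N := by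
      rw [norm_mul]; exact mul_le_mul (hB t ht) hq (norm_nonneg _) hB0
    have h₂ : ‖c t * p‖ ≤ D * N := by
      rw [norm_mul]; exact mul_le_mul (hD t ht) hp (norm_nonneg _) hD0
    have h₃ := norm_sub_le (-(b t * q)) (c t * p)
    rw [norm_neg] at h₃
    have h₄ : 0 ≤ B * N := by positivity
    have h₅ : 0 ≤ D * N := by positivity
    rw [Prod.norm_def]
    apply max_le
    · simp only; nlinarith
    · simp only; nlinarith
  have hPL : IsPicardLindelof F (⟨-r, hmem⟩ : Icc (-r) r) ((0, 1) : ℂ × ℂ)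
      (⟨K * (2 * R) * (2 * r), by positivity⟩) 0 ⟨K * (2 * R), by positivity⟩ ⟨K, hK0⟩ := by
    refine ⟨?_, ?_, ?_, ?_⟩
    · intro t ht
      apply LipschitzWith.lipschitzOnWith
      apply LipschitzWith.of_dist_le_mul
      intro y z
      rw [dist_eq_norm, dist_eq_norm]
      have e : F t y - F t z =
          (complexClamp R y.2 - complexClamp R z.2,
            -(b t * (complexClamp R y.2 - complexClamp R z.2))
              - c t * (complexClamp R y.1 - complexClamp R z.1)) := by
        simp only [hF, Prod.mk_sub_mk]
        congr 1
        ring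
      rw [e]
      exact key t ht _ _ _ ((norm_complexClamp_sub_le _ _ _).trans (norm_fst_le (y - z)))
        ((norm_complexClamp_sub_le _ _ _).trans (norm_snd_le (y - z)))
    · intro y _
      simp only [hF]
      fun_prop
    · intro t ht y _
      exact key t ht _ _ _ (norm_complexClamp_le hR0 _) (norm_complexClamp_le hR0 _)
    · change K * (2 * R) * max (r - -r) (-r - -r) ≤ K * (2 * R) * (2 * r) - 0
      rw [max_eq_left (by linarith)]
      apply le_of_eq
      ring
  obtain ⟨y, hy0, hy⟩ := hPL.exists_eq_forall_mem_Icc_hasDerivWithinAt₀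
  simp only at hy0
  have hycont : ContinuousOn y (Icc (-r) r) := fun t ht => (hy t ht).continuousWithinAt
  have hbound : ∀ t ∈ Icc (-r) r, ‖y t‖ ≤ R := by
    intro t ht
    have := norm_le_gronwallBound_of_norm_deriv_right_le (f := y) (f' := fun t => F t (y t))
      (δ := 1) (K := K) (ε := 0) (a := -r) (b := r) hycont
      (fun x hx => (hy x ⟨hx.1, hx.2.le⟩).mono_of_mem_nhdsWithin
        (Icc_mem_nhdsGE_of_mem hx))
      (by rw [hy0]; simp [Prod.norm_def])
      (fun x hx => by
        rw [add_zero]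
        exact key x ⟨hx.1, hx.2.le⟩ _ _ _
          ((norm_complexClamp_le_norm hR0 _).trans (norm_fst_le _))
          ((norm_complexClamp_le_norm hR0 _).trans (norm_snd_le _))) t ht
    rw [gronwallBound_ε0, one_mul] at this
    refine this.trans (Real.exp_le_exp.2 ?_)
    apply mul_le_mul_of_nonneg_left _ hK0
    linarith [ht.2]
  have hF' : ∀ t ∈ Icc (-r) r, F t (y t) = ((y t).2, -(b t * (y t).2) - c t * (y t).1) := by
    intro t ht
    simp only [hF]
    rw [complexClamp_of_norm_le ((norm_fst_le _).trans (hbound t ht)),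
      complexClamp_of_norm_le ((norm_snd_le _).trans (hbound t ht))]
  -- extend the second derivative continuously and integrate twice
  have hle : -r ≤ r := by linarith
  set h : ℝ → ℂ := IccExtend hle (fun t : Icc (-r) r =>
    -(b t * (y t).2) - c t * (y t).1) with hh
  have hcont : Continuous h := by
    apply Continuous.Icc_extend'
    have hy' : Continuous fun t : Icc (-r) r => y t := hycont.domRestrict
    exact ((hb.comp continuous_subtype_val).mul hy'.snd).neg.sub
      ((hc.comp continuous_subtype_val).mul hy'.fst)
  have hval : ∀ t ∈ Icc (-r) r, h t = -(b t * (y t).2) - c t * (y t).1 := fun t ht => by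
    rw [hh, IccExtend_of_mem _ _ ht]
  set v : ℝ → ℂ := fun x => 1 + ∫ t in (-r)..x, h t with hv
  have hvd : ∀ x, HasDerivAt v (h x) x := fun x =>
    (intervalIntegral.integral_hasDerivAt_right (hcont.intervalIntegrable _ _)
      (hcont.stronglyMeasurableAtFilter _ _) hcont.continuousAt).const_add _
  have hvc : Continuous v := continuous_iff_continuousAt.2 fun x => (hvd x).continuousAt
  set g : ℝ → ℂ := fun x => ∫ t in (-r)..x, v t with hg
  have hgd : ∀ x, HasDerivAt g (v x) x := fun x =>
    intervalIntegral.integral_hasDerivAt_right (hvc.intervalIntegrable _ _)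
      (hvc.stronglyMeasurableAtFilter _ _) hvc.continuousAt
  have hgder : deriv g = v := funext fun x => (hgd x).deriv
  have hvder : deriv v = h := funext fun x => (hvd x).deriv
  have heq : ∀ u w : ℝ → ℂ, ∀ d : ℝ → ℂ, u (-r) = w (-r) →
      (∀ t ∈ Icc (-r) r, HasDerivWithinAt u (d t) (Icc (-r) r) t) →
      (∀ t ∈ Icc (-r) r, HasDerivWithinAt w (d t) (Icc (-r) r) t) →
      ∀ t ∈ Icc (-r) r, u t = w t := by
    intro u w d h0 hu hw
    apply eq_of_has_deriv_right_eq (f' := d)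
      (fun x hx => (hu x ⟨hx.1, hx.2.le⟩).mono_of_mem_nhdsWithin (Icc_mem_nhdsGE_of_mem hx))
      (fun x hx => (hw x ⟨hx.1, hx.2.le⟩).mono_of_mem_nhdsWithin (Icc_mem_nhdsGE_of_mem hx))
      (fun x hx => (hu x hx).continuousWithinAt) (fun x hx => (hw x hx).continuousWithinAt) h0
  have hv2 : ∀ t ∈ Icc (-r) r, v t = (y t).2 := by
    apply heq v (fun t => (y t).2) h
    · simp [hv, hy0]
    · exact fun t _ => (hvd t).hasDerivWithinAt
    · intro t ht
      have := (hy t ht).snd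
      rwa [hF' t ht, ← hval t ht] at this
  have hg1 : ∀ t ∈ Icc (-r) r, g t = (y t).1 := by
    apply heq g (fun t => (y t).1) v
    · simp [hg, hy0]
    · exact fun t _ => (hgd t).hasDerivWithinAt
    · intro t ht
      have := (hy t ht).fst
      rwa [hF' t ht, ← hv2 t ht] at this
  refine ⟨g, ?_, ?_, ?_, ?_⟩
  · have hv1 : ContDiff ℝ 1 v := by
      rw [contDiff_one_iff_deriv]
      exact ⟨fun x => (hvd x).differentiableAt, by rw [hvder]; exact hcont⟩
    have : ContDiff ℝ (1 + 1) g := by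
      rw [contDiff_succ_iff_deriv]
      exact ⟨fun x => (hgd x).differentiableAt, by simp, by rw [hgder]; exact hv1⟩
    simpa [one_add_one_eq_two] using this
  · intro x hx
    rw [hgder, hvder, hval x hx, hv2 x hx, hg1 x hx]
    ring
  · simp [hg]
  · rw [hgder]; simp [hv]

/-- A Grönwall inequality for the quadratic energy of a pair of functions. -/
lemma norm_sq_add_norm_sq_le_of_deriv_sq_le {r K : ℝ} {u v p q : ℝ → ℂ} {G : ℝ → ℝ}
    (hG : Continuous G) (hG0 : ∀ x, 0 ≤ G x) (hK : 0 ≤ K)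
    (hu : ∀ x, HasDerivAt u (p x) x) (hv : ∀ x, HasDerivAt v (q x) x)
    (hpq : ∀ x ∈ Icc (-r) r,
      ‖p x‖ ^ 2 + ‖q x‖ ^ 2 ≤ K * (‖u x‖ ^ 2 + ‖v x‖ ^ 2) + G x)
    {x : ℝ} (hx : x ∈ Icc (-r) r) :
    ‖u x‖ ^ 2 + ‖v x‖ ^ 2 ≤ Real.exp ((K + 1) * (2 * r)) *
      (‖u (-r)‖ ^ 2 + ‖v (-r)‖ ^ 2 + ∫ t in (-r)..r, G t) := by
  have hrr : -r ≤ r := hx.1.trans hx.2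
  set L := K + 1 with hL
  set e : ℝ → ℝ := fun x => Real.exp (-(L * (x + r))) with he
  have hed : ∀ x, HasDerivAt e (e x * (-L)) x := by
    intro x
    have h : HasDerivAt (fun x : ℝ => -(L * (x + r))) (-L) x := by
      simpa using (((hasDerivAt_id' x).add_const r).const_mul L).fun_neg
    exact h.exp
  have hGd : ∀ x, HasDerivAt (fun x => ∫ t in (-r)..x, G t) (G x) x := fun x =>
    intervalIntegral.integral_hasDerivAt_right (hG.intervalIntegrable _ _)
      (hG.stronglyMeasurableAtFilter _ _) hG.continuousAt
  set E : ℝ → ℝ := fun x => ‖u x‖ ^ 2 + ‖v x‖ ^ 2 with hE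
  have hEd : ∀ x, HasDerivAt E (2 * inner ℝ (u x) (p x) + 2 * inner ℝ (v x) (q x)) x :=
    fun x => (hu x).norm_sq.add (hv x).norm_sq
  set h : ℝ → ℝ := fun x => e x * E x - ∫ t in (-r)..x, G t with hh
  have hd : ∀ x, HasDerivAt h (e x * (-L) * E x
      + e x * (2 * inner ℝ (u x) (p x) + 2 * inner ℝ (v x) (q x)) - G x) x :=
    fun x => ((hed x).mul (hEd x)).sub (hGd x)
  have hanti : AntitoneOn h (Icc (-r) r) := by
    apply antitoneOn_of_deriv_nonpos (convex_Icc _ _)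
    · exact fun x _ => (hd x).continuousAt.continuousWithinAt
    · exact fun x _ => (hd x).differentiableAt.differentiableWithinAt
    · intro x hx
      rw [(hd x).deriv]
      have hx' := interior_subset hx
      have h₁ := hpq x hx'
      have h₂ := real_inner_le_norm (u x) (p x)
      have h₃ := real_inner_le_norm (v x) (q x)
      have h₄ : 2 * inner ℝ (u x) (p x) + 2 * inner ℝ (v x) (q x) ≤ L * E x + G x := by
        simp only [hE, hL]
        nlinarith [sq_nonneg (‖u x‖ - ‖p x‖), sq_nonneg (‖v x‖ - ‖q x‖)]
      have h₅ : e x ≤ 1 := by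
        simp only [he, Real.exp_le_one_iff]
        have : 0 ≤ L * (x + r) := mul_nonneg (by positivity) (by linarith [hx'.1])
        linarith
      have h₆ : 0 < e x := Real.exp_pos _
      have h₇ := mul_le_mul_of_nonneg_left h₄ h₆.le
      have h₈ := mul_le_mul_of_nonneg_right h₅ (hG0 x)
      linarith
  have h₁ := hanti (left_mem_Icc.2 hrr) hx hx.1
  have h₂ : ∫ t in (-r)..x, G t ≤ ∫ t in (-r)..r, G t :=
    intervalIntegral.integral_mono_interval le_rfl hx.1 hx.2
      (Filter.Eventually.of_forall hG0) (hG.intervalIntegrable _ _)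
  have h₃ : e (-r) = 1 := by simp [he]
  simp only [hh, h₃, one_mul, intervalIntegral.integral_same, sub_zero] at h₁
  have h₄ : e x * E x ≤ E (-r) + ∫ t in (-r)..r, G t := by linarith
  have h₅ : Real.exp (L * (2 * r)) * e x ≥ 1 := by
    simp only [he, ← Real.exp_add]
    apply Real.one_le_exp
    have : 0 ≤ L * (r - x) := mul_nonneg (by positivity) (by linarith [hx.2])
    linarith
  calc E x ≤ Real.exp (L * (2 * r)) * e x * E x :=
        le_mul_of_one_le_left (by positivity) h₅
    _ = Real.exp (L * (2 * r)) * (e x * E x) := by ring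
    _ ≤ _ := mul_le_mul_of_nonneg_left h₄ (Real.exp_pos _).le

lemma norm_add_sq_le_two_mul (z w : ℂ) : ‖z + w‖ ^ 2 ≤ 2 * ‖z‖ ^ 2 + 2 * ‖w‖ ^ 2 := by
  have := pow_le_pow_left₀ (norm_nonneg _) (norm_add_le z w) 2
  nlinarith [sq_nonneg (‖z‖ - ‖w‖)]

lemma add_five_sq_le (a b c d e : ℝ) :
    (a + b + c + d + e) ^ 2 ≤ 5 * (a ^ 2 + b ^ 2 + c ^ 2 + d ^ 2 + e ^ 2) := by
  nlinarith [sq_nonneg (a - b), sq_nonneg (a - c), sq_nonneg (a - d), sq_nonneg (a - e),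
    sq_nonneg (b - c), sq_nonneg (b - d), sq_nonneg (b - e), sq_nonneg (c - d),
    sq_nonneg (c - e), sq_nonneg (d - e)]

lemma ContDiff.hasDerivAt_deriv_deriv {f : ℝ → ℂ} (hf : ContDiff ℝ 2 f) :
    (∀ x, HasDerivAt f (deriv f x) x) ∧ (∀ x, HasDerivAt (deriv f) (deriv (deriv f) x) x) ∧
      Continuous (deriv f) := by
  have h1 : ContDiff ℝ 1 (deriv f) := ((contDiff_succ_iff_deriv (n := 1)).1 hf).2.2
  exact ⟨fun x => (hf.differentiable (by norm_num) x).hasDerivAt,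
    fun x => (h1.differentiable (by norm_num) x).hasDerivAt, h1.continuous⟩

set_option maxHeartbeats 1000000 in
/-- If the Dirichlet problem for `g'' + b g' + c₀ g = 0` is nondegenerate, then solutions of
`f'' + b f' + c f = φ + ψ'` are controlled for every `c` uniformly close to `c₀`. -/
lemma exists_dirichlet_bound_of_near {r : ℝ} (hr : 0 < r) {b c₀ g : ℝ → ℂ}
    (hb : Continuous b) (hc₀ : Continuous c₀) (hg : ContDiff ℝ 2 g)
    (hgeq : ∀ x ∈ Icc (-r) r, deriv (deriv g) x + b x * deriv g x + c₀ x * g x = 0)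
    (hg0 : g (-r) = 0) (hg1 : deriv g (-r) = 1) (hgr : g r ≠ 0) :
    ∃ C ε : ℝ, 0 < C ∧ 0 < ε ∧ ∀ c : ℝ → ℂ, (∀ x ∈ Icc (-r) r, ‖c x - c₀ x‖ ^ 2 ≤ ε) →
      ∀ f φ ψ : ℝ → ℂ, ContDiff ℝ 2 f → Continuous φ → ContDiff ℝ 1 ψ →
      (∀ x ∈ Icc (-r) r,
        deriv (deriv f) x + b x * deriv f x + c x * f x = φ x + deriv ψ x) →
      (∫ x in (-r)..r, ‖f x‖ ^ 2) + (∫ x in (-r)..r, ‖deriv f x‖ ^ 2) ≤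
        C * (‖f (-r)‖ ^ 2 + ‖f r‖ ^ 2 + (∫ x in (-r)..r, ‖φ x‖ ^ 2)
          + ∫ x in (-r)..r, ‖ψ x‖ ^ 2) := by
  have hrr : -r ≤ r := by linarith
  obtain ⟨hgd, hgd', hgc⟩ := hg.hasDerivAt_deriv_deriv
  obtain ⟨M₁, hM₁⟩ := isCompact_Icc.exists_bound_of_continuousOn (s := Icc (-r) r) hb.continuousOn
  obtain ⟨M₂, hM₂⟩ := isCompact_Icc.exists_bound_of_continuousOn (s := Icc (-r) r) hc₀.continuousOn
  obtain ⟨M₃, hM₃⟩ := isCompact_Icc.exists_bound_of_continuousOn (s := Icc (-r) r)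
    hg.continuous.continuousOn
  obtain ⟨M₄, hM₄⟩ := isCompact_Icc.exists_bound_of_continuousOn (s := Icc (-r) r)
    hgc.continuousOn
  set M : ℝ := max (max M₁ M₂) (max M₃ M₄) with hM
  have hsq : ∀ z : ℂ, ‖z‖ ≤ M → ‖z‖ ^ 2 ≤ M ^ 2 := fun z hz =>
    pow_le_pow_left₀ (norm_nonneg _) hz 2
  have hbM : ∀ x ∈ Icc (-r) r, ‖b x‖ ^ 2 ≤ M ^ 2 := fun x hx =>
    hsq _ ((hM₁ x hx).trans ((le_max_left _ _).trans (le_max_left _ _)))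
  have hcM : ∀ x ∈ Icc (-r) r, ‖c₀ x‖ ^ 2 ≤ M ^ 2 := fun x hx =>
    hsq _ ((hM₂ x hx).trans ((le_max_right _ _).trans (le_max_left _ _)))
  have hgM : ∀ x ∈ Icc (-r) r, ‖g x‖ ^ 2 ≤ M ^ 2 := fun x hx =>
    hsq _ ((hM₃ x hx).trans ((le_max_left _ _).trans (le_max_right _ _)))
  have hgM' : ∀ x ∈ Icc (-r) r, ‖deriv g x‖ ^ 2 ≤ M ^ 2 := fun x hx =>
    hsq _ ((hM₄ x hx).trans ((le_max_right _ _).trans (le_max_right _ _)))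
  set K : ℝ := 5 * M ^ 2 + 2 with hKdef
  have hK : 0 ≤ K := by positivity
  set C₁ : ℝ := Real.exp ((K + 1) * (2 * r)) * (K + 5) with hC₁
  have hexp : 1 ≤ Real.exp ((K + 1) * (2 * r)) := Real.one_le_exp (by positivity)
  have hC₁1 : 1 ≤ C₁ := by rw [hC₁]; nlinarith
  have hgr0 : 0 < ‖g r‖ ^ 2 := by positivity
  set C₂ : ℝ := 4 * C₁ / ‖g r‖ ^ 2 with hC₂
  have hC₂0 : 0 < C₂ := by positivity
  set C₃ : ℝ := 3 * C₁ + 3 * M ^ 2 * C₂ with hC₃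
  have hC₃0 : 0 < C₃ := by positivity
  set ε : ℝ := 1 / (4 * r * C₃) with hε
  have hε0 : 0 < ε := by positivity
  refine ⟨8 * r * C₃ + 3, ε, by positivity, hε0, ?_⟩
  intro c hc f φ ψ hf hφ hψ heq
  obtain ⟨hfd, hfd', hfc⟩ := hf.hasDerivAt_deriv_deriv
  have hfc0 := hf.continuous
  have hψc := hψ.continuous
  have hψd : ∀ x, HasDerivAt ψ (deriv ψ x) x := fun x =>
    (hψ.differentiable (by norm_num) x).hasDerivAt
  set v₀ : ℂ := deriv f (-r) - ψ (-r) with hv₀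
  set N := ∫ x in (-r)..r, ‖f x‖ ^ 2 with hN
  set N' := ∫ x in (-r)..r, ‖deriv f x‖ ^ 2 with hN'
  set Φ := ∫ x in (-r)..r, ‖φ x‖ ^ 2 with hΦ
  set Ψ := ∫ x in (-r)..r, ‖ψ x‖ ^ 2 with hΨ
  have hN0 : 0 ≤ N := intervalIntegral.integral_nonneg hrr fun _ _ => by positivity
  have hΦ0 : 0 ≤ Φ := intervalIntegral.integral_nonneg hrr fun _ _ => by positivity
  have hΨ0 : 0 ≤ Ψ := intervalIntegral.integral_nonneg hrr fun _ _ => by positivity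
  set S := ‖f (-r)‖ ^ 2 + ‖f r‖ ^ 2 + Φ + Ψ with hS
  have hS0 : 0 ≤ S := by positivity
  set u : ℝ → ℂ := fun x => f x - v₀ * g x with hu
  set v : ℝ → ℂ := fun x => deriv f x - ψ x - v₀ * deriv g x with hv
  have hud : ∀ x, HasDerivAt u (deriv f x - v₀ * deriv g x) x := fun x =>
    (hfd x).sub ((hgd x).const_mul v₀)
  have hvd : ∀ x, HasDerivAt v (deriv (deriv f) x - deriv ψ x - v₀ * deriv (deriv g) x) x :=
    fun x => ((hfd' x).sub (hψd x)).sub ((hgd' x).const_mul v₀)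
  have hE : ∀ x ∈ Icc (-r) r, ‖u x‖ ^ 2 + ‖v x‖ ^ 2 ≤ C₁ * (S + ε * N) := by
    intro x hx
    have h := norm_sq_add_norm_sq_le_of_deriv_sq_le (K := K)
      (G := fun x => K * ‖ψ x‖ ^ 2 + 5 * ‖φ x‖ ^ 2 + 5 * ε * ‖f x‖ ^ 2)
      (by fun_prop) (fun x => by positivity) hK hud hvd ?_ hx
    · have hintegral : ∫ x in (-r)..r, (K * ‖ψ x‖ ^ 2 + 5 * ‖φ x‖ ^ 2 + 5 * ε * ‖f x‖ ^ 2)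
          = K * Ψ + 5 * Φ + 5 * ε * N := by
        rw [intervalIntegral.integral_add, intervalIntegral.integral_add,
          intervalIntegral.integral_const_mul, intervalIntegral.integral_const_mul,
          intervalIntegral.integral_const_mul]
        all_goals exact Continuous.intervalIntegrable (by fun_prop) _ _
      have hu0 : u (-r) = f (-r) := by simp [hu, hg0]
      have hv0 : v (-r) = 0 := by simp [hv, hg1, hv₀]
      rw [hintegral, hu0, hv0] at h
      refine h.trans ?_
      rw [hC₁, mul_assoc (Real.exp _)]
      apply mul_le_mul_of_nonneg_left _ (Real.exp_pos _).le
      rw [hS]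
      have : 0 ≤ ε * N := by positivity
      have h1 : 0 ≤ ‖f (-r)‖ ^ 2 := by positivity
      have h2 : 0 ≤ ‖f r‖ ^ 2 := by positivity
      simp only [norm_zero]
      nlinarith [mul_nonneg hK this, mul_nonneg hK h1, mul_nonneg hK h2, mul_nonneg hK hΦ0]
    · intro x hx
      have e₁ : deriv f x - v₀ * deriv g x = v x + ψ x := by simp only [hv]; ring
      have e₂ : deriv (deriv f) x - deriv ψ x - v₀ * deriv (deriv g) x
          = φ x - b x * v x - b x * ψ x - c₀ x * u x - (c x - c₀ x) * f x := by
        have h₁ := heq x hx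
        have h₂ := hgeq x hx
        simp only [hu, hv]
        linear_combination h₁ - v₀ * h₂
      rw [e₁, e₂]
      have n₁ := norm_add_sq_le_two_mul (v x) (ψ x)
      have n₂ : ‖φ x - b x * v x - b x * ψ x - c₀ x * u x - (c x - c₀ x) * f x‖
          ≤ ‖φ x‖ + ‖b x‖ * ‖v x‖ + ‖b x‖ * ‖ψ x‖ + ‖c₀ x‖ * ‖u x‖ + ‖c x - c₀ x‖ * ‖f x‖ := by
        simp only [← norm_mul]
        refine (norm_sub_le _ _).trans (add_le_add_left ?_ _)
        refine (norm_sub_le _ _).trans (add_le_add_left ?_ _)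
        refine (norm_sub_le _ _).trans (add_le_add_left ?_ _)
        exact norm_sub_le _ _
      have n₄ := (pow_le_pow_left₀ (norm_nonneg _) n₂ 2).trans (add_five_sq_le _ _ _ _ _)
      simp only [mul_pow] at n₄
      have m₁ := mul_le_mul_of_nonneg_right (hbM x hx) (sq_nonneg ‖v x‖)
      have m₂ := mul_le_mul_of_nonneg_right (hbM x hx) (sq_nonneg ‖ψ x‖)
      have m₃ := mul_le_mul_of_nonneg_right (hcM x hx) (sq_nonneg ‖u x‖)
      have m₄ := mul_le_mul_of_nonneg_right (hc x hx) (sq_nonneg ‖f x‖)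
      rw [hKdef]
      have := sq_nonneg ‖u x‖
      linarith
  set Q := S + ε * N with hQ
  have hQS : S ≤ Q := by rw [hQ]; nlinarith
  have hQ0 : 0 ≤ Q := by positivity
  have hv₀b : ‖v₀‖ ^ 2 ≤ C₂ * Q := by
    have h₁ := hE r (right_mem_Icc.2 hrr)
    have h₂ : v₀ * g r = f r + -u r := by simp only [hu]; ring
    have h₃ := norm_add_sq_le_two_mul (f r) (-u r)
    rw [← h₂, norm_mul, mul_pow, norm_neg] at h₃
    rw [hC₂, div_mul_eq_mul_div, le_div_iff₀ hgr0]
    have h₄ : ‖f r‖ ^ 2 ≤ Q := by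
      refine le_trans ?_ hQS
      rw [hS]
      nlinarith [sq_nonneg ‖f (-r)‖]
    have h₅ : Q ≤ C₁ * Q := le_mul_of_one_le_left hQ0 hC₁1
    have := sq_nonneg ‖v r‖
    linarith
  have hv₀g : ∀ t : ℝ, t ≤ M ^ 2 → ‖v₀‖ ^ 2 * t ≤ M ^ 2 * C₂ * Q := by
    intro t ht
    calc ‖v₀‖ ^ 2 * t ≤ ‖v₀‖ ^ 2 * M ^ 2 := mul_le_mul_of_nonneg_left ht (by positivity)
      _ ≤ C₂ * Q * M ^ 2 := mul_le_mul_of_nonneg_right hv₀b (by positivity)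
      _ = _ := by ring
  have hfp : ∀ x ∈ Icc (-r) r, ‖f x‖ ^ 2 ≤ C₃ * Q := by
    intro x hx
    have h₁ := hE x hx
    have h₂ := norm_add_sq_le_two_mul (u x) (v₀ * g x)
    have h₃ : u x + v₀ * g x = f x := by simp only [hu]; ring
    have h₄ := hv₀g _ (hgM x hx)
    rw [h₃, norm_mul, mul_pow] at h₂
    rw [hC₃]
    have h₅ : 0 ≤ M ^ 2 * C₂ * Q := by positivity
    have := sq_nonneg ‖v x‖
    have := sq_nonneg ‖u x‖
    linarith
  have hfp' : ∀ x ∈ Icc (-r) r, ‖deriv f x‖ ^ 2 ≤ C₃ * Q + 3 * ‖ψ x‖ ^ 2 := by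
    intro x hx
    have h₁ := hE x hx
    have h₂ : ‖deriv f x‖ ≤ ‖v x‖ + ‖v₀‖ * ‖deriv g x‖ + ‖ψ x‖ := by
      have h₃ : v x + v₀ * deriv g x + ψ x = deriv f x := by simp only [hv]; ring
      rw [← h₃, ← norm_mul]
      exact norm_add₃_le
    have h₄ := hv₀g _ (hgM' x hx)
    have h₅ := pow_le_pow_left₀ (norm_nonneg _) h₂ 2
    rw [← mul_pow] at h₄
    rw [hC₃]
    have := sq_nonneg ‖u x‖
    nlinarith [sq_nonneg (‖v x‖ - ‖v₀‖ * ‖deriv g x‖), sq_nonneg (‖v x‖ - ‖ψ x‖),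
      sq_nonneg (‖v₀‖ * ‖deriv g x‖ - ‖ψ x‖)]
  have hNle : N ≤ 2 * r * (C₃ * Q) := by
    have := intervalIntegral.integral_mono_on hrr
      (Continuous.intervalIntegrable (μ := volume) (u := fun x => ‖f x‖ ^ 2) (by fun_prop) _ _)
      (intervalIntegrable_const (μ := volume) (c := C₃ * Q)) hfp
    rw [intervalIntegral.integral_const, smul_eq_mul] at this
    linarith
  have hN'le : N' ≤ 2 * r * (C₃ * Q) + 3 * Ψ := by
    have := intervalIntegral.integral_mono_on hrr
      (Continuous.intervalIntegrable (μ := volume) (u := fun x => ‖deriv f x‖ ^ 2)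
        (by fun_prop) _ _)
      (Continuous.intervalIntegrable (μ := volume) (u := fun x => C₃ * Q + 3 * ‖ψ x‖ ^ 2)
        (by fun_prop) _ _) hfp'
    rw [intervalIntegral.integral_add (by simp)
        (Continuous.intervalIntegrable (by fun_prop) _ _),
      intervalIntegral.integral_const, smul_eq_mul,
      intervalIntegral.integral_const_mul] at this
    linarith
  have hεC : 2 * r * (C₃ * (ε * N)) = N / 2 := by
    rw [hε]; field_simp; ring
  have hΨS : Ψ ≤ S := by
    rw [hS]
    have := sq_nonneg ‖f (-r)‖
    have := sq_nonneg ‖f r‖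
    linarith
  rw [hQ] at hNle hN'le
  nlinarith

/-- A function with prescribed values at `±r`, concentrated in layers of width `l⁻¹` at the
endpoints. -/
lemma exists_boundary_layer {r l : ℝ} (hr : 0 < r) (hl : 1 ≤ l) (p q : ℂ) :
    ∃ w w' : ℝ → ℂ, (∀ x, HasDerivAt w (w' x) x) ∧ Continuous w' ∧ w (-r) = p ∧ w r = q ∧
      ∫ x in (-r)..r, (‖w' x‖ ^ 2 + l ^ 2 * ‖w x‖ ^ 2) ≤
        (1 + (1 + 1 / (2 * r)) ^ 2) * l * (‖p‖ ^ 2 + ‖q‖ ^ 2) := by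
  have hl0 : 0 < l := by linarith
  have hrr : -r ≤ r := by linarith
  set η : ℝ → ℝ := fun x => Real.exp (-(l * (x + r))) * ((r - x) / (2 * r)) with hη
  set η' : ℝ → ℝ := fun x => Real.exp (-(l * (x + r))) * (-l) * ((r - x) / (2 * r))
    + Real.exp (-(l * (x + r))) * (-1 / (2 * r)) with hη'
  have hηd : ∀ x, HasDerivAt η (η' x) x := by
    intro x
    have h : HasDerivAt (fun x : ℝ => -(l * (x + r))) (-l) x := by
      simpa using (((hasDerivAt_id' x).add_const r).const_mul l).fun_neg
    exact h.exp.mul (((hasDerivAt_id' x).const_sub r).div_const (2 * r))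
  have hηc : Continuous η := by simp only [hη]; fun_prop
  have hη'c : Continuous η' := by simp only [hη']; fun_prop
  have hfrac : ∀ x ∈ Icc (-r) r, 0 ≤ (r - x) / (2 * r) ∧ (r - x) / (2 * r) ≤ 1 := by
    intro x hx
    refine ⟨div_nonneg (by linarith [hx.2]) (by linarith), ?_⟩
    rw [div_le_one (by linarith)]
    linarith [hx.1]
  set T : ℝ := 1 + 1 / (2 * r) with hT
  have hT0 : 0 < T := by positivity
  set E : ℝ → ℝ := fun x => Real.exp (-(2 * l * (x + r))) with hE
  have hEc : Continuous E := by simp only [hE]; fun_prop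
  have hEsq : ∀ x, Real.exp (-(l * (x + r))) ^ 2 = E x := by
    intro x
    rw [hE, ← Real.exp_nat_mul]
    congr 1
    push_cast
    ring
  have hpt : ∀ x ∈ Icc (-r) r, η' x ^ 2 + l ^ 2 * η x ^ 2 ≤ (1 + T ^ 2) * l ^ 2 * E x := by
    intro x hx
    obtain ⟨h0, h1⟩ := hfrac x hx
    have e₁ : η' x ^ 2 = E x * (l * ((r - x) / (2 * r)) + 1 / (2 * r)) ^ 2 := by
      rw [← hEsq]; simp only [hη']; ring
    have e₂ : η x ^ 2 = E x * ((r - x) / (2 * r)) ^ 2 := by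
      rw [← hEsq]; simp only [hη]; ring
    have hE0 : 0 ≤ E x := (Real.exp_pos _).le
    have h₂ : l * ((r - x) / (2 * r)) + 1 / (2 * r) ≤ l * T := by
      have : 0 < 1 / (2 * r) := by positivity
      rw [hT]
      nlinarith
    have h₃ := pow_le_pow_left₀ (by positivity) h₂ 2
    have h₄ := pow_le_pow_left₀ h0 h1 2
    rw [e₁, e₂]
    nlinarith [mul_le_mul_of_nonneg_left h₃ hE0,
      mul_le_mul_of_nonneg_left h₄ (mul_nonneg hE0 (sq_nonneg l))]
  have hEint : ∫ x in (-r)..r, E x ≤ 1 / (2 * l) := by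
    have hd : ∀ x, HasDerivAt (fun x => -(1 / (2 * l)) * E x) (E x) x := by
      intro x
      have h : HasDerivAt (fun x : ℝ => -(2 * l * (x + r))) (-(2 * l)) x := by
        simpa using (((hasDerivAt_id' x).add_const r).const_mul (2 * l)).fun_neg
      refine (h.exp.const_mul (-(1 / (2 * l)))).congr_deriv ?_
      change _ = Real.exp (-(2 * l * (x + r)))
      field_simp
    rw [intervalIntegral.integral_eq_sub_of_hasDerivAt (fun x _ => hd x)
      (hEc.intervalIntegrable _ _)]
    have h₁ : E (-r) = 1 := by simp [hE]
    have h₂ : 0 ≤ 1 / (2 * l) * E r := mul_nonneg (by positivity) (Real.exp_pos _).le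
    rw [h₁]
    linarith
  have hEint' : ∫ x in (-r)..r, E (-x) ≤ 1 / (2 * l) := by
    rw [intervalIntegral.integral_comp_neg (f := E)]
    simpa using hEint
  have hηl : η (-r) = 1 := by
    simp only [hη]
    rw [show r - -r = 2 * r by ring, div_self (by positivity)]
    simp
  have hηr : η r = 0 := by simp [hη]
  refine ⟨fun x => p * (η x : ℂ) + q * (η (-x) : ℂ),
    fun x => p * (η' x : ℂ) - q * (η' (-x) : ℂ), ?_, by fun_prop, ?_, ?_, ?_⟩
  · intro x
    have h₁ := ((hηd x).ofReal_comp).const_mul p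
    have h₂ : HasDerivAt (fun x => η (-x)) (-η' (-x)) x := by
      refine ((hηd (-x)).comp x (hasDerivAt_neg x)).congr_deriv ?_
      ring
    have h₃ := (h₂.ofReal_comp).const_mul q
    refine (h₁.add h₃).congr_deriv ?_
    push_cast
    ring
  · simp [hηl, hηr]
  · simp [hηl, hηr]
  · have hb : ∀ x ∈ Icc (-r) r,
        ‖p * (η' x : ℂ) - q * (η' (-x) : ℂ)‖ ^ 2 + l ^ 2 * ‖p * (η x : ℂ) + q * (η (-x) : ℂ)‖ ^ 2
        ≤ 2 * ((1 + T ^ 2) * l ^ 2) * ‖p‖ ^ 2 * E x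
          + 2 * ((1 + T ^ 2) * l ^ 2) * ‖q‖ ^ 2 * E (-x) := by
      intro x hx
      have h₁ := norm_add_sq_le_two_mul (p * (η' x : ℂ)) (-(q * (η' (-x) : ℂ)))
      have h₂ := norm_add_sq_le_two_mul (p * (η x : ℂ)) (q * (η (-x) : ℂ))
      rw [← sub_eq_add_neg] at h₁
      simp only [norm_neg, norm_mul, Complex.norm_real, Real.norm_eq_abs, mul_pow, sq_abs]
        at h₁ h₂
      have h₃ := mul_le_mul_of_nonneg_left (hpt x hx) (sq_nonneg ‖p‖)
      have h₄ := mul_le_mul_of_nonneg_left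
        (hpt (-x) ⟨by linarith [hx.2], by linarith [hx.1]⟩) (sq_nonneg ‖q‖)
      have h₅ := mul_le_mul_of_nonneg_left h₂ (sq_nonneg l)
      linarith
    have hintegral := intervalIntegral.integral_mono_on hrr
      (Continuous.intervalIntegrable (μ := volume) (by fun_prop) _ _)
      (Continuous.intervalIntegrable (μ := volume) (by fun_prop) _ _) hb
    refine hintegral.trans ?_
    rw [intervalIntegral.integral_add (Continuous.intervalIntegrable (by fun_prop) _ _)
        (Continuous.intervalIntegrable (by fun_prop) _ _),
      intervalIntegral.integral_const_mul, intervalIntegral.integral_const_mul]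
    have h₁ := mul_le_mul_of_nonneg_left hEint
      (show 0 ≤ 2 * ((1 + T ^ 2) * l ^ 2) * ‖p‖ ^ 2 by positivity)
    have h₂ := mul_le_mul_of_nonneg_left hEint'
      (show 0 ≤ 2 * ((1 + T ^ 2) * l ^ 2) * ‖q‖ ^ 2 by positivity)
    refine (add_le_add h₁ h₂).trans (le_of_eq ?_)
    field_simp

/-- Coercivity of the energy density, after absorbing the lower order terms. -/
lemma energy_density_lower_bound {α M l X Y W V F P : ℝ} (hα : 0 < α) (hM : 0 ≤ M) (hl : 1 ≤ l)
    (hMl : 8 * M ≤ l) (hMα : 8 * M ≤ α * l) (hX : 0 ≤ X) (hW : 0 ≤ W)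
    (hV : 0 ≤ V) :
    (Y ^ 2 + α * (l ^ 2 * X ^ 2)) / 2 ≤
      Y ^ 2 + α * (l ^ 2 * X ^ 2) - F * X - M * (Y + V) * X - l ^ 2 * M * W * X
        - M * l * (X + W) * X - V * Y - P * Y
      + (4 / α + 8 * M ^ 2 / α + 4) * (V ^ 2 + l ^ 2 * W ^ 2 + (l⁻¹) ^ 2 * F ^ 2 + P ^ 2) := by
  have hl0 : 0 < l := by linarith
  obtain ⟨Z, hZ⟩ : ∃ Z, Z = l * X := ⟨_, rfl⟩
  obtain ⟨U, hU⟩ : ∃ U, U = l * W := ⟨_, rfl⟩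
  obtain ⟨G, hG⟩ : ∃ G, G = l⁻¹ * F := ⟨_, rfl⟩
  obtain ⟨m, hm⟩ : ∃ m, m = M / l := ⟨_, rfl⟩
  have hm0 : 0 ≤ m := by rw [hm]; positivity
  have hm1 : m ≤ 1 / 8 := by rw [hm, div_le_iff₀ hl0]; linarith
  have hm2 : m ≤ α / 8 := by rw [hm, div_le_iff₀ hl0]; linarith
  have hMm : M = m * l := by rw [hm]; field_simp
  have young : ∀ k t : ℝ, k * t * Z ≤ α / 16 * Z ^ 2 + 4 * k ^ 2 / α * t ^ 2 := by
    intro k t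
    have h : α / 16 * Z ^ 2 + 4 * k ^ 2 / α * t ^ 2 - k * t * Z
        = (α * Z - 8 * k * t) ^ 2 / (16 * α) := by
      field_simp
      ring
    have : 0 ≤ (α * Z - 8 * k * t) ^ 2 / (16 * α) := by positivity
    linarith
  have hXZ : X ≤ Z := by rw [hZ]; nlinarith
  have hU0 : 0 ≤ U := by rw [hU]; positivity
  have t₁ : F * X = 1 * G * Z := by rw [hG, hZ]; field_simp
  have t₂ : M * Y * X = m * (Y * Z) := by rw [hMm, hZ]; ring
  have t₃ : M * V * X ≤ M * V * Z := mul_le_mul_of_nonneg_left hXZ (by positivity)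
  have t₄ : l ^ 2 * M * W * X = M * U * Z := by rw [hU, hZ]; ring
  have t₅ : M * l * X * X = m * Z ^ 2 := by rw [hMm, hZ]; ring
  have t₆ : M * l * W * X ≤ M * U * Z := by
    have : M * l * W * X = M * U * X := by rw [hU]; ring
    rw [this]
    exact mul_le_mul_of_nonneg_left hXZ (by positivity)
  have y₁ := young 1 G
  have y₂ := young M V
  have y₃ := young M U
  have y₄ : m * (Y * Z) ≤ 1 / 16 * Y ^ 2 + m / 2 * Z ^ 2 := by
    have : m * (Y * Z) ≤ m * ((Y ^ 2 + Z ^ 2) / 2) :=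
      mul_le_mul_of_nonneg_left (by nlinarith [sq_nonneg (Y - Z)]) hm0
    nlinarith [sq_nonneg Y]
  have y₅ : V * Y ≤ Y ^ 2 / 8 + 2 * V ^ 2 := by nlinarith [sq_nonneg (Y - 4 * V)]
  have y₆ : P * Y ≤ Y ^ 2 / 8 + 2 * P ^ 2 := by nlinarith [sq_nonneg (Y - 4 * P)]
  have y₇ : m * Z ^ 2 ≤ α / 8 * Z ^ 2 := mul_le_mul_of_nonneg_right hm2 (sq_nonneg _)
  have hZ2 : l ^ 2 * X ^ 2 = Z ^ 2 := by rw [hZ]; ring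
  have hU2 : l ^ 2 * W ^ 2 = U ^ 2 := by rw [hU]; ring
  have hG2 : (l⁻¹) ^ 2 * F ^ 2 = G ^ 2 := by rw [hG]; ring
  rw [hZ2, hU2, hG2]
  have e₁ : 4 * (1 : ℝ) ^ 2 / α = 4 / α := by norm_num
  have e₂ : 8 * M ^ 2 / α = 2 * (4 * M ^ 2 / α) := by ring
  rw [e₁] at y₁
  rw [e₂]
  obtain ⟨A, hA⟩ : ∃ A, A = 4 / α := ⟨_, rfl⟩
  obtain ⟨B, hB⟩ : ∃ B, B = 4 * M ^ 2 / α := ⟨_, rfl⟩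
  have hA0 : 0 ≤ A := by rw [hA]; positivity
  have hB0 : 0 ≤ B := by rw [hB]; positivity
  rw [← hA] at y₁ ⊢
  rw [← hB] at y₂ y₃ ⊢
  have := mul_nonneg hA0 (sq_nonneg V)
  have := mul_nonneg hA0 (sq_nonneg U)
  have := mul_nonneg hA0 (sq_nonneg P)
  have := mul_nonneg hB0 (sq_nonneg V)
  have := mul_nonneg hB0 (sq_nonneg G)
  have := mul_nonneg hB0 (sq_nonneg P)
  have := mul_nonneg hα.le (sq_nonneg Z)
  have := sq_nonneg Y
  have := sq_nonneg V
  have := sq_nonneg U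
  have := sq_nonneg G
  have := sq_nonneg P
  linarith

set_option maxHeartbeats 1000000 in
/-- The energy estimate for `f'' + b f' + c f = φ + ψ'` when `c` is close to `-l² A` with `l`
large and `A` positive. -/
lemma dirichlet_bound_of_large {r α M l : ℝ} (hr : 0 < r) (hα : 0 < α) (hM : 0 ≤ M) (hl : 1 ≤ l)
    (hMl : 8 * M ≤ l) (hMα : 8 * M ≤ α * l) {b c : ℝ → ℂ} {A : ℝ → ℝ}
    (hb : ∀ x ∈ Icc (-r) r, ‖b x‖ ≤ M) (hA : ∀ x ∈ Icc (-r) r, α ≤ A x ∧ A x ≤ M)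
    (hc : ∀ x ∈ Icc (-r) r, ‖c x + ((l ^ 2 * A x : ℝ) : ℂ)‖ ≤ M * l)
    {f φ ψ : ℝ → ℂ} (hf : ContDiff ℝ 2 f) (hφ : Continuous φ) (hψ : ContDiff ℝ 1 ψ)
    (heq : ∀ x ∈ Icc (-r) r,
      deriv (deriv f) x + b x * deriv f x + c x * f x = φ x + deriv ψ x) :
    l ^ 2 * (∫ x in (-r)..r, ‖f x‖ ^ 2) + (∫ x in (-r)..r, ‖deriv f x‖ ^ 2) ≤
      (4 * (4 / α + 8 * M ^ 2 / α + 4) * (1 + 1 / α) + 2) * (1 + (1 + 1 / (2 * r)) ^ 2) *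
        (l * (‖f (-r)‖ ^ 2 + ‖f r‖ ^ 2) + (l⁻¹) ^ 2 * (∫ x in (-r)..r, ‖φ x‖ ^ 2)
          + ∫ x in (-r)..r, ‖ψ x‖ ^ 2) := by
  have hrr : -r ≤ r := by linarith
  have hl0 : 0 < l := by linarith
  obtain ⟨hfd, hfd', hfc'⟩ := hf.hasDerivAt_deriv_deriv
  have hfc := hf.continuous
  have hψc := hψ.continuous
  have hψd : ∀ x, HasDerivAt ψ (deriv ψ x) x := fun x =>
    (hψ.differentiable (by norm_num) x).hasDerivAt
  have hψc' : Continuous (deriv ψ) := hψ.continuous_deriv (by norm_num)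
  have hfc'' : Continuous (deriv (deriv f)) :=
    ((contDiff_succ_iff_deriv (n := 1)).1 hf).2.2.continuous_deriv (by norm_num)
  obtain ⟨w, w', hwd, hwc', hwl, hwr, hwint⟩ := exists_boundary_layer hr hl (f (-r)) (f r)
  have hwc : Continuous w := continuous_iff_continuousAt.2 fun x => (hwd x).continuousAt
  set κ : ℝ := 4 / α + 8 * M ^ 2 / α + 4 with hκ
  have hκ0 : 0 < κ := by positivity
  set g : ℝ → ℂ := fun x => f x - w x with hg
  set g' : ℝ → ℂ := fun x => deriv f x - w' x with hg'
  have hgd : ∀ x, HasDerivAt g (g' x) x := fun x => (hfd x).sub (hwd x)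
  have hgc : Continuous g := hfc.sub hwc
  have hgc' : Continuous g' := hfc'.sub hwc'
  set D : ℝ → ℝ := fun x => inner ℝ (g x) (deriv (deriv f) x - deriv ψ x)
    + inner ℝ (g' x) (deriv f x - ψ x) with hD
  have hDc : Continuous D := by
    simp only [hD]
    exact (hgc.inner (hfc''.sub hψc')).add (hgc'.inner (hfc'.sub hψc))
  have hD0 : ∫ x in (-r)..r, D x = 0 := by
    rw [intervalIntegral.integral_eq_sub_of_hasDerivAt
      (f := fun x => inner ℝ (g x) (deriv f x - ψ x))
      (fun x _ => (hgd x).inner ℝ ((hfd' x).sub (hψd x))) (hDc.intervalIntegrable _ _)]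
    simp [hg, hwl, hwr]
  have hlow : ∀ x ∈ Icc (-r) r, (‖g' x‖ ^ 2 + α * (l ^ 2 * ‖g x‖ ^ 2)) / 2 ≤
      D x + κ * (‖w' x‖ ^ 2 + l ^ 2 * ‖w x‖ ^ 2 + (l⁻¹) ^ 2 * ‖φ x‖ ^ 2 + ‖ψ x‖ ^ 2) := by
    intro x hx
    have hen := energy_density_lower_bound (X := ‖g x‖) (Y := ‖g' x‖) (W := ‖w x‖) (V := ‖w' x‖)
      (F := ‖φ x‖) (P := ‖ψ x‖) hα hM hl hMl hMα (norm_nonneg _) (norm_nonneg _) (norm_nonneg _)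
    refine hen.trans ?_
    rw [hκ]
    apply add_le_add_left
    have hA' := hA x hx
    have hA0 : 0 ≤ A x := hα.le.trans hA'.1
    set k : ℝ := l ^ 2 * A x with hk
    have hk0 : 0 ≤ k := by positivity
    have e₁ : deriv (deriv f) x - deriv ψ x =
        φ x - b x * (g' x + w' x) - (c x + (k : ℂ)) * (g x + w x) + k • g x + k • w x := by
      simp only [hg, hg', Complex.real_smul]
      linear_combination heq x hx
    have e₂ : deriv f x - ψ x = g' x + w' x - ψ x := by simp only [hg']; ring
    simp only [hD]
    rw [e₁, e₂]
    simp only [inner_add_right, inner_sub_right, real_inner_smul_right, real_inner_self_eq_norm_sq,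
      mul_add]
    have i₁ := neg_le_of_abs_le (abs_real_inner_le_norm (g x) (φ x))
    have i₂ : inner ℝ (g x) (b x * g' x) ≤ ‖g x‖ * (M * ‖g' x‖) := by
      refine (real_inner_le_norm _ _).trans ?_
      rw [norm_mul]
      gcongr
      exact hb x hx
    have i₃ : inner ℝ (g x) (b x * w' x) ≤ ‖g x‖ * (M * ‖w' x‖) := by
      refine (real_inner_le_norm _ _).trans ?_
      rw [norm_mul]
      gcongr
      exact hb x hx
    have i₄ : inner ℝ (g x) ((c x + (k : ℂ)) * g x) ≤ ‖g x‖ * (M * l * ‖g x‖) := by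
      refine (real_inner_le_norm _ _).trans ?_
      rw [norm_mul]
      gcongr
      exact hc x hx
    have i₅ : inner ℝ (g x) ((c x + (k : ℂ)) * w x) ≤ ‖g x‖ * (M * l * ‖w x‖) := by
      refine (real_inner_le_norm _ _).trans ?_
      rw [norm_mul]
      gcongr
      exact hc x hx
    have i₆ : α * (l ^ 2 * ‖g x‖ ^ 2) ≤ k * ‖g x‖ ^ 2 := by
      have := mul_le_mul_of_nonneg_right hA'.1 (show 0 ≤ l ^ 2 * ‖g x‖ ^ 2 by positivity)
      rw [hk]
      linarith
    have i₇ : -(l ^ 2 * M * ‖w x‖ * ‖g x‖) ≤ k * inner ℝ (g x) (w x) := by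
      have h₁ := neg_le_of_abs_le (abs_real_inner_le_norm (g x) (w x))
      have h₂ := mul_le_mul_of_nonneg_left h₁ hk0
      have h₃ := mul_le_mul_of_nonneg_right hA'.2
        (show 0 ≤ l ^ 2 * (‖g x‖ * ‖w x‖) by positivity)
      rw [hk] at h₂ ⊢
      linarith
    have i₈ := neg_le_of_abs_le (abs_real_inner_le_norm (g' x) (w' x))
    have i₉ := real_inner_le_norm (g' x) (ψ x)
    linarith
  set Φ := ∫ x in (-r)..r, ‖φ x‖ ^ 2 with hΦ
  set Ψ := ∫ x in (-r)..r, ‖ψ x‖ ^ 2 with hΨ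
  have hΦ0 : 0 ≤ Φ := intervalIntegral.integral_nonneg hrr fun _ _ => by positivity
  have hΨ0 : 0 ≤ Ψ := intervalIntegral.integral_nonneg hrr fun _ _ => by positivity
  set ω := ∫ x in (-r)..r, (‖w' x‖ ^ 2 + l ^ 2 * ‖w x‖ ^ 2) with hω
  have hpt : ∀ x ∈ Icc (-r) r, l ^ 2 * ‖f x‖ ^ 2 + ‖deriv f x‖ ^ 2 ≤
      4 * (1 + 1 / α) * D x + (4 * κ * (1 + 1 / α) + 2) * (‖w' x‖ ^ 2 + l ^ 2 * ‖w x‖ ^ 2)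
        + 4 * κ * (1 + 1 / α) * ((l⁻¹) ^ 2 * ‖φ x‖ ^ 2) + 4 * κ * (1 + 1 / α) * ‖ψ x‖ ^ 2 := by
    intro x hx
    have h₁ := hlow x hx
    have h₂ := norm_add_sq_le_two_mul (g x) (w x)
    have h₃ := norm_add_sq_le_two_mul (g' x) (w' x)
    rw [show g x + w x = f x by simp [hg]] at h₂
    rw [show g' x + w' x = deriv f x by simp [hg']] at h₃
    have h₄ := mul_le_mul_of_nonneg_left h₂ (sq_nonneg l)
    have h₅ := mul_le_mul_of_nonneg_left h₁ (show 0 ≤ 4 * (1 + 1 / α) by positivity)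
    have h₆ : 4 * (1 + 1 / α) * ((‖g' x‖ ^ 2 + α * (l ^ 2 * ‖g x‖ ^ 2)) / 2) =
        2 * ‖g' x‖ ^ 2 + 2 * (l ^ 2 * ‖g x‖ ^ 2) + 2 * α * (l ^ 2 * ‖g x‖ ^ 2)
          + 2 * (1 / α) * ‖g' x‖ ^ 2 := by
      field_simp
      ring
    have h₇ : 0 ≤ 2 * α * (l ^ 2 * ‖g x‖ ^ 2) := by positivity
    have h₈ : 0 ≤ 2 * (1 / α) * ‖g' x‖ ^ 2 := by positivity
    linarith
  have hintegral := intervalIntegral.integral_mono_on hrr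
    (Continuous.intervalIntegrable (μ := volume) (by fun_prop) _ _)
    (Continuous.intervalIntegrable (μ := volume) (by fun_prop) _ _) hpt
  rw [intervalIntegral.integral_add (Continuous.intervalIntegrable (by fun_prop) _ _)
      (Continuous.intervalIntegrable (by fun_prop) _ _),
    intervalIntegral.integral_add (Continuous.intervalIntegrable (by fun_prop) _ _)
      (Continuous.intervalIntegrable (by fun_prop) _ _),
    intervalIntegral.integral_add (Continuous.intervalIntegrable (by fun_prop) _ _)
      (Continuous.intervalIntegrable (by fun_prop) _ _),
    intervalIntegral.integral_add (Continuous.intervalIntegrable (by fun_prop) _ _)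
      (Continuous.intervalIntegrable (by fun_prop) _ _),
    intervalIntegral.integral_const_mul, intervalIntegral.integral_const_mul,
    intervalIntegral.integral_const_mul, intervalIntegral.integral_const_mul,
    intervalIntegral.integral_const_mul, intervalIntegral.integral_const_mul, hD0,
    ← hω, ← hΦ, ← hΨ] at hintegral
  refine hintegral.trans ?_
  set m : ℝ := 4 * κ * (1 + 1 / α) with hm
  have hm0 : 0 ≤ m := by positivity
  set B : ℝ := 1 + (1 + 1 / (2 * r)) ^ 2 with hB
  have hB1 : 1 ≤ B := by rw [hB]; nlinarith [sq_nonneg (1 + 1 / (2 * r))]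
  have h₁ := mul_le_mul_of_nonneg_left hwint (show 0 ≤ m + 2 by positivity)
  have hmB : m ≤ (m + 2) * B := by nlinarith
  have hl2 : 0 ≤ (l⁻¹) ^ 2 * Φ := by positivity
  have h₂ := mul_le_mul_of_nonneg_right hmB hl2
  have h₃ := mul_le_mul_of_nonneg_right hmB hΨ0
  linarith

/-- Uniform solvability of the Dirichlet problem along a bounded part of a vertical line, for a
coefficient that is quadratic in the spectral parameter. -/
lemma exists_dirichlet_bound_of_abs_le {r s : ℝ} (Λ : ℝ) (hr : 0 < r) {b c₂ c₁ c₀ : ℝ → ℂ}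
    (hb : Continuous b) (hc₂ : Continuous c₂) (hc₁ : Continuous c₁) (hc₀ : Continuous c₀)
    (hnd : ∀ γ : ℝ, ∀ g : ℝ → ℂ, ContDiff ℝ 2 g →
      (∀ x ∈ Icc (-r) r, deriv (deriv g) x + b x * deriv g x
        + (Complex.mk s γ ^ 2 * c₂ x + Complex.mk s γ * c₁ x + c₀ x) * g x = 0) →
      g (-r) = 0 → deriv g (-r) = 1 → g r ≠ 0) :
    ∃ K : ℝ, 0 < K ∧ ∀ γ ∈ Icc (-Λ) Λ, ∀ f φ ψ : ℝ → ℂ,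
      ContDiff ℝ 2 f → Continuous φ → ContDiff ℝ 1 ψ →
      (∀ x ∈ Icc (-r) r, deriv (deriv f) x + b x * deriv f x
        + (Complex.mk s γ ^ 2 * c₂ x + Complex.mk s γ * c₁ x + c₀ x) * f x
          = φ x + deriv ψ x) →
      (∫ x in (-r)..r, ‖f x‖ ^ 2) + (∫ x in (-r)..r, ‖deriv f x‖ ^ 2) ≤
        K * (‖f (-r)‖ ^ 2 + ‖f r‖ ^ 2 + (∫ x in (-r)..r, ‖φ x‖ ^ 2)
          + ∫ x in (-r)..r, ‖ψ x‖ ^ 2) := by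
  have hrr : -r ≤ r := by linarith
  have hnn : ∀ f φ ψ : ℝ → ℂ, 0 ≤ ‖f (-r)‖ ^ 2 + ‖f r‖ ^ 2 + (∫ x in (-r)..r, ‖φ x‖ ^ 2)
      + ∫ x in (-r)..r, ‖ψ x‖ ^ 2 := by
    intro f φ ψ
    have h₁ : 0 ≤ ∫ x in (-r)..r, ‖φ x‖ ^ 2 :=
      intervalIntegral.integral_nonneg hrr fun _ _ => by positivity
    have h₂ : 0 ≤ ∫ x in (-r)..r, ‖ψ x‖ ^ 2 :=
      intervalIntegral.integral_nonneg hrr fun _ _ => by positivity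
    positivity
  refine isCompact_Icc.induction_on (p := fun S : Set ℝ => ∃ K : ℝ, 0 < K ∧ ∀ γ ∈ S,
      ∀ f φ ψ : ℝ → ℂ, ContDiff ℝ 2 f → Continuous φ → ContDiff ℝ 1 ψ →
      (∀ x ∈ Icc (-r) r, deriv (deriv f) x + b x * deriv f x
        + (Complex.mk s γ ^ 2 * c₂ x + Complex.mk s γ * c₁ x + c₀ x) * f x
          = φ x + deriv ψ x) →
      (∫ x in (-r)..r, ‖f x‖ ^ 2) + (∫ x in (-r)..r, ‖deriv f x‖ ^ 2) ≤
        K * (‖f (-r)‖ ^ 2 + ‖f r‖ ^ 2 + (∫ x in (-r)..r, ‖φ x‖ ^ 2)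
          + ∫ x in (-r)..r, ‖ψ x‖ ^ 2)) ?_ ?_ ?_ ?_
  · exact ⟨1, one_pos, fun γ hγ => absurd hγ (notMem_empty γ)⟩
  · rintro S T hST ⟨K, hK, h⟩
    exact ⟨K, hK, fun γ hγ => h γ (hST hγ)⟩
  · rintro S T ⟨K, hK, h⟩ ⟨K', hK', h'⟩
    refine ⟨max K K', lt_max_of_lt_left hK, ?_⟩
    rintro γ (hγ | hγ) f φ ψ hf hφ hψ heq
    · exact (h γ hγ f φ ψ hf hφ hψ heq).trans
        (mul_le_mul_of_nonneg_right (le_max_left _ _) (hnn f φ ψ))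
    · exact (h' γ hγ f φ ψ hf hφ hψ heq).trans
        (mul_le_mul_of_nonneg_right (le_max_right _ _) (hnn f φ ψ))
  · intro γ₀ _
    set c : ℝ → ℝ → ℂ := fun γ x =>
      Complex.mk s γ ^ 2 * c₂ x + Complex.mk s γ * c₁ x + c₀ x with hc
    have hcc : ∀ γ, Continuous (c γ) := fun γ => by simp only [hc]; fun_prop
    obtain ⟨g, hg, hgeq, hg0, hg1⟩ := exists_contDiff_two_linear_ode hr hb (hcc γ₀)
    obtain ⟨K, ε, hK, hε, h⟩ := exists_dirichlet_bound_of_near hr hb (hcc γ₀) hg hgeq hg0 hg1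
      (hnd γ₀ g hg hgeq hg0 hg1)
    obtain ⟨M₁, hM₁⟩ := isCompact_Icc.exists_bound_of_continuousOn (s := Icc (-r) r)
      hc₂.continuousOn
    obtain ⟨M₂, hM₂⟩ := isCompact_Icc.exists_bound_of_continuousOn (s := Icc (-r) r)
      hc₁.continuousOn
    set δ : ℝ → ℝ := fun γ => (‖Complex.mk s γ ^ 2 - Complex.mk s γ₀ ^ 2‖ * M₁
      + ‖Complex.mk s γ - Complex.mk s γ₀‖ * M₂) ^ 2 with hδ
    have hmk : Continuous fun γ : ℝ => Complex.mk s γ := by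
      have : (fun γ : ℝ => Complex.mk s γ) = fun γ : ℝ => (s : ℂ) + (γ : ℂ) * Complex.I := by
        funext γ
        exact Complex.mk_eq_add_mul_I s γ
      rw [this]
      fun_prop
    have hδc : Continuous δ := by simp only [hδ]; fun_prop
    have hδ0 : δ γ₀ = 0 := by simp [hδ]
    have hnear : {γ | δ γ < ε} ∈ nhds γ₀ :=
      (isOpen_lt hδc continuous_const).mem_nhds (by simpa [hδ0] using hε)
    refine ⟨{γ | δ γ < ε}, mem_nhdsWithin_of_mem_nhds hnear, K, hK, ?_⟩
    intro γ hγ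
    refine h (c γ) fun x hx => le_trans ?_ (le_of_lt hγ)
    apply pow_le_pow_left₀ (norm_nonneg _)
    have e : c γ x - c γ₀ x = (Complex.mk s γ ^ 2 - Complex.mk s γ₀ ^ 2) * c₂ x
        + (Complex.mk s γ - Complex.mk s γ₀) * c₁ x := by simp only [hc]; ring
    rw [e]
    refine (norm_add_le _ _).trans ?_
    rw [norm_mul, norm_mul]
    exact add_le_add (mul_le_mul_of_nonneg_left (hM₁ x hx) (norm_nonneg _))
      (mul_le_mul_of_nonneg_left (hM₂ x hx) (norm_nonneg _))

lemma sq_add_sq_add_sq_le {x y z : ℝ} (hx : 0 ≤ x) (hy : 0 ≤ y) (hz : 0 ≤ z) :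
    x ^ 2 + y ^ 2 + z ^ 2 ≤ (x + y + z) ^ 2 := by
  nlinarith [mul_nonneg hx hy, mul_nonneg hx hz, mul_nonneg hy hz]

set_option maxHeartbeats 1000000 in
/-- Passage from a quadratic estimate at scale `l` to a linear one at a comparable scale `J`. -/
lemma sqrt_add_inv_mul_sqrt_le {l J T K N N' Φ Ψ p q : ℝ} (hl : 1 ≤ l) (hlJ : l ≤ J)
    (hJT : J ≤ T * l) (hK : 0 ≤ K) (hN : 0 ≤ N) (hN' : 0 ≤ N') (hΦ : 0 ≤ Φ) (hΨ : 0 ≤ Ψ)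
    (hp : 0 ≤ p) (hq : 0 ≤ q)
    (h : l ^ 2 * N + N' ≤ K * (l * (p ^ 2 + q ^ 2) + (l⁻¹) ^ 2 * Φ + Ψ)) :
    √N + J⁻¹ * √N' ≤ √(2 * K) * T ^ 2 * J ^ (-(1 : ℝ) / 2) * (p + q)
      + √(2 * K) * T ^ 2 * (J⁻¹) ^ 2 * √Φ + √(2 * K) * T ^ 2 * J⁻¹ * √Ψ := by
  have hl0 : 0 < l := by linarith
  have hJ0 : 0 < J := by linarith
  have hT1 : 1 ≤ T := by
    by_contra hT
    push Not at hT
    nlinarith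
  set i : ℝ := J⁻¹ with hi
  set k : ℝ := l⁻¹ with hk
  have hi0 : 0 < i := inv_pos.2 hJ0
  have hk0 : 0 < k := inv_pos.2 hl0
  have hik : i ≤ k := inv_anti₀ hl0 hlJ
  have hkT : k ≤ T * i := by
    rw [hk, hi, ← div_eq_mul_inv, inv_eq_one_div, div_le_div_iff₀ hl0 hJ0]
    linarith
  have hlk : l * k = 1 := mul_inv_cancel₀ hl0.ne'
  set ρ : ℝ := J ^ (-(1 : ℝ) / 2) with hρ
  have hρ0 : 0 ≤ ρ := by positivity
  have hρ2 : ρ ^ 2 = i := by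
    rw [hρ, ← Real.rpow_natCast, ← Real.rpow_mul hJ0.le, hi, ← Real.rpow_neg_one]
    norm_num
  have hNk : N + k ^ 2 * N' ≤ K * (k * (p ^ 2 + q ^ 2) + k ^ 4 * Φ + k ^ 2 * Ψ) := by
    have h₁ := mul_le_mul_of_nonneg_left h (sq_nonneg k)
    have e₁ : k ^ 2 * (l ^ 2 * N + N') = N + k ^ 2 * N' := by
      linear_combination (N * (l * k + 1)) * hlk
    have e₂ : k ^ 2 * (K * (l * (p ^ 2 + q ^ 2) + k ^ 2 * Φ + Ψ)) =
        K * (k * (p ^ 2 + q ^ 2) + k ^ 4 * Φ + k ^ 2 * Ψ) := by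
      linear_combination (K * k * (p ^ 2 + q ^ 2)) * hlk
    rwa [e₁, e₂] at h₁
  have hTi : 0 ≤ T * i := by positivity
  have hT2 : 1 ≤ T ^ 2 := one_le_pow₀ hT1
  have hT4 : T ≤ T ^ 4 := le_self_pow₀ hT1 (by norm_num)
  have hT24 : T ^ 2 ≤ T ^ 4 := pow_le_pow_right₀ hT1 (by norm_num)
  have k₁ : k ≤ T ^ 4 * i := hkT.trans (mul_le_mul_of_nonneg_right hT4 hi0.le)
  have k₂ : k ^ 2 ≤ T ^ 4 * i ^ 2 := by
    calc k ^ 2 ≤ (T * i) ^ 2 := pow_le_pow_left₀ hk0.le hkT 2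
      _ = T ^ 2 * i ^ 2 := by ring
      _ ≤ _ := mul_le_mul_of_nonneg_right hT24 (by positivity)
  have k₄ : k ^ 4 ≤ T ^ 4 * i ^ 4 := by
    calc k ^ 4 ≤ (T * i) ^ 4 := pow_le_pow_left₀ hk0.le hkT 4
      _ = _ := by ring
  have hmain : N + i ^ 2 * N' ≤ K * T ^ 4 * (i * (p + q) ^ 2 + i ^ 4 * Φ + i ^ 2 * Ψ) := by
    have h₁ : i ^ 2 * N' ≤ k ^ 2 * N' :=
      mul_le_mul_of_nonneg_right (pow_le_pow_left₀ hi0.le hik 2) hN'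
    have h₂ : p ^ 2 + q ^ 2 ≤ (p + q) ^ 2 := by nlinarith [mul_nonneg hp hq]
    have h₃ : k * (p ^ 2 + q ^ 2) ≤ T ^ 4 * i * (p + q) ^ 2 :=
      mul_le_mul k₁ h₂ (by positivity) (by positivity)
    have h₄ := mul_le_mul_of_nonneg_right k₄ hΦ
    have h₅ := mul_le_mul_of_nonneg_right k₂ hΨ
    have h₆ := mul_le_mul_of_nonneg_left (add_le_add (add_le_add h₃ h₄) h₅) hK
    linarith
  have hle : (√N + i * √N') ^ 2 ≤
      (√(2 * K) * T ^ 2 * (ρ * (p + q) + i ^ 2 * √Φ + i * √Ψ)) ^ 2 := by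
    have s₁ := Real.sq_sqrt hN
    have s₂ := Real.sq_sqrt hN'
    have s₃ := Real.sq_sqrt hΦ
    have s₄ := Real.sq_sqrt hΨ
    have s₅ := Real.sq_sqrt (show 0 ≤ 2 * K by positivity)
    calc (√N + i * √N') ^ 2 ≤ 2 * (√N ^ 2 + i ^ 2 * √N' ^ 2) := by
          rw [← mul_pow]
          exact add_sq_le
      _ = 2 * (N + i ^ 2 * N') := by rw [s₁, s₂]
      _ ≤ 2 * (K * T ^ 4 * (i * (p + q) ^ 2 + i ^ 4 * Φ + i ^ 2 * Ψ)) := by linarith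
      _ = 2 * K * T ^ 4 * ((ρ * (p + q)) ^ 2 + (i ^ 2 * √Φ) ^ 2 + (i * √Ψ) ^ 2) := by
          rw [mul_pow, mul_pow, mul_pow, s₃, s₄, hρ2]; ring
      _ ≤ 2 * K * T ^ 4 * (ρ * (p + q) + i ^ 2 * √Φ + i * √Ψ) ^ 2 := by
          apply mul_le_mul_of_nonneg_left _ (by positivity)
          have a₁ : 0 ≤ ρ * (p + q) := by positivity
          have a₂ : 0 ≤ i ^ 2 * √Φ := by positivity
          have a₃ : 0 ≤ i * √Ψ := by positivity
          exact sq_add_sq_add_sq_le a₁ a₂ a₃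
      _ = _ := by
          rw [mul_pow (√(2 * K) * T ^ 2), mul_pow (√(2 * K)), s₅]; ring
  have := le_of_sq_le_sq hle (by positivity)
  linarith

lemma L2_eq_sqrt_intervalIntegral {r : ℝ} (hr : 0 < r) (f : ℝ → ℂ) :
    L2 f (Icc (-r) r) = √(∫ x in (-r)..r, ‖f x‖ ^ 2) := by
  rw [L2, Real.sqrt_eq_rpow, integral_Icc_eq_integral_Ioc,
    intervalIntegral.integral_of_le (by linarith)]

/-- The coefficient of `Hop` multiplying the function, as a polynomial in `ζ`. -/
lemma Hop_eq (a : ℝ → ℝ) (β₁ β₂ β₃ : ℝ → ℂ) (ζ : ℂ) (f : ℝ → ℂ) (x : ℝ) :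
    Hop a β₁ β₂ β₃ ζ f x = deriv (deriv f) x + (β₁ x + β₂ x) * deriv f x
      + (ζ ^ 2 * ((a x ^ 2 : ℝ) : ℂ)
        + ζ * (Complex.I * ((a x : ℂ) * (β₁ x - β₂ x) - ((deriv a x : ℝ) : ℂ))) + β₃ x) * f x := by
  rw [Hop]
  push_cast
  ring

lemma abs_im_le_sqrt_one_add_norm_sq (z : ℂ) : |z.im| ≤ √(1 + ‖z‖ ^ 2) := by
  apply Real.le_sqrt_of_sq_le
  rw [Complex.sq_norm, Complex.normSq_apply, sq_abs]
  nlinarith [sq_nonneg z.re]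

/-- Away from `|γ| < 1`, the coefficient of `Hop` multiplying the function differs from
`-γ² A` by a term that is linear in `|γ|`. -/
lemma norm_quadratic_add_sq_le {s γ A M₁ M₂ M₃ : ℝ} {c₁ c₀ : ℂ} (hγ : 1 ≤ |γ|)
    (hA : ‖(A : ℂ)‖ ≤ M₁) (hc₁ : ‖c₁‖ ≤ M₂) (hc₀ : ‖c₀‖ ≤ M₃) :
    ‖Complex.mk s γ ^ 2 * A + Complex.mk s γ * c₁ + c₀ + ((|γ| ^ 2 * A : ℝ) : ℂ)‖
      ≤ ((s ^ 2 + 2 * |s|) * M₁ + (|s| + 1) * M₂ + M₃) * |γ| := by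
  have e : Complex.mk s γ ^ 2 * A + Complex.mk s γ * c₁ + c₀ + ((|γ| ^ 2 * A : ℝ) : ℂ)
      = ((s : ℂ) ^ 2 + 2 * (s : ℂ) * (γ : ℂ) * Complex.I) * A + Complex.mk s γ * c₁ + c₀ := by
    rw [sq_abs, Complex.mk_eq_add_mul_I]
    push_cast
    linear_combination ((γ : ℂ) ^ 2 * (A : ℂ)) * Complex.I_sq
  rw [e]
  have n₁ : ‖(s : ℂ) ^ 2 + 2 * (s : ℂ) * (γ : ℂ) * Complex.I‖ ≤ (s ^ 2 + 2 * |s|) * |γ| := by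
    refine (norm_add_le _ _).trans ?_
    simp only [norm_mul, norm_pow, Complex.norm_real, Complex.norm_I, Real.norm_eq_abs,
      sq_abs, Complex.norm_ofNat, mul_one]
    linarith [le_mul_of_one_le_right (sq_nonneg s) hγ]
  have n₂ : ‖Complex.mk s γ‖ ≤ (|s| + 1) * |γ| := by
    refine (Complex.norm_le_abs_re_add_abs_im _).trans ?_
    simp only
    linarith [le_mul_of_one_le_right (abs_nonneg s) hγ]
  have n₃ := mul_le_mul n₁ hA (norm_nonneg _) (by positivity)
  have n₄ := mul_le_mul n₂ hc₁ (norm_nonneg _) (by positivity)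
  have n₅ : ‖c₀‖ ≤ M₃ * |γ| :=
    hc₀.trans (le_mul_of_one_le_right ((norm_nonneg _).trans hc₀) hγ)
  have n₆ := norm_add₃_le (a := ((s : ℂ) ^ 2 + 2 * (s : ℂ) * (γ : ℂ) * Complex.I) * A)
    (b := Complex.mk s γ * c₁) (c := c₀)
  rw [norm_mul, norm_mul] at n₆
  linarith

/-- The a priori estimate of Lemma 4: if no element of `𝔖` has real part `s`, then
solutions of `H_ζ f = φ + ψ'` on `I`, `ζ = s + iγ`, obey a uniform estimate. -/
theorem lemma4_estimate (r : ℝ) (hr : 0 < r) (a : ℝ → ℝ) (ha : ContDiff ℝ (⊤ : ℕ∞) a)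
    (ha0 : ∀ x ∈ Icc (-r) r, a x ≠ 0)
    (β₁ β₂ β₃ : ℝ → ℂ) (hβ₁ : ContDiff ℝ (⊤ : ℕ∞) β₁) (hβ₂ : ContDiff ℝ (⊤ : ℕ∞) β₂)
    (hβ₃ : ContDiff ℝ (⊤ : ℕ∞) β₃)
    (s : ℝ) (hs : ∀ ζ ∈ frakS r a β₁ β₂ β₃, ζ.re ≠ s) :
    ∃ C : ℝ, ∀ γ : ℝ, ∀ f φ ψ : ℝ → ℂ,
      ContDiff ℝ (⊤ : ℕ∞) f → ContDiff ℝ (⊤ : ℕ∞) φ → ContDiff ℝ (⊤ : ℕ∞) ψ →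
      (∀ x ∈ Icc (-r) r,
        Hop a β₁ β₂ β₃ (Complex.mk s γ) f x = φ x + deriv ψ x) →
      L2 f (Icc (-r) r)
        + (Real.sqrt (1 + ‖(Complex.mk s γ)‖ ^ 2))⁻¹ * L2 (deriv f) (Icc (-r) r)
      ≤ C * (Real.sqrt (1 + ‖(Complex.mk s γ)‖ ^ 2)) ^ (-(1 : ℝ)/2) * (‖f (-r)‖ + ‖f r‖)
        + C * ((Real.sqrt (1 + ‖(Complex.mk s γ)‖ ^ 2))⁻¹) ^ 2 * L2 φ (Icc (-r) r)
        + C * (Real.sqrt (1 + ‖(Complex.mk s γ)‖ ^ 2))⁻¹ * L2 ψ (Icc (-r) r) := by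
  have hrr : -r ≤ r := by linarith
  have hne : (Icc (-r) r).Nonempty := nonempty_Icc.2 hrr
  have hac : Continuous a := ha.continuous
  have hac' : Continuous (deriv a) := ha.continuous_deriv (by simp)
  have hβ₁c := hβ₁.continuous
  have hβ₂c := hβ₂.continuous
  set b : ℝ → ℂ := fun x => β₁ x + β₂ x with hb
  set c₂ : ℝ → ℂ := fun x => ((a x ^ 2 : ℝ) : ℂ) with hc₂
  set c₁ : ℝ → ℂ := fun x => Complex.I *
    ((a x : ℂ) * (β₁ x - β₂ x) - ((deriv a x : ℝ) : ℂ)) with hc₁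
  have hbc : Continuous b := by simp only [hb]; fun_prop
  have hc₂c : Continuous c₂ := by simp only [hc₂]; fun_prop
  have hc₁c : Continuous c₁ := by simp only [hc₁]; fun_prop
  have hnn : ∀ f : ℝ → ℂ, 0 ≤ ∫ x in (-r)..r, ‖f x‖ ^ 2 := fun f =>
    intervalIntegral.integral_nonneg hrr fun _ _ => by positivity
  -- bounds on the coefficients
  obtain ⟨x₀, hx₀, hmin⟩ := isCompact_Icc.exists_isMinOn hne
    (show ContinuousOn (fun x => a x ^ 2) (Icc (-r) r) by fun_prop)
  set α : ℝ := a x₀ ^ 2 with hα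
  have hα0 : 0 < α := by have := ha0 x₀ hx₀; positivity
  obtain ⟨M₀, hM₀⟩ := isCompact_Icc.exists_bound_of_continuousOn (s := Icc (-r) r)
    hbc.continuousOn
  obtain ⟨M₁, hM₁⟩ := isCompact_Icc.exists_bound_of_continuousOn (s := Icc (-r) r)
    hc₂c.continuousOn
  obtain ⟨M₂, hM₂⟩ := isCompact_Icc.exists_bound_of_continuousOn (s := Icc (-r) r)
    hc₁c.continuousOn
  obtain ⟨M₃, hM₃⟩ := isCompact_Icc.exists_bound_of_continuousOn (s := Icc (-r) r)
    hβ₃.continuous.continuousOn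
  have hM₀0 := (norm_nonneg _).trans (hM₀ x₀ hx₀)
  have hM₁0 := (norm_nonneg _).trans (hM₁ x₀ hx₀)
  have hM₂0 := (norm_nonneg _).trans (hM₂ x₀ hx₀)
  have hM₃0 := (norm_nonneg _).trans (hM₃ x₀ hx₀)
  set M : ℝ := M₀ + M₁ + (s ^ 2 + 2 * |s|) * M₁ + (|s| + 1) * M₂ + M₃ with hM
  have hp₁ : 0 ≤ (s ^ 2 + 2 * |s|) * M₁ := by positivity
  have hp₂ : 0 ≤ (|s| + 1) * M₂ := by positivity
  have hM0 : 0 ≤ M := by positivity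
  set Λ : ℝ := 1 + 8 * M + 8 * M / α with hΛ
  have hMα0 : 0 ≤ 8 * M / α := by positivity
  have hΛ1 : 1 ≤ Λ := by linarith
  -- the bounded range of `γ`
  obtain ⟨K₁, hK₁, hlow⟩ := exists_dirichlet_bound_of_abs_le (s := s) Λ hr hbc hc₂c hc₁c
    hβ₃.continuous (by
      intro γ g hg hgeq hg0 hg1 hgr
      refine hs (Complex.mk s γ) ⟨g, hg, ?_, fun x hx => ?_, hg0, hgr⟩ rfl
      · by_contra! hzero
        have h₁ : HasDerivWithinAt g 0 (Icc (-r) r) (-r) :=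
          (hasDerivWithinAt_const (-r) (Icc (-r) r) (0 : ℂ)).congr hzero hg0
        have h₂ : HasDerivWithinAt g (deriv g (-r)) (Icc (-r) r) (-r) :=
          (hg.differentiable (by norm_num) (-r)).hasDerivAt.hasDerivWithinAt
        have h₃ := (uniqueDiffOn_Icc (by linarith) (-r)
          (left_mem_Icc.2 hrr)).eq_deriv _ h₁ h₂
        rw [hg1] at h₃
        exact zero_ne_one h₃
      · rw [Hop_eq]
        exact hgeq x hx)
  set K₂ : ℝ := (4 * (4 / α + 8 * M ^ 2 / α + 4) * (1 + 1 / α) + 2)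
    * (1 + (1 + 1 / (2 * r)) ^ 2) with hK₂
  have hK₂0 : 0 ≤ K₂ := by positivity
  set T₁ : ℝ := 1 + |s| + Λ with hT₁
  set T₂ : ℝ := 2 + |s| with hT₂
  set C₁ : ℝ := √(2 * K₁) * T₁ ^ 2 with hC₁
  set C₂ : ℝ := √(2 * K₂) * T₂ ^ 2 with hC₂
  refine ⟨max C₁ C₂, ?_⟩
  intro γ f φ ψ hf hφ hψ heq
  have hf2 : ContDiff ℝ 2 f := hf.of_le (WithTop.coe_le_coe.2 le_top)
  have hψ1 : ContDiff ℝ 1 ψ := hψ.of_le (by exact_mod_cast le_top)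
  simp only [L2_eq_sqrt_intervalIntegral hr]
  have heq' : ∀ x ∈ Icc (-r) r, deriv (deriv f) x + b x * deriv f x
      + (Complex.mk s γ ^ 2 * c₂ x + Complex.mk s γ * c₁ x + β₃ x) * f x
        = φ x + deriv ψ x := fun x hx => by
    rw [← heq x hx, Hop_eq]
  set J : ℝ := Real.sqrt (1 + ‖Complex.mk s γ‖ ^ 2) with hJ
  have hJ1 : 1 ≤ J := Real.one_le_sqrt.2 (le_add_of_nonneg_right (sq_nonneg _))
  have hJ0 : 0 < J := one_pos.trans_le hJ1
  have hγJ : |γ| ≤ J := abs_im_le_sqrt_one_add_norm_sq (Complex.mk s γ)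
  have hJle : J ≤ 1 + |s| + |γ| := by
    linarith [sqrt_one_add_norm_sq_le (Complex.mk s γ),
      Complex.norm_le_abs_re_add_abs_im (Complex.mk s γ)]
  have hmono : ∀ C, C ≤ max C₁ C₂ →
      √(∫ x in (-r)..r, ‖f x‖ ^ 2) + J⁻¹ * √(∫ x in (-r)..r, ‖deriv f x‖ ^ 2) ≤
        C * J ^ (-(1 : ℝ) / 2) * (‖f (-r)‖ + ‖f r‖)
        + C * (J⁻¹) ^ 2 * √(∫ x in (-r)..r, ‖φ x‖ ^ 2)
        + C * J⁻¹ * √(∫ x in (-r)..r, ‖ψ x‖ ^ 2) → _ := fun C hC h => by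
    refine h.trans (?_ : _ ≤ max C₁ C₂ * J ^ (-(1 : ℝ) / 2) * (‖f (-r)‖ + ‖f r‖)
        + max C₁ C₂ * (J⁻¹) ^ 2 * √(∫ x in (-r)..r, ‖φ x‖ ^ 2)
        + max C₁ C₂ * J⁻¹ * √(∫ x in (-r)..r, ‖ψ x‖ ^ 2))
    gcongr
  by_cases hγ : |γ| ≤ Λ
  · refine hmono C₁ (le_max_left _ _) ?_
    have h := hlow γ (abs_le.1 hγ) f φ ψ hf2 hφ.continuous hψ1 heq'
    refine sqrt_add_inv_mul_sqrt_le le_rfl hJ1 (by linarith) hK₁.le (hnn _) (hnn _) (hnn _)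
      (hnn _) (norm_nonneg _) (norm_nonneg _) ?_
    simpa [one_mul] using h
  · push Not at hγ
    refine hmono C₂ (le_max_right _ _) ?_
    have hl1 : 1 ≤ |γ| := by linarith
    have hJT : 1 + |s| + |γ| ≤ T₂ * |γ| := by
      linarith [le_mul_of_one_le_right (abs_nonneg s) hl1]
    refine sqrt_add_inv_mul_sqrt_le hl1 hγJ (hJle.trans hJT) hK₂0 (hnn _) (hnn _) (hnn _)
      (hnn _) (norm_nonneg _) (norm_nonneg _) ?_
    refine dirichlet_bound_of_large (A := fun x => a x ^ 2) hr hα0 hM0 hl1 (by linarith) ?_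
      (fun x hx => (hM₀ x hx).trans (by linarith)) (fun x hx => ⟨hmin hx, ?_⟩) (fun x hx => ?_)
      hf2 hφ.continuous hψ1 heq'
    · have h₁ : 8 * M / α ≤ |γ| := by linarith
      rw [div_le_iff₀ hα0] at h₁
      linarith
    · have h₁ := hM₁ x hx
      simp only [hc₂, Complex.norm_real, Real.norm_eq_abs] at h₁
      linarith [le_abs_self (a x ^ 2)]
    · refine (norm_quadratic_add_sq_le hl1 (hM₁ x hx) (hM₂ x hx) (hM₃ x hx)).trans ?_
      exact mul_le_mul_of_nonneg_right (by linarith) (abs_nonneg γ)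
end

section
/- For every compact K ⊂ ℝ there exist constants C < ∞ and γ₀ < ∞ such that for all s ∈ K and all γ ∈ ℝ with |γ| ≥ γ₀, writing ζ = s + iγ, the following holds: for all C^∞ functions f, φ, ψ : I → ℂ with f(−r) = f(r) = 0 and (H_ζ f)(x) = φ(x) + ψ′(x) for all x ∈ I, one has γ²·‖f‖_{L²(I)} + |γ|·‖f′‖_{L²(I)} ≤ C·‖φ‖_{L²(I)} + C·|γ|·‖ψ‖_{L²(I)}. -/
open MeasureTheory Set

open scoped ComplexConjugate

/-- A continuous function is bounded by a nonnegative constant on a compact interval. -/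
lemma exists_nonneg_norm_le_on_Icc {E : Type*} [NormedAddCommGroup E] {g : ℝ → E}
    (hg : Continuous g) (p q : ℝ) : ∃ M, 0 ≤ M ∧ ∀ x ∈ Icc p q, ‖g x‖ ≤ M := by
  obtain ⟨M, hM⟩ := isCompact_Icc.exists_bound_of_continuousOn (hg.continuousOn (s := Icc p q))
  exact ⟨max M 0, le_max_right _ _, fun x hx => (hM x hx).trans (le_max_left _ _)⟩

lemma abs_re_conj_mul_le (u z : ℂ) : |(conj u * z).re| ≤ ‖u‖ * ‖z‖ := by
  simpa using Complex.abs_re_le_norm (conj u * z)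

/-- The real part of the zeroth-order coefficient of `Hop`. -/
lemma re_Hop_coeff (s γ a a' : ℝ) (w β : ℂ) :
    (Complex.mk s γ ^ 2 * (a : ℂ) ^ 2 - Complex.I * Complex.mk s γ * (a' : ℂ)
      + Complex.I * Complex.mk s γ * (a : ℂ) * w + β).re
      = s ^ 2 * a ^ 2 - γ ^ 2 * a ^ 2 + γ * (a' - a * w.re) - s * (a * w.im) + β.re := by
  simp [pow_two]
  ring

/-- The pointwise lower bound underlying the energy estimate, with `u, v, w` playing the roles of
`f, f', f'' - ψ'`. -/
lemma energy_density_lower_bound_s5 {u v w p q b c : ℂ} {m M k γ : ℝ} (hm : 0 < m) (hγ : γ ≠ 0)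
    (hb : ‖b‖ ≤ M) (hc : c.re ≤ -γ ^ 2 * m + k) (hk : M ^ 2 + k ≤ m / 4 * γ ^ 2)
    (hw : w = p - b * v - c * u) :
    1 / 2 * ‖v‖ ^ 2 + m / 2 * (γ ^ 2 * ‖u‖ ^ 2) - ‖q‖ ^ 2 - ‖p‖ ^ 2 / (m * γ ^ 2)
      ≤ (conj v * (v - q) + conj u * w).re := by
  have expand : (conj v * (v - q) + conj u * w).re = ‖v‖ ^ 2 - (conj v * q).re + (conj u * p).re
      - (conj u * (b * v)).re - c.re * ‖u‖ ^ 2 := by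
    rw [hw, ← Complex.normSq_eq_norm_sq, ← Complex.normSq_eq_norm_sq]
    simp [Complex.normSq_apply]
    ring
  have hvq := (abs_le.mp (abs_re_conj_mul_le v q)).2
  have hup := (abs_le.mp (abs_re_conj_mul_le u p)).1
  have hubv := (abs_le.mp (abs_re_conj_mul_le u (b * v))).2
  have hbv : ‖u‖ * ‖b * v‖ ≤ M * ‖u‖ * ‖v‖ := by
    rw [norm_mul]
    nlinarith [mul_le_mul_of_nonneg_right hb (mul_nonneg (norm_nonneg u) (norm_nonneg v))]
  have young_bv : M * ‖u‖ * ‖v‖ ≤ 1 / 4 * ‖v‖ ^ 2 + M ^ 2 * ‖u‖ ^ 2 := by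
    nlinarith [sq_nonneg (1 / 2 * ‖v‖ - M * ‖u‖)]
  have young_q : ‖v‖ * ‖q‖ ≤ 1 / 4 * ‖v‖ ^ 2 + ‖q‖ ^ 2 := by
    nlinarith [sq_nonneg (1 / 2 * ‖v‖ - ‖q‖)]
  have hmγ : 0 < m * γ ^ 2 := by positivity
  have young_p : ‖u‖ * ‖p‖ ≤ m * γ ^ 2 / 4 * ‖u‖ ^ 2 + ‖p‖ ^ 2 / (m * γ ^ 2) := by
    have h : m * γ ^ 2 / 4 * ‖u‖ ^ 2 + ‖p‖ ^ 2 / (m * γ ^ 2) - ‖u‖ * ‖p‖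
        = (m * γ ^ 2 / 2 * ‖u‖ - ‖p‖) ^ 2 / (m * γ ^ 2) := by
      field_simp
      ring
    have : 0 ≤ (m * γ ^ 2 / 2 * ‖u‖ - ‖p‖) ^ 2 / (m * γ ^ 2) := by positivity
    linarith
  have hcu := mul_le_mul_of_nonneg_right hc (sq_nonneg ‖u‖)
  have hku := mul_le_mul_of_nonneg_right hk (sq_nonneg ‖u‖)
  rw [expand]
  nlinarith

lemma L2_eq_sqrt (f : ℝ → ℂ) (J : Set ℝ) : L2 f J = √(∫ x in J, ‖f x‖ ^ 2) := by
  rw [L2, Real.sqrt_eq_rpow]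

/-- The integrated energy estimate for functions vanishing at both endpoints. -/
lemma integral_energy_le {r m M k γ : ℝ} (hr : 0 < r) (hm : 0 < m) (hγ : γ ≠ 0) {b c : ℝ → ℂ}
    (hb : ∀ x ∈ Icc (-r) r, ‖b x‖ ≤ M) (hc : ∀ x ∈ Icc (-r) r, (c x).re ≤ -γ ^ 2 * m + k)
    (hk : M ^ 2 + k ≤ m / 4 * γ ^ 2) {f φ ψ : ℝ → ℂ} (hf : ContDiff ℝ 2 f)
    (hφ : Continuous φ) (hψ : ContDiff ℝ 1 ψ) (hfl : f (-r) = 0) (hfr : f r = 0)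
    (heq : ∀ x ∈ Icc (-r) r,
      deriv (deriv f) x + b x * deriv f x + c x * f x = φ x + deriv ψ x) :
    1 / 2 * (∫ x in Icc (-r) r, ‖deriv f x‖ ^ 2)
        + m / 2 * (γ ^ 2 * ∫ x in Icc (-r) r, ‖f x‖ ^ 2)
      ≤ (∫ x in Icc (-r) r, ‖ψ x‖ ^ 2)
        + (∫ x in Icc (-r) r, ‖φ x‖ ^ 2) / (m * γ ^ 2) := by
  have hf' : ContDiff ℝ 1 (deriv f) := hf.deriv' (n := 1)
  have cf : Continuous f := hf.continuous
  have cf' : Continuous (deriv f) := hf'.continuous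
  have cf'' : Continuous (deriv (deriv f)) := hf'.continuous_deriv le_rfl
  have cψ : Continuous ψ := hψ.continuous
  have cψ' : Continuous (deriv ψ) := hψ.continuous_deriv le_rfl
  let g : ℝ → ℝ := fun x => (conj (deriv f x) * (deriv f x - ψ x)
    + conj (f x) * (deriv (deriv f) x - deriv ψ x)).re
  have cg : Continuous g := by fun_prop
  have hderiv (x : ℝ) :
      HasDerivAt (fun y => (conj (f y) * (deriv f y - ψ y)).re) (g x) x := by
    have h₁ := (hf.differentiable (by norm_num) x).hasDerivAt
    have h₂ := (hf'.differentiable (by norm_num) x).hasDerivAt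
    have h₃ := (hψ.differentiable (by norm_num) x).hasDerivAt
    exact Complex.reCLM.hasFDerivAt.comp_hasDerivAt x (h₁.star.mul (h₂.sub h₃))
  have hzero : ∫ x in Icc (-r) r, g x = 0 := by
    rw [integral_Icc_eq_integral_Ioc, ← intervalIntegral.integral_of_le (by linarith),
      intervalIntegral.integral_eq_sub_of_hasDerivAt (fun x _ => hderiv x)
        (cg.intervalIntegrable _ _)]
    simp [hfl, hfr]
  have int {h : ℝ → ℝ} (ch : Continuous h) : IntegrableOn h (Icc (-r) r) :=
    ch.continuousOn.integrableOn_Icc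
  have i₁ : IntegrableOn (fun x => 1 / 2 * ‖deriv f x‖ ^ 2) (Icc (-r) r) := int (by fun_prop)
  have i₂ : IntegrableOn (fun x => m / 2 * (γ ^ 2 * ‖f x‖ ^ 2)) (Icc (-r) r) :=
    int (by fun_prop)
  have i₃ : IntegrableOn (fun x => ‖ψ x‖ ^ 2) (Icc (-r) r) := int (by fun_prop)
  have i₄ : IntegrableOn (fun x => ‖φ x‖ ^ 2 / (m * γ ^ 2)) (Icc (-r) r) := int (by fun_prop)
  have hmono := setIntegral_mono_on (((i₁.add i₂).sub i₃).sub i₄) (int cg) measurableSet_Icc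
    fun x hx => energy_density_lower_bound_s5 (q := ψ x) hm hγ (hb x hx) (hc x hx) hk
      (show deriv (deriv f) x - deriv ψ x = φ x - b x * deriv f x - c x * f x by
        linear_combination heq x hx)
  rw [hzero, integral_sub' ((i₁.add i₂).sub i₃) i₄, integral_sub' (i₁.add i₂) i₃,
    integral_add' i₁ i₂, integral_const_mul, integral_const_mul, integral_const_mul,
    integral_div] at hmono
  linarith

/-- Passing from the energy estimate for squared norms to the estimate for norms. -/
lemma sqrt_estimate_of_energy {A B P Q m γ : ℝ} (hA : 0 ≤ A) (hB : 0 ≤ B) (hP : 0 ≤ P)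
    (hQ : 0 ≤ Q) (hm : 0 < m) (hγ : γ ≠ 0)
    (h : 1 / 2 * B + m / 2 * (γ ^ 2 * A) ≤ Q + P / (m * γ ^ 2)) :
    γ ^ 2 * √A + |γ| * √B
      ≤ (4 * (1 + 1 / m)) * √P + (4 * (1 + 1 / m)) * |γ| * √Q := by
  have hm' : 0 < 1 / m := by positivity
  set t := 1 / m with ht
  have hmt : m * t = 1 := by rw [ht]; field_simp
  have hγ2 : 0 < γ ^ 2 := by positivity
  have hscaled : γ ^ 2 * B / 2 + m / 2 * (γ ^ 4 * A) ≤ γ ^ 2 * Q + t * P := by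
    have h' := mul_le_mul_of_nonneg_left h hγ2.le
    have : γ ^ 2 * (Q + P / (m * γ ^ 2)) = γ ^ 2 * Q + t * P := by
      rw [ht]; field_simp
    linarith
  have hX : 0 ≤ γ ^ 4 * A := by positivity
  have hY : 0 ≤ γ ^ 2 * B := by positivity
  have hR : 0 ≤ |γ| * √Q + √P := by positivity
  have hRsq : γ ^ 2 * Q + P ≤ (|γ| * √Q + √P) ^ 2 := by
    have : 0 ≤ |γ| * √Q * √P := by positivity
    nlinarith [Real.sq_sqrt hQ, Real.sq_sqrt hP, sq_abs γ, mul_pow (|γ|) (√Q) 2]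
  set R := |γ| * √Q + √P
  have hrhs : γ ^ 2 * Q + t * P ≤ (1 + t) * R ^ 2 := by
    have : 0 ≤ γ ^ 2 * Q := by positivity
    nlinarith
  have hYR : γ ^ 2 * B ≤ (2 * (1 + t) * R) ^ 2 := by
    have : γ ^ 2 * B ≤ 2 * ((1 + t) * R ^ 2) := by nlinarith
    nlinarith [mul_nonneg hm'.le (sq_nonneg R), mul_nonneg (sq_nonneg t) (sq_nonneg R)]
  have hXR : γ ^ 4 * A ≤ (2 * (1 + t) * R) ^ 2 := by
    have h₁ : m / 2 * (γ ^ 4 * A) ≤ (1 + t) * R ^ 2 := by linarith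
    have h₂ : γ ^ 4 * A ≤ 2 * t * ((1 + t) * R ^ 2) := by
      have := mul_le_mul_of_nonneg_left h₁ (by positivity : 0 ≤ 2 * t)
      have e : 2 * t * (m / 2 * (γ ^ 4 * A)) = γ ^ 4 * A := by
        linear_combination (γ ^ 4 * A) * hmt
      linarith
    nlinarith [mul_nonneg hm'.le (sq_nonneg R), mul_nonneg (sq_nonneg t) (sq_nonneg R),
      sq_nonneg R]
  have hA' : γ ^ 2 * √A ≤ 2 * (1 + t) * R :=
    abs_le_of_sq_le_sq' (by rw [mul_pow, Real.sq_sqrt hA]; linarith [hXR, pow_mul γ 2 2])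
      (by positivity) |>.2
  have hB' : |γ| * √B ≤ 2 * (1 + t) * R :=
    abs_le_of_sq_le_sq' (by rw [mul_pow, Real.sq_sqrt hB, sq_abs]; exact hYR)
      (by positivity) |>.2
  calc γ ^ 2 * √A + |γ| * √B ≤ 2 * (1 + t) * R + 2 * (1 + t) * R := add_le_add hA' hB'
    _ = _ := by ring

/-- Inequality (5.2): for `s` in a compact set and `|γ|` large, functions vanishing at the
endpoints of `I` with `H_ζ f = φ + ψ'`, `ζ = s + iγ`, obey
`γ²‖f‖ + |γ|‖f′‖ ≤ C‖φ‖ + C|γ|‖ψ‖`. -/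
theorem estimate_5_2 (r : ℝ) (hr : 0 < r) (a : ℝ → ℝ) (ha : ContDiff ℝ (⊤ : ℕ∞) a)
    (ha0 : ∀ x ∈ Icc (-r) r, a x ≠ 0)
    (β₁ β₂ β₃ : ℝ → ℂ) (hβ₁ : ContDiff ℝ (⊤ : ℕ∞) β₁) (hβ₂ : ContDiff ℝ (⊤ : ℕ∞) β₂)
    (hβ₃ : ContDiff ℝ (⊤ : ℕ∞) β₃)
    (K : Set ℝ) (hK : IsCompact K) :
    ∃ C : ℝ, ∃ γ₀ : ℝ, ∀ s ∈ K, ∀ γ : ℝ, γ₀ ≤ |γ| →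
      ∀ f φ ψ : ℝ → ℂ,
        ContDiff ℝ (⊤ : ℕ∞) f → ContDiff ℝ (⊤ : ℕ∞) φ → ContDiff ℝ (⊤ : ℕ∞) ψ →
        f (-r) = 0 → f r = 0 →
        (∀ x ∈ Icc (-r) r,
          Hop a β₁ β₂ β₃ (Complex.mk s γ) f x = φ x + deriv ψ x) →
        γ ^ 2 * L2 f (Icc (-r) r) + |γ| * L2 (deriv f) (Icc (-r) r)
          ≤ C * L2 φ (Icc (-r) r) + C * |γ| * L2 ψ (Icc (-r) r) := by
  have ca := ha.continuous
  have ca' : Continuous (deriv a) := ha.continuous_deriv (by simp)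
  have cβ₁ := hβ₁.continuous
  have cβ₂ := hβ₂.continuous
  obtain ⟨x₀, hx₀, hmin⟩ := isCompact_Icc.exists_isMinOn
    (nonempty_Icc.mpr (by linarith : -r ≤ r)) ((ca.pow 2).continuousOn (s := Icc (-r) r))
  have hm : 0 < a x₀ ^ 2 := by have := ha0 x₀ hx₀; positivity
  have hma : ∀ x ∈ Icc (-r) r, a x₀ ^ 2 ≤ a x ^ 2 := fun x hx => hmin hx
  set m := a x₀ ^ 2
  obtain ⟨S, hS⟩ := hK.isBounded.exists_norm_le
  obtain ⟨M, hM0, hM⟩ := exists_nonneg_norm_le_on_Icc (cβ₁.add cβ₂) (-r) r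
  obtain ⟨N₁, hN₁0, hN₁⟩ := exists_nonneg_norm_le_on_Icc (ca.pow 2) (-r) r
  obtain ⟨N₂, hN₂0, hN₂⟩ := exists_nonneg_norm_le_on_Icc
    (g := fun x => deriv a x - a x * (β₁ x - β₂ x).re) (by fun_prop) (-r) r
  obtain ⟨N₃, hN₃0, hN₃⟩ := exists_nonneg_norm_le_on_Icc
    (g := fun x => a x * (β₁ x - β₂ x).im) (by fun_prop) (-r) r
  obtain ⟨N₄, hN₄0, hN₄⟩ := exists_nonneg_norm_le_on_Icc hβ₃.continuous (-r) r
  set L := M ^ 2 + S ^ 2 * N₁ + N₂ + |S| * N₃ + N₄ with hL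
  have hL0 : 0 ≤ L := by positivity
  refine ⟨4 * (1 + 1 / m), 1 + 4 * L / m, fun s hs γ hγ f φ ψ hf hφ hψ hfl hfr heq => ?_⟩
  have hγ1 : 1 ≤ |γ| := le_trans (le_add_of_nonneg_right (by positivity)) hγ
  have hγ0 : γ ≠ 0 := abs_pos.mp (by linarith)
  have hLγ : L * |γ| ≤ m / 4 * γ ^ 2 := by
    have : 4 * L / m ≤ |γ| := by linarith
    rw [div_le_iff₀ hm] at this
    rw [← sq_abs γ]
    nlinarith
  have hsS : |s| ≤ |S| := (hS s hs).trans (le_abs_self S)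
  simp only [L2_eq_sqrt]
  refine sqrt_estimate_of_energy (integral_nonneg fun _ => by positivity)
    (integral_nonneg fun _ => by positivity) (integral_nonneg fun _ => by positivity)
    (integral_nonneg fun _ => by positivity) hm hγ0 ?_
  refine integral_energy_le (k := S ^ 2 * N₁ + |γ| * N₂ + |S| * N₃ + N₄) hr hm hγ0 hM
    (fun x hx => ?_) ?_ (contDiff_infty.mp hf 2) hφ.continuous
    (by exact_mod_cast contDiff_infty.mp hψ 1) hfl hfr heq
  · rw [re_Hop_coeff]
    have h₀ := mul_le_mul_of_nonneg_left (hma x hx) (sq_nonneg γ)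
    have h₁ : s ^ 2 * a x ^ 2 ≤ S ^ 2 * N₁ :=
      mul_le_mul (sq_le_sq.mpr hsS) ((le_abs_self _).trans (hN₁ x hx)) (sq_nonneg _)
        (sq_nonneg _)
    have h₂ : γ * (deriv a x - a x * (β₁ x - β₂ x).re) ≤ |γ| * N₂ :=
      (le_abs_self _).trans
        ((abs_mul _ _).trans_le (mul_le_mul_of_nonneg_left (hN₂ x hx) (abs_nonneg γ)))
    have h₃ : -(s * (a x * (β₁ x - β₂ x).im)) ≤ |S| * N₃ :=
      (neg_le_abs _).trans
        ((abs_mul _ _).trans_le (mul_le_mul hsS (hN₃ x hx) (abs_nonneg _) (abs_nonneg _)))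
    have h₄ : (β₃ x).re ≤ N₄ := (Complex.re_le_norm _).trans (hN₄ x hx)
    linarith
  · refine le_trans ?_ hLγ
    have h : 0 ≤ (M ^ 2 + S ^ 2 * N₁ + |S| * N₃ + N₄) * (|γ| - 1) :=
      mul_nonneg (by positivity) (by linarith)
    rw [hL]
    linarith
end

section
/- For every compact K ⊂ ℝ there exist constants C < ∞ and γ₀ < ∞ such that for all s ∈ K and all γ ∈ ℝ with |γ| ≥ γ₀, writing ζ = s + iγ, every twice continuously differentiable function g : I → ℂ satisfying H_ζ g = 0 on I obeys γ²·‖g‖²_{L²(I)} + ‖g′‖²_{L²(I)} ≤ C·|γ|·|g(−r)|² + C·|γ|·|g(r)|². -/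
open MeasureTheory Set

open scoped RealInnerProductSpace

/-- Pointwise lower bound for the derivative of `2⟪g, g'⟫ - x / (r G) (‖g'‖² - G² a² ‖g‖²)` at a point
where `z = g x`, `w = g' x`, `h = g'' x`, `α = a x` and `α' = a' x`. -/
lemma energy_deriv_lower_bound {r G M c x α α' : ℝ} {z w b E h : ℂ} (hr : 0 < r) (hG : 1 ≤ G)
    (hx : |x| ≤ r) (hc : c ≤ α ^ 2) (hα : |α| ≤ M) (hα' : |α'| ≤ M)
    (hb : ‖b‖ ≤ M) (hE : ‖E‖ ≤ M * G) (hh : h = -(b * w) + (G ^ 2 * α ^ 2) • z + E * z) :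
    2 * (‖w‖ ^ 2 + c * (G ^ 2 * ‖z‖ ^ 2))
        - (6 * M + 2 * M ^ 2 + 1 / r) / G * (‖w‖ ^ 2 + G ^ 2 * ‖z‖ ^ 2) ≤
      2 * (⟪z, h⟫ + ⟪w, w⟫) - (1 / (r * G) * (⟪w, w⟫ - G ^ 2 * α ^ 2 * ⟪z, z⟫)
        + x / (r * G) * ((⟪w, h⟫ + ⟪h, w⟫)
          - (G ^ 2 * (2 * α * α') * ⟪z, z⟫ + G ^ 2 * α ^ 2 * (⟪z, w⟫ + ⟪w, z⟫)))) := by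
  have hG0 : 0 < G := by linarith
  have hM : 0 ≤ M := (abs_nonneg _).trans hα
  have inner_mul_bound : ∀ u v e : ℂ, ∀ L : ℝ, ‖e‖ ≤ L → |⟪u, e * v⟫| ≤ L * (‖u‖ * ‖v‖) := by
    intro u v e L he
    refine (abs_real_inner_le_norm _ _).trans ?_
    rw [norm_mul]
    nlinarith [mul_le_mul_of_nonneg_right he (mul_nonneg (norm_nonneg u) (norm_nonneg v))]
  have h₁ := abs_le.1 (inner_mul_bound z w b M hb)
  have h₂ := abs_le.1 (inner_mul_bound z z E _ hE)
  have h₃ := abs_le.1 (inner_mul_bound w w b M hb)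
  have h₄ := abs_le.1 (inner_mul_bound w z E _ hE)
  have hzh : ⟪z, h⟫ = -⟪z, b * w⟫ + G ^ 2 * α ^ 2 * ‖z‖ ^ 2 + ⟪z, E * z⟫ := by
    rw [hh, inner_add_right, inner_add_right, inner_neg_right, real_inner_smul_right,
      real_inner_self_eq_norm_sq]
  have hwh : ⟪w, h⟫ = -⟪w, b * w⟫ + G ^ 2 * α ^ 2 * ⟪w, z⟫ + ⟪w, E * z⟫ := by
    rw [hh, inner_add_right, inner_add_right, inner_neg_right, real_inner_smul_right]
  rw [real_inner_comm w h, real_inner_comm w z, hzh, hwh, real_inner_self_eq_norm_sq,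
    real_inner_self_eq_norm_sq]
  generalize ⟪z, b * w⟫ = I₁ at *
  generalize ⟪z, E * z⟫ = I₂ at *
  generalize ⟪w, b * w⟫ = I₃ at *
  generalize ⟪w, E * z⟫ = I₄ at *
  generalize ⟪w, z⟫ = I₅ at *
  have hp := norm_nonneg w
  have hq₀ := norm_nonneg z
  generalize ‖w‖ = p at *
  generalize ‖z‖ = n at *
  obtain ⟨q, rfl⟩ : ∃ q, n = q / G := ⟨n * G, by field_simp⟩
  have hq : 0 ≤ q := by
    have := mul_nonneg hq₀ hG0.le
    rwa [div_mul_cancel₀ _ hG0.ne'] at this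
  have hpq : 2 * (p * q) ≤ p ^ 2 + q ^ 2 := by nlinarith [sq_nonneg (p - q)]
  have hGq : G ^ 2 * (q / G) ^ 2 = q ^ 2 := by field_simp
  have hGI₁ : G * I₁ ≤ M * (p * q) := by
    calc G * I₁ ≤ G * (M * (q / G * p)) := by gcongr; exact h₁.2
      _ = M * (p * q) := by field_simp
  have hGI₂ : -(M * q ^ 2) ≤ G * I₂ := by
    calc -(M * q ^ 2) = G * -(M * G * (q / G * (q / G))) := by field_simp
      _ ≤ G * I₂ := by gcongr; exact h₂.1
  have hI₄ : |I₄| ≤ M * (p * q) := by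
    rw [abs_le]
    have : M * G * (p * (q / G)) = M * (p * q) := by field_simp
    rwa [this] at h₄
  have hI₃ : |I₃| ≤ M * (p * p) := abs_le.2 h₃
  have hI₆ : |α * α' * q ^ 2| ≤ M * M * q ^ 2 := by
    rw [abs_mul, abs_mul, abs_of_nonneg (sq_nonneg q)]
    gcongr
  have hxr : |x / r| ≤ 1 := by
    rw [abs_div, abs_of_pos hr]
    exact (div_le_one hr).2 hx
  have hcross : x / r * (-I₃ + I₄ - α * α' * q ^ 2)
      ≤ M * (p * p) + M * (p * q) + M * M * q ^ 2 := by
    refine (le_abs_self _).trans ?_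
    rw [abs_mul]
    have h : |-I₃ + I₄ - α * α' * q ^ 2| ≤ M * (p * p) + M * (p * q) + M * M * q ^ 2 := by
      rw [abs_le] at hI₃ hI₄ hI₆ ⊢
      constructor <;> linarith [hI₃.1, hI₃.2, hI₄.1, hI₄.2, hI₆.1, hI₆.2]
    exact (mul_le_of_le_one_left (abs_nonneg _) hxr).trans h
  have hdiff : 0 ≤ 2 * G * (α ^ 2 - c) * q ^ 2 + 1 / r * α ^ 2 * q ^ 2 + 1 / r * q ^ 2
      + 2 * (-(G * I₁)) + 2 * (G * I₂)
      - 2 * (x / r * (-I₃ + I₄ - α * α' * q ^ 2)) + (6 * M + 2 * M ^ 2) * (p ^ 2 + q ^ 2) := by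
    have e₁ : 0 ≤ 2 * G * (α ^ 2 - c) * q ^ 2 := by
      have := sub_nonneg.2 hc
      positivity
    have e₂ : 0 ≤ 1 / r * α ^ 2 * q ^ 2 := by positivity
    have e₃ : 0 ≤ 1 / r * q ^ 2 := by positivity
    have e₄ : M * (2 * (p * q)) ≤ M * (p ^ 2 + q ^ 2) := by gcongr
    have e₅ : 0 ≤ M ^ 2 * p ^ 2 := by positivity
    have e₆ : 0 ≤ M * p ^ 2 := by positivity
    have e₇ : 0 ≤ M * q ^ 2 := by positivity
    nlinarith
  rw [← sub_nonneg]
  refine (div_nonneg hdiff hG0.le).trans_eq ?_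
  field_simp
  ring

/-- Integrated energy estimate for a second order equation `g'' = -b g' + (G² a² + E) g`, with
`G` large compared with the coefficients. -/
lemma energy_estimate {r G M c : ℝ} {a : ℝ → ℝ} {b E g : ℝ → ℂ} (hr : 0 < r) (hG : 1 ≤ G)
    (hc1 : c ≤ 1) (hNG : 6 * M + 2 * M ^ 2 + 1 / r ≤ c * G)
    (ha : Differentiable ℝ a) (hg : ContDiff ℝ 2 g)
    (hca : ∀ x ∈ Icc (-r) r, c ≤ a x ^ 2) (haM : ∀ x ∈ Icc (-r) r, |a x| ≤ M)
    (haM' : ∀ x ∈ Icc (-r) r, |deriv a x| ≤ M) (hb : ∀ x ∈ Icc (-r) r, ‖b x‖ ≤ M)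
    (hE : ∀ x ∈ Icc (-r) r, ‖E x‖ ≤ M * G)
    (hode : ∀ x ∈ Icc (-r) r, deriv (deriv g) x =
      -(b x * deriv g x) + (G ^ 2 * a x ^ 2) • g x + E x * g x) :
    c * ((∫ x in Icc (-r) r, ‖deriv g x‖ ^ 2) + G ^ 2 * ∫ x in Icc (-r) r, ‖g x‖ ^ 2)
      ≤ (1 + M ^ 2) * G * (‖g (-r)‖ ^ 2 + ‖g r‖ ^ 2) := by
  have hG0 : 0 < G := by linarith
  have hrr : -r ≤ r := by linarith
  have hg1 : ContDiff ℝ 1 (deriv g) := by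
    have : ContDiff ℝ (1 + 1) g := by norm_num; exact hg
    exact (contDiff_succ_iff_deriv.1 this).2.2
  have hgd : ∀ x, HasDerivAt g (deriv g x) x := fun x =>
    (hg.differentiable (by norm_num) x).hasDerivAt
  have hgd' : ∀ x, HasDerivAt (deriv g) (deriv (deriv g) x) x := fun x =>
    (hg1.differentiable (by norm_num) x).hasDerivAt
  let energy : ℝ → ℝ := fun x => 2 * ⟪g x, deriv g x⟫
    - x / (r * G) * (⟪deriv g x, deriv g x⟫ - G ^ 2 * a x ^ 2 * ⟪g x, g x⟫)
  have hderiv : ∀ x, HasDerivAt energy (2 * (⟪g x, deriv (deriv g) x⟫ + ⟪deriv g x, deriv g x⟫)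
      - (1 / (r * G) * (⟪deriv g x, deriv g x⟫ - G ^ 2 * a x ^ 2 * ⟪g x, g x⟫)
        + x / (r * G) * ((⟪deriv g x, deriv (deriv g) x⟫ + ⟪deriv (deriv g) x, deriv g x⟫)
          - (G ^ 2 * (2 * a x * deriv a x) * ⟪g x, g x⟫
            + G ^ 2 * a x ^ 2 * (⟪g x, deriv g x⟫ + ⟪deriv g x, g x⟫))))) x := by
    intro x
    have ha2 : HasDerivAt (fun y => G ^ 2 * a y ^ 2) (G ^ 2 * (2 * a x * deriv a x)) x := by
      simpa using ((ha x).hasDerivAt.pow 2).const_mul (G ^ 2)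
    exact (((hgd x).inner ℝ (hgd' x)).const_mul 2).sub
      (((hasDerivAt_id' x).div_const (r * G)).mul
        (((hgd' x).inner ℝ (hgd' x)).sub (ha2.mul ((hgd x).inner ℝ (hgd x)))))
  have hcont : Continuous fun x => c * (‖deriv g x‖ ^ 2 + G ^ 2 * ‖g x‖ ^ 2) := by
    have := hg.continuous
    have := hg1.continuous
    fun_prop
  have hint : ∫ x in (-r)..r, c * (‖deriv g x‖ ^ 2 + G ^ 2 * ‖g x‖ ^ 2)
      ≤ energy r - energy (-r) := by
    refine intervalIntegral.integral_le_sub_of_hasDeriv_right_of_le hrr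
      (fun x _ => (hderiv x).continuousAt.continuousWithinAt)
      (fun x _ => (hderiv x).hasDerivWithinAt) (hcont.continuousOn.integrableOn_Icc) ?_
    intro x hx
    replace hx := Ioo_subset_Icc_self hx
    refine le_trans ?_ (energy_deriv_lower_bound hr hG (abs_le.2 hx) (hca x hx) (haM x hx)
      (haM' x hx) (hb x hx) (hE x hx) (hode x hx))
    have h₁ : (6 * M + 2 * M ^ 2 + 1 / r) / G * (‖deriv g x‖ ^ 2 + G ^ 2 * ‖g x‖ ^ 2)
        ≤ c * (‖deriv g x‖ ^ 2 + G ^ 2 * ‖g x‖ ^ 2) := by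
      gcongr
      exact (div_le_iff₀ hG0).2 hNG
    have h₂ : c * ‖deriv g x‖ ^ 2 ≤ 1 * ‖deriv g x‖ ^ 2 := by gcongr
    linarith
  have hsplit : ∫ x in (-r)..r, c * (‖deriv g x‖ ^ 2 + G ^ 2 * ‖g x‖ ^ 2) =
      c * ((∫ x in Icc (-r) r, ‖deriv g x‖ ^ 2) + G ^ 2 * ∫ x in Icc (-r) r, ‖g x‖ ^ 2) := by
    have h₁ : Continuous fun x => ‖deriv g x‖ ^ 2 := by
      have := hg1.continuous
      fun_prop
    have h₂ : Continuous fun x => G ^ 2 * ‖g x‖ ^ 2 := by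
      have := hg.continuous
      fun_prop
    rw [intervalIntegral.integral_const_mul, intervalIntegral.integral_add
      (h₁.intervalIntegrable _ _) (h₂.intervalIntegrable _ _), intervalIntegral.integral_const_mul,
      intervalIntegral.integral_of_le hrr, intervalIntegral.integral_of_le hrr,
      integral_Icc_eq_integral_Ioc, integral_Icc_eq_integral_Ioc]
  have hboundary : ∀ x ∈ Icc (-r) r, ∀ σ : ℝ, |σ| = 1 →
      2 * (σ * ⟪g x, deriv g x⟫)
        - 1 / G * (⟪deriv g x, deriv g x⟫ - G ^ 2 * a x ^ 2 * ⟪g x, g x⟫)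
      ≤ (1 + M ^ 2) * G * ‖g x‖ ^ 2 := by
    intro x hx σ hσ
    have h₁ : σ * ⟪g x, deriv g x⟫ ≤ ‖g x‖ * ‖deriv g x‖ := by
      refine (le_abs_self _).trans ?_
      rw [abs_mul, hσ, one_mul]
      exact abs_real_inner_le_norm _ _
    have h₂ : a x ^ 2 ≤ M ^ 2 := sq_le_sq' (abs_le.1 (haM x hx)).1 (abs_le.1 (haM x hx)).2
    have h₃ : 0 ≤ G * (‖g x‖ - ‖deriv g x‖ / G) ^ 2 := by positivity
    have h₄ : G * (‖g x‖ - ‖deriv g x‖ / G) ^ 2 =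
        G * ‖g x‖ ^ 2 - 2 * (‖g x‖ * ‖deriv g x‖) + 1 / G * ‖deriv g x‖ ^ 2 := by
      field_simp
      ring
    have h₅ : G * ‖g x‖ ^ 2 * a x ^ 2 ≤ G * ‖g x‖ ^ 2 * M ^ 2 := by gcongr
    have h₆ : 1 / G * (‖deriv g x‖ ^ 2 - G ^ 2 * a x ^ 2 * ‖g x‖ ^ 2) =
        1 / G * ‖deriv g x‖ ^ 2 - G * ‖g x‖ ^ 2 * a x ^ 2 := by
      field_simp
    rw [real_inner_self_eq_norm_sq, real_inner_self_eq_norm_sq, h₆]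
    linarith
  have hright := hboundary r ⟨hrr, le_rfl⟩ 1 (by simp)
  have hleft := hboundary (-r) ⟨le_rfl, hrr⟩ (-1) (by simp)
  rw [← hsplit]
  have h₁ : r / (r * G) = 1 / G := by field_simp
  have h₂ : -r / (r * G) = -(1 / G) := by field_simp
  simp only [energy, h₁, h₂] at hint
  linarith

lemma L2_sq (f : ℝ → ℂ) (J : Set ℝ) : L2 f J ^ 2 = ∫ x in J, ‖f x‖ ^ 2 := by
  have h : 0 ≤ ∫ x in J, ‖f x‖ ^ 2 := integral_nonneg fun x => by positivity
  rw [L2, ← Real.sqrt_eq_rpow, Real.sq_sqrt h]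

/-- For `s` in a compact set and `|γ|` large, solutions of `H_ζ g = 0` on `I`,
`ζ = s + iγ`, satisfy `γ²‖g‖² + ‖g′‖² ≤ C|γ||g(-r)|² + C|γ||g(r)|²`. -/
theorem boundary_estimate (r : ℝ) (hr : 0 < r) (a : ℝ → ℝ) (ha : ContDiff ℝ (⊤ : ℕ∞) a)
    (ha0 : ∀ x ∈ Icc (-r) r, a x ≠ 0)
    (β₁ β₂ β₃ : ℝ → ℂ) (hβ₁ : ContDiff ℝ (⊤ : ℕ∞) β₁) (hβ₂ : ContDiff ℝ (⊤ : ℕ∞) β₂)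
    (hβ₃ : ContDiff ℝ (⊤ : ℕ∞) β₃)
    (K : Set ℝ) (hK : IsCompact K) :
    ∃ C : ℝ, ∃ γ₀ : ℝ, ∀ s ∈ K, ∀ γ : ℝ, γ₀ ≤ |γ| →
      ∀ g : ℝ → ℂ, ContDiff ℝ 2 g →
        (∀ x ∈ Icc (-r) r, Hop a β₁ β₂ β₃ (Complex.mk s γ) g x = 0) →
        γ ^ 2 * L2 g (Icc (-r) r) ^ 2 + L2 (deriv g) (Icc (-r) r) ^ 2
          ≤ C * |γ| * ‖g (-r)‖ ^ 2 + C * |γ| * ‖g r‖ ^ 2 := by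
  have hI : IsCompact (Icc (-r) r) := isCompact_Icc
  have hda : Continuous (deriv a) := ha.continuous_deriv (by simp)
  obtain ⟨A, hA⟩ := hI.exists_bound_of_continuousOn ha.continuous.continuousOn
  obtain ⟨A', hA'⟩ := hI.exists_bound_of_continuousOn hda.continuousOn
  obtain ⟨B, hB⟩ := hI.exists_bound_of_continuousOn
    (hβ₁.continuous.add hβ₂.continuous).continuousOn
  obtain ⟨D, hD⟩ := hI.exists_bound_of_continuousOn
    (hβ₁.continuous.sub hβ₂.continuous).continuousOn
  obtain ⟨B₃, hB₃⟩ := hI.exists_bound_of_continuousOn hβ₃.continuous.continuousOn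
  obtain ⟨S, hS⟩ := hK.exists_bound_of_continuousOn continuousOn_id
  obtain ⟨c₀, hc₀, hc₀a⟩ : ∃ c₀ : ℝ, 0 < c₀ ∧ ∀ x ∈ Icc (-r) r, c₀ ≤ a x ^ 2 := by
    obtain ⟨x₀, hx₀, hmin⟩ := hI.exists_isMinOn ⟨0, by constructor <;> linarith⟩
      (ha.continuous.pow 2).continuousOn
    exact ⟨a x₀ ^ 2, by have := ha0 x₀ hx₀; positivity, fun x hx => hmin hx⟩
  set M₀ := (S ^ 2 + 2 * S) * A ^ 2 + (S + 1) * A' + (S + 1) * A * D + B₃ with hM₀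
  set M := max (max A A') (max B M₀)
  set c := min c₀ 1
  have hc : 0 < c := lt_min hc₀ one_pos
  refine ⟨(1 + M ^ 2) / c, max 1 ((6 * M + 2 * M ^ 2 + 1 / r) / c), ?_⟩
  intro s hs γ hγ g hg hH
  have hG : 1 ≤ |γ| := (le_max_left _ _).trans hγ
  have hNG : 6 * M + 2 * M ^ 2 + 1 / r ≤ c * |γ| := by
    have := (div_le_iff₀ hc).1 ((le_max_right _ _).trans hγ)
    linarith
  have hsS : |s| ≤ S := hS s hs
  have hS0 : 0 ≤ S := (abs_nonneg _).trans hsS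
  have key := energy_estimate (c := c) (M := M) (a := a) (b := fun x => β₁ x + β₂ x)
    (E := fun x => -((s : ℂ) ^ 2 + 2 * Complex.I * s * γ) * (a x : ℂ) ^ 2
      + Complex.I * Complex.mk s γ * (deriv a x : ℝ)
      - Complex.I * Complex.mk s γ * a x * (β₁ x - β₂ x) - β₃ x) (g := g)
    hr hG (min_le_right _ _) hNG (ha.differentiable (by simp)) hg
    (fun x hx => (min_le_left _ _).trans (hc₀a x hx))
    (fun x hx => (hA x hx).trans ((le_max_left _ _).trans (le_max_left _ _)))
    (fun x hx => (hA' x hx).trans ((le_max_right _ _).trans (le_max_left _ _)))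
    (fun x hx => (hB x hx).trans ((le_max_left _ _).trans (le_max_right _ _)))
    ?_ ?_
  · rw [L2_sq, L2_sq, ← sq_abs γ]
    have : ∀ X Y : ℝ, (1 + M ^ 2) / c * |γ| * X + (1 + M ^ 2) / c * |γ| * Y
        = ((1 + M ^ 2) * |γ| * (X + Y)) / c := by
      intro X Y
      field_simp
    rw [this, le_div_iff₀ hc]
    linarith
  · intro x hx
    have hζ : ‖Complex.mk s γ‖ ≤ (S + 1) * |γ| := by
      refine (Complex.norm_le_abs_re_add_abs_im _).trans ?_
      simp only
      nlinarith
    have hA0 : 0 ≤ A := (norm_nonneg _).trans (hA x hx)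
    have hB₃0 : 0 ≤ B₃ := (norm_nonneg _).trans (hB₃ x hx)
    have h₁ : ‖-((s : ℂ) ^ 2 + 2 * Complex.I * s * γ) * (a x : ℂ) ^ 2‖
        ≤ (S ^ 2 + 2 * S) * |γ| * A ^ 2 := by
      rw [norm_mul, norm_neg, norm_pow, Complex.norm_real]
      have h : ‖(s : ℂ) ^ 2 + 2 * Complex.I * s * γ‖ ≤ (S ^ 2 + 2 * S) * |γ| := by
        refine (norm_add_le _ _).trans ?_
        simp only [norm_pow, norm_mul, Complex.norm_real, Complex.norm_I, Complex.norm_ofNat,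
          Real.norm_eq_abs, mul_one]
        have e₁ : |s| ^ 2 ≤ S ^ 2 := by gcongr
        have e₂ : |s| * |γ| ≤ S * |γ| := by gcongr
        nlinarith [mul_le_mul_of_nonneg_left hG (sq_nonneg S)]
      gcongr
      exact hA x hx
    have h₂ : ‖Complex.I * Complex.mk s γ * (deriv a x : ℝ)‖ ≤ (S + 1) * |γ| * A' := by
      rw [norm_mul, norm_mul, Complex.norm_I, one_mul, Complex.norm_real]
      gcongr
      exact hA' x hx
    have h₃ : ‖Complex.I * Complex.mk s γ * a x * (β₁ x - β₂ x)‖ ≤ (S + 1) * |γ| * A * D := by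
      rw [norm_mul, norm_mul, norm_mul, Complex.norm_I, one_mul, Complex.norm_real]
      gcongr
      · exact hA x hx
      · exact hD x hx
    have h₄ : ‖β₃ x‖ ≤ B₃ * |γ| := (hB₃ x hx).trans (le_mul_of_one_le_right hB₃0 hG)
    calc _ ≤ (S ^ 2 + 2 * S) * |γ| * A ^ 2 + (S + 1) * |γ| * A' + (S + 1) * |γ| * A * D
            + B₃ * |γ| :=
          (norm_sub_le _ _).trans (add_le_add ((norm_sub_le _ _).trans
            (add_le_add ((norm_add_le _ _).trans (add_le_add h₁ h₂)) h₃)) h₄)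
      _ = M₀ * |γ| := by rw [hM₀]; ring
      _ ≤ M * |γ| := by
          gcongr
          exact (le_max_right _ _).trans (le_max_right _ _)
  · intro x hx
    have hz : Complex.mk s γ = s + γ * Complex.I := Complex.mk_eq_add_mul_I s γ
    have h := hH x hx
    simp only [Hop, hz] at h
    rw [sq_abs, Complex.real_smul, hz]
    push_cast
    linear_combination h + (γ : ℂ) ^ 2 * (a x : ℂ) ^ 2 * g x * (-Complex.I_sq)
end
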